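/- Let n ≥ 1 and let a_1, …, a_n : ℝ → ℝ be functions of class C^{2n}. Suppose that for every t ∈ ℝ the monic polynomial P(t)(x) = x^n + Σ_{j=1}^n (-1)^j a_j(t) x^{n-j} is hyperbolic, i.e. all its complex roots are real. Then there exist twice differentiable functions λ_1, …, λ_n : ℝ → ℝ such that for every t ∈ ℝ one has P(t)(x) = ∏_{j=1}^n (x - λ_j(t)) for all x. -/

import Mathlib

/-!
By induction on the degree, a local statement suffices: any two local choices of twice
differentiable roots agree up to a permutation, and can be glued along the line. Near a point where
not all roots coincide, the curve `P` splits into two curves of lower degree which are as smooth as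
`P`.

At a point `t` where all roots coincide, subtract their mean and divide the centered roots by
`s - t`. By Hadamard division the quotients are the roots of a hyperbolic curve whose coefficients
have lost only `n` of the `2 n` derivatives. The roots of such a curve, and their slopes, follow
`1`-jets: this reduces likewise to centered roots of size `O(s - t)`; divided by `s - t` and viewed
as functions of `log |s - t|`, these have slopes tending to `0`, by Bronshtein's theorem on the
slopes of roots. Hence the roots of `P` and their slopes follow `2`-jets at `t`. If `t` is isolated
among the points where all roots coincide, the roots on either side of `t` follow these jets, and so
fit together at `t`. If such points accumulate at `t`, then all the jets are equal, and every choice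
of the roots is differentiable at `t`, twice so if it is differentiable near `t`.
-/

open Set Filter Topology Polynomial

/-! ### Gluing local choices along the line -/

section Gluing

variable {ι α : Type*} {G : (ℝ → ι → α) → ℝ → Prop} {U : Set ℝ}

/-- A property `G f t` of the germ at `t` of a curve `f` of tuples, for which two germs at the same
point can be joined there, one on each side, after permuting the entries of one of them. -/
structure IsGluable (G : (ℝ → ι → α) → ℝ → Prop) : Prop where
  congr : ∀ {f g t}, f =ᶠ[𝓝 t] g → G f t → G g t
  comp_perm : ∀ {f t} (σ : Equiv.Perm ι), G f t → G (fun u ↦ f u ∘ σ) t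
  glue : ∀ {f g t}, G f t → G g t → ∃ σ : Equiv.Perm ι, f t = g t ∘ σ ∧
    G (fun u ↦ if u ≤ t then f u else g u ∘ σ) t

namespace IsGluable

lemma comp_neg (hG : IsGluable G) : IsGluable fun f t ↦ G (fun u ↦ f (-u)) (-t) where
  congr {f g t} hfg hf := by
    have hneg : Tendsto (fun u : ℝ ↦ -u) (𝓝 (-t)) (𝓝 t) := by
      simpa using (continuous_neg (G := ℝ)).tendsto (-t)
    exact hG.congr (hneg.eventually hfg) hf
  comp_perm σ hf := hG.comp_perm σ hf
  glue {f g t} hf hg := by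
    obtain ⟨σ, hσ, hglued⟩ := hG.glue hg hf
    rw [neg_neg] at hσ
    have hσ' : f t = g t ∘ ⇑σ⁻¹ := by rw [hσ]; ext i; simp
    refine ⟨σ⁻¹, hσ', hG.congr (.of_forall fun u ↦ ?_) (hG.comp_perm σ⁻¹ hglued)⟩
    rcases lt_trichotomy u (-t) with hu | rfl | hu
    · simp [hu.le, (lt_neg_of_lt_neg hu).not_ge]
    · simp [hσ']
    · ext i
      simp [hu.not_ge, (neg_lt.1 hu).le]

lemma exists_concat (hG : IsGluable G) {s : Set ℝ} {t : ℝ} (ht : t ∈ s) {f g : ℝ → ι → α}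
    (hf : ∀ u ∈ s, u ≤ t → G f u) (hg : ∀ u ∈ s, t ≤ u → G g u) :
    ∃ h, EqOn h f (Iic t) ∧ ∀ u ∈ s, G h u := by
  obtain ⟨σ, -, hglued⟩ := hG.glue (hf t ht le_rfl) (hg t ht le_rfl)
  refine ⟨fun u ↦ if u ≤ t then f u else g u ∘ σ, fun u hu ↦ if_pos hu, fun u hus ↦ ?_⟩
  rcases lt_trichotomy u t with hut | rfl | hut
  · refine hG.congr ?_ (hf u hus hut.le)
    filter_upwards [Iio_mem_nhds hut] with v hv
    exact (if_pos (le_of_lt hv)).symm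
  · exact hglued
  · refine hG.congr ?_ (hG.comp_perm σ (hg u hus hut.le))
    filter_upwards [Ioi_mem_nhds hut] with v hv
    exact (if_neg (not_le.2 hv)).symm

lemma exists_extend_Icc (hG : IsGluable G) {c d d' : ℝ} (hcd : c ≤ d) (hdd' : d ≤ d')
    (hloc : ∀ t ∈ Icc d d', ∃ f, ∀ᶠ u in 𝓝 t, G f u) {f : ℝ → ι → α}
    (hf : ∀ t ∈ Icc c d, G f t) :
    ∃ f', EqOn f' f (Iic d) ∧ ∀ t ∈ Icc c d', G f' t := by
  have : Nonempty (ℝ → ι → α) := ⟨f⟩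
  choose! g hg using hloc
  obtain ⟨t, ht0, ht_mono, ⟨m, hm⟩, hcover⟩ := exists_monotone_Icc_subset_open_cover_Icc hdd'
    (c := fun x : Icc d d' ↦ Subtype.val ⁻¹' interior {u | G (g x) u})
    (fun x ↦ isOpen_interior.preimage continuous_subtype_val)
    (fun x _ ↦ mem_iUnion.2 ⟨x, mem_interior_iff_mem_nhds.2 (hg x x.2)⟩)
  have extend_to (k : ℕ) : ∃ f', EqOn f' f (Iic d) ∧ ∀ u ∈ Icc c (t k : ℝ), G f' u := by
    induction k with
    | zero => exact ⟨f, fun _ _ ↦ rfl, by rwa [ht0]⟩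
    | succ k ih =>
      obtain ⟨f₁, hf₁, hGf₁⟩ := ih
      obtain ⟨x, hx⟩ := hcover k
      have hdk : d ≤ t k := (t k).2.1
      have hk : (t k : ℝ) ≤ t (k + 1) := ht_mono k.le_succ
      obtain ⟨f₂, hf₂, hGf₂⟩ := hG.exists_concat (s := Icc c (t (k + 1))) ⟨hcd.trans hdk, hk⟩
        (fun u hu hut ↦ hGf₁ u ⟨hu.1, hut⟩) (g := g x) fun u hu hut ↦ interior_subset <|
          @hx ⟨u, hdk.trans hut, hu.2.trans (t (k + 1)).2.2⟩ ⟨hut, hu.2⟩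
      exact ⟨f₂, fun u hu ↦ (hf₂ (mem_Iic.2 (le_trans hu hdk))).trans (hf₁ hu), hGf₂⟩
  simpa only [hm m le_rfl] using extend_to m

end IsGluable

lemma exists_monotone_exhaustion_right (hU : IsOpen U) {x : ℝ} (hx : x ∈ U) :
    ∃ d : ℕ → ℝ, Monotone d ∧ (∀ k, x ≤ d k ∧ Icc x (d k) ⊆ U) ∧
      ∀ t, x ≤ t → Icc x t ⊆ U → ∃ k, t < d k := by
  let S : Set ℝ := {t | x ≤ t ∧ Icc x t ⊆ U}
  have hS : S.OrdConnected := ⟨fun a ha b hb t ht ↦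
    ⟨ha.1.trans ht.1, (Icc_subset_Icc_right ht.2).trans hb.2⟩⟩
  have : Nonempty S := ⟨x, le_rfl, by simpa using hx⟩
  obtain ⟨d, hd_mono, hd⟩ := exists_seq_monotone_tendsto_atTop_atTop S
  refine ⟨fun k ↦ d k, fun _ _ h ↦ hd_mono h, fun k ↦ (d k).2, fun t hxt ht ↦ ?_⟩
  obtain ⟨b, htb, hb⟩ := mem_nhdsGE_iff_exists_Icc_subset.1
    (mem_nhdsWithin_of_mem_nhds (hU.mem_nhds (ht ⟨hxt, le_rfl⟩)))
  have hbS : b ∈ S := ⟨hxt.trans (le_of_lt htb), by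
    rw [← Icc_union_Icc_eq_Icc hxt (le_of_lt htb)]; exact union_subset ht hb⟩
  obtain ⟨k, hk⟩ := (hd.eventually_ge_atTop ⟨b, hbS⟩).exists
  exact ⟨k, lt_of_lt_of_le htb hk⟩

lemma exists_eqOn_Iic_of_eqOn_succ {β : Type*} {d : ℕ → ℝ} (hd : Monotone d) {F : ℕ → ℝ → β}
    (hF : ∀ k, EqOn (F (k + 1)) (F k) (Iic (d k))) : ∃ f, ∀ k, EqOn f (F k) (Iic (d k)) := by
  classical
  have hle {k l : ℕ} (hkl : k ≤ l) : EqOn (F l) (F k) (Iic (d k)) := by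
    induction l, hkl using Nat.le_induction with
    | base => exact fun _ _ ↦ rfl
    | succ l hkl ih => exact ((hF l).mono (Iic_subset_Iic.2 (hd hkl))).trans ih
  refine ⟨fun t ↦ if h : ∃ k, t ≤ d k then F (Nat.find h) t else F 0 t, fun k t ht ↦ ?_⟩
  have h : ∃ k, t ≤ d k := ⟨k, ht⟩
  simp only [dif_pos h]
  exact (hle (Nat.find_min' h ht) (Nat.find_spec h)).symm

namespace IsGluable

lemma exists_right (hG : IsGluable G) (hU : IsOpen U)
    (hloc : ∀ t ∈ U, ∃ f, ∀ᶠ u in 𝓝 t, G f u) {x : ℝ} (hx : x ∈ U) :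
    ∃ f, ∀ t, x ≤ t → Icc x t ⊆ U → G f t := by
  obtain ⟨d, hd_mono, hd, hd_cover⟩ := exists_monotone_exhaustion_right hU hx
  have extend {c e e' : ℝ} (hxc : x ≤ c) (hce : c ≤ e) (hee' : e ≤ e') (he' : Icc x e' ⊆ U)
      (f : ℝ → ι → α) (hf : ∀ t ∈ Icc c e, G f t) :
      ∃ f', EqOn f' f (Iic e) ∧ ∀ t ∈ Icc c e', G f' t :=
    hG.exists_extend_Icc hce hee'
      (fun t ht ↦ hloc t (he' ⟨(hxc.trans hce).trans ht.1, ht.2⟩)) hf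
  obtain ⟨f₀, hf₀⟩ := hloc x hx
  obtain ⟨F₀, -, hF₀⟩ := extend le_rfl le_rfl (hd 0).1 (hd 0).2 f₀ fun t ht ↦ by
    rw [Icc_self] at ht; exact ht ▸ hf₀.self_of_nhds
  have next (k : ℕ) (f : {f // ∀ t ∈ Icc x (d k), G f t}) :
      ∃ f' : {f // ∀ t ∈ Icc x (d (k + 1)), G f t}, EqOn f'.1 f.1 (Iic (d k)) := by
    obtain ⟨f', hf', hGf'⟩ :=
      extend le_rfl (hd k).1 (hd_mono k.le_succ) (hd (k + 1)).2 f.1 f.2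
    exact ⟨⟨f', hGf'⟩, hf'⟩
  choose step hstep using next
  let F : (k : ℕ) → {f // ∀ t ∈ Icc x (d k), G f t} := fun k ↦ Nat.rec ⟨F₀, hF₀⟩ step k
  obtain ⟨f, hf⟩ := exists_eqOn_Iic_of_eqOn_succ hd_mono (F := fun k ↦ (F k).1)
    fun k ↦ hstep k (F k)
  refine ⟨f, fun t hxt ht ↦ ?_⟩
  obtain ⟨k, hk⟩ := hd_cover t hxt ht
  refine hG.congr ?_ ((F k).2 t ⟨hxt, hk.le⟩)
  filter_upwards [Iio_mem_nhds hk] with u hu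
  exact (hf k (mem_Iic.2 (le_of_lt hu))).symm

lemma exists_left (hG : IsGluable G) (hU : IsOpen U)
    (hloc : ∀ t ∈ U, ∃ f, ∀ᶠ u in 𝓝 t, G f u) {x : ℝ} (hx : x ∈ U) :
    ∃ f, ∀ t, t ≤ x → Icc t x ⊆ U → G f t := by
  obtain ⟨f, hf⟩ := hG.comp_neg.exists_right (U := -U) hU.neg
    (fun t ht ↦ by
      obtain ⟨f, hf⟩ := hloc (-t) ht
      refine ⟨fun u ↦ f (-u), ?_⟩
      filter_upwards [(continuous_neg (G := ℝ)).tendsto t |>.eventually hf] with u hu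
      simpa only [neg_neg] using hu) (x := -x) (by simpa using hx)
  refine ⟨fun u ↦ f (-u), fun t htx ht ↦ ?_⟩
  simpa only [neg_neg] using hf (-t) (neg_le_neg htx) fun y hy ↦
    ht ⟨by linarith [hy.2], by linarith [hy.1]⟩

lemma exists_on_connectedComponentIn (hG : IsGluable G) (hU : IsOpen U)
    (hloc : ∀ t ∈ U, ∃ f, ∀ᶠ u in 𝓝 t, G f u) {x : ℝ} (hx : x ∈ U) :
    ∃ f, ∀ t ∈ connectedComponentIn U x, G f t := by
  obtain ⟨f, hf⟩ := hG.exists_left hU hloc hx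
  obtain ⟨g, hg⟩ := hG.exists_right hU hloc hx
  have hxC : x ∈ connectedComponentIn U x := mem_connectedComponentIn hx
  have hC : (connectedComponentIn U x).OrdConnected :=
    isPreconnected_connectedComponentIn.ordConnected
  obtain ⟨h, -, hh⟩ := hG.exists_concat hxC
    (fun u hu hux ↦ hf u hux ((hC.out hu hxC).trans (connectedComponentIn_subset U x)))
    (fun u hu hxu ↦ hg u hxu ((hC.out hxC hu).trans (connectedComponentIn_subset U x)))
  exact ⟨h, hh⟩

theorem exists_on_isOpen [Nonempty α] (hG : IsGluable G) (hU : IsOpen U)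
    (hloc : ∀ t ∈ U, ∃ f, ∀ᶠ u in 𝓝 t, G f u) : ∃ f, ∀ t ∈ U, G f t := by
  have on_component (C : Set ℝ) :
      ∃ f, ∀ x ∈ U, connectedComponentIn U x = C → ∀ t ∈ C, G f t := by
    by_cases hC : ∃ x ∈ U, connectedComponentIn U x = C
    · obtain ⟨x, hx, rfl⟩ := hC
      obtain ⟨f, hf⟩ := hG.exists_on_connectedComponentIn hU hloc hx
      exact ⟨f, fun _ _ _ ↦ hf⟩
    · exact ⟨Classical.arbitrary _, fun x hx hxC ↦ absurd ⟨x, hx, hxC⟩ hC⟩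
  choose F hF using on_component
  refine ⟨fun t ↦ F (connectedComponentIn U t) t, fun t ht ↦ ?_⟩
  refine hG.congr ?_ (hF _ t ht rfl t (mem_connectedComponentIn ht))
  filter_upwards [hU.connectedComponentIn.mem_nhds (mem_connectedComponentIn ht)] with u hu
  rw [connectedComponentIn_eq hu]

end IsGluable

end Gluing

/-! ### Real-rooted polynomials -/

section PolyOfRoots

variable {R : Type*} [CommRing R] {n : ℕ}

/-- The monic polynomial whose roots, with multiplicity, are the entries of the tuple `y`. -/
noncomputable def polyOfRoots (y : Fin n → R) : R[X] := ∏ i, (X - C (y i))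

lemma monic_polyOfRoots (y : Fin n → R) : (polyOfRoots y).Monic :=
  monic_prod_of_monic _ _ fun i _ ↦ monic_X_sub_C (y i)

lemma natDegree_polyOfRoots [Nontrivial R] (y : Fin n → R) : (polyOfRoots y).natDegree = n := by
  simp [polyOfRoots, natDegree_prod_of_monic _ _ fun i _ ↦ monic_X_sub_C (y i)]

lemma polyOfRoots_comp_perm (y : Fin n → R) (σ : Equiv.Perm (Fin n)) :
    polyOfRoots (y ∘ σ) = polyOfRoots y :=
  Equiv.prod_comp σ fun i ↦ X - C (y i)

lemma taylor_polyOfRoots (y : Fin n → R) (c : R) :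
    taylor c (polyOfRoots y) = polyOfRoots fun i ↦ y i - c := by
  rw [polyOfRoots, ← taylorAlgHom_apply, map_prod]
  refine Finset.prod_congr rfl fun i _ ↦ ?_
  rw [taylorAlgHom_apply, map_sub, taylor_X, taylor_C, C_sub]
  ring

lemma polyOfRoots_eq_multiset_prod (y : Fin n → R) :
    polyOfRoots y = ((Finset.univ.val.map y).map fun a ↦ X - C a).prod := by
  simp [polyOfRoots, Finset.prod, Function.comp_def]

lemma coeff_polyOfRoots (y : Fin n → R) {k : ℕ} (hk : k ≤ n) :
    (polyOfRoots y).coeff k =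
      (-1) ^ (n - k) * MvPolynomial.aeval y (MvPolynomial.esymm (Fin n) R (n - k)) := by
  rw [polyOfRoots_eq_multiset_prod, Multiset.prod_X_sub_C_coeff _ (by simpa using hk),
    MvPolynomial.aeval_esymm_eq_multiset_esymm]
  simp

lemma coeff_polyOfRoots_pred (y : Fin n → R) (hn : 1 ≤ n) :
    (polyOfRoots y).coeff (n - 1) = -∑ i, y i := by
  simpa [polyOfRoots] using
    prod_X_sub_C_coeff_card_pred Finset.univ y (by rwa [Finset.card_univ, Fintype.card_fin])

lemma sum_sq_roots_eq (y : Fin n → R) (hn : 2 ≤ n) :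
    ∑ i, y i ^ 2 = (polyOfRoots y).coeff (n - 1) ^ 2 - 2 * (polyOfRoots y).coeff (n - 2) := by
  have hnewton := congrArg (MvPolynomial.aeval y) (MvPolynomial.mul_esymm_eq_sum (Fin n) R 2)
  have hanti : {a ∈ Finset.HasAntidiagonal.antidiagonal 2 | a.1 < 2} =
      {((0 : ℕ), 2), (1, 1)} := by
    decide
  rw [hanti, Finset.sum_pair (by decide)] at hnewton
  simp only [MvPolynomial.psum, map_mul, map_natCast, map_pow, map_neg, map_one, map_add, map_sum,
    MvPolynomial.aeval_X, MvPolynomial.esymm_zero, MvPolynomial.esymm_one, pow_one] at hnewton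
  rw [coeff_polyOfRoots_pred y (by lia), coeff_polyOfRoots y (Nat.sub_le n 2),
    Nat.sub_sub_self hn]
  push_cast at hnewton
  linear_combination hnewton

variable [IsDomain R]

lemma roots_polyOfRoots (y : Fin n → R) : (polyOfRoots y).roots = Finset.univ.val.map y := by
  rw [polyOfRoots_eq_multiset_prod, roots_multiset_prod_X_sub_C]

lemma isRoot_polyOfRoots {y : Fin n → R} {x : R} : (polyOfRoots y).IsRoot x ↔ ∃ i, x = y i := by
  simp [polyOfRoots, IsRoot.def, eval_prod, Finset.prod_eq_zero_iff, sub_eq_zero]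

lemma scaleRoots_polyOfRoots (y : Fin n → R) (s : R) :
    (polyOfRoots y).scaleRoots s = polyOfRoots fun i ↦ s * y i := by
  unfold polyOfRoots
  induction (Finset.univ : Finset (Fin n)) using Finset.induction_on with
  | empty => simp
  | insert a t ha ih =>
    rw [Finset.prod_insert ha, Finset.prod_insert ha, mul_scaleRoots_of_noZeroDivisors, ih,
      X_sub_C_scaleRoots, mul_comm (y a)]

lemma exists_perm_of_polyOfRoots_eq [LinearOrder R] {x y : Fin n → R}
    (h : polyOfRoots x = polyOfRoots y) : ∃ σ : Equiv.Perm (Fin n), x = y ∘ σ := by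
  have hroots := congrArg roots h
  rw [roots_polyOfRoots, roots_polyOfRoots, Fin.univ_val_map, Fin.univ_val_map,
    Multiset.coe_eq_coe] at hroots
  have hsorted : x ∘ Tuple.sort x = y ∘ Tuple.sort y :=
    List.ofFn_injective ((((Tuple.sort x).ofFn_comp_perm x).trans
      (hroots.trans ((Tuple.sort y).ofFn_comp_perm y).symm)).eq_of_pairwise'
        (Tuple.monotone_sort x).sortedLE_ofFn.pairwise
        (Tuple.monotone_sort y).sortedLE_ofFn.pairwise)
  refine ⟨(Tuple.sort x)⁻¹.trans (Tuple.sort y), funext fun i ↦ ?_⟩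
  simpa using congrFun hsorted ((Tuple.sort x)⁻¹ i)

end PolyOfRoots

section RealRoots

variable {n : ℕ}

lemma continuous_coeff_polyOfRoots (n : ℕ) :
    Continuous fun y : Fin n → ℝ ↦ toFn n (polyOfRoots y) := by
  refine continuous_pi fun k ↦ ?_
  simp only [toFn, LinearMap.pi_apply, lcoeff_apply, coeff_polyOfRoots _ k.2.le]
  exact continuous_const.mul (MvPolynomial.continuous_eval _)

lemma exists_bound_coeff_polyOfRoots (n : ℕ) (B : ℝ) :
    ∃ C, ∀ y : Fin n → ℝ, (∀ i, |y i| ≤ B) → ∀ j : Fin n, |(polyOfRoots y).coeff j| ≤ C := by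
  obtain ⟨C, hC⟩ := (isCompact_univ_pi fun _ : Fin n ↦ isCompact_Icc (a := -B) (b := B))
    |>.exists_bound_of_continuousOn (continuous_coeff_polyOfRoots n).continuousOn
  exact ⟨C, fun y hy j ↦
    (norm_le_pi_norm (toFn n (polyOfRoots y)) j).trans (hC y fun i _ ↦ abs_le.1 (hy i))⟩

lemma abs_root_le_of_abs_coeff_le {C : ℝ} (y : Fin n → ℝ)
    (h : ∀ j : Fin n, |(polyOfRoots y).coeff j| ≤ C) (i : Fin n) : |y i| ≤ C + 1 := by
  have hC : 0 ≤ C := (abs_nonneg _).trans (h i)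
  have hroot : (polyOfRoots y).IsRoot (y i) := isRoot_polyOfRoots.2 ⟨i, rfl⟩
  have hbound : cauchyBound (polyOfRoots y) ≤ C.toNNReal + 1 := by
    rw [cauchyBound, (monic_polyOfRoots y).leadingCoeff, nnnorm_one, div_one]
    gcongr
    refine Finset.sup_le fun j hj ↦ ?_
    rw [natDegree_polyOfRoots, Finset.mem_range] at hj
    rw [← NNReal.coe_le_coe, Real.coe_toNNReal _ hC]
    exact h ⟨j, hj⟩
  have hle := NNReal.coe_le_coe.2
    ((hroot.norm_lt_cauchyBound (monic_polyOfRoots y).ne_zero).le.trans hbound)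
  rwa [NNReal.coe_add, Real.coe_toNNReal _ hC] at hle

/-- A real polynomial is hyperbolic of degree `n` if it is monic with `n` real roots, counted with
multiplicity. -/
def IsHyperbolic (n : ℕ) (p : ℝ[X]) : Prop := ∃ y : Fin n → ℝ, p = polyOfRoots y

namespace IsHyperbolic

variable {p q : ℝ[X]}

lemma monic (h : IsHyperbolic n p) : p.Monic := by
  obtain ⟨y, rfl⟩ := h
  exact monic_polyOfRoots y

lemma natDegree_eq (h : IsHyperbolic n p) : p.natDegree = n := by
  obtain ⟨y, rfl⟩ := h
  exact natDegree_polyOfRoots y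

lemma splits (h : IsHyperbolic n p) : p.Splits := by
  obtain ⟨y, rfl⟩ := h
  exact Splits.prod fun i _ ↦ Splits.X_sub_C _

lemma of_splits (hp : p.Monic) (hs : p.Splits) : IsHyperbolic p.natDegree p := by
  have hlength : p.roots.toList.length = p.natDegree := by
    rw [Multiset.length_toList, ← hs.natDegree_eq_card_roots]
  rw [← hlength]
  refine ⟨p.roots.toList.get, ?_⟩
  conv_lhs => rw [hs.eq_prod_roots_of_monic hp, ← Multiset.coe_toList p.roots]
  rw [polyOfRoots_eq_multiset_prod, Fin.univ_val_map, List.ofFn_get]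

lemma of_dvd (h : IsHyperbolic n p) (hq : q.Monic) (hdvd : q ∣ p) :
    IsHyperbolic q.natDegree q :=
  of_splits hq (h.splits.of_dvd h.monic.ne_zero hdvd)

end IsHyperbolic

end RealRoots

section MonicOfFn

variable {n : ℕ}

lemma toFn_apply {R : Type*} [Semiring R] (p : R[X]) (i : Fin n) : toFn n p i = p.coeff i := rfl

/-- The monic polynomial of degree `n` with lower coefficients `v`. -/
noncomputable def monicOfFn (v : Fin n → ℝ) : ℝ[X] := X ^ n + ofFn n v

lemma monic_monicOfFn (v : Fin n → ℝ) : (monicOfFn v).Monic :=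
  monic_X_pow_add (ofFn_degree_lt v)

lemma degree_monicOfFn (v : Fin n → ℝ) : (monicOfFn v).degree = n := by
  rw [monicOfFn, degree_add_eq_left_of_degree_lt, degree_X_pow]
  simpa only [degree_X_pow] using ofFn_degree_lt v

lemma natDegree_monicOfFn (v : Fin n → ℝ) : (monicOfFn v).natDegree = n :=
  natDegree_eq_of_degree_eq_some (degree_monicOfFn v)

lemma toFn_monicOfFn (v : Fin n → ℝ) : toFn n (monicOfFn v) = v := by
  rw [monicOfFn, map_add, toFn_comp_ofFn_eq_id, add_eq_right]
  ext i
  simp [toFn, coeff_X_pow, i.2.ne]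

lemma eq_of_toFn_eq {R : Type*} [Semiring R] {p q : R[X]} (hp : p.Monic) (hq : q.Monic)
    (hpn : p.natDegree = n) (hqn : q.natDegree = n) (h : toFn n p = toFn n q) : p = q := by
  ext i
  rcases lt_trichotomy i n with hi | rfl | hi
  · exact congrFun h ⟨i, hi⟩
  · rw [← hpn, hp.coeff_natDegree, hpn, ← hqn, hq.coeff_natDegree]
  · rw [coeff_eq_zero_of_natDegree_lt (hpn.trans_lt hi),
      coeff_eq_zero_of_natDegree_lt (hqn.trans_lt hi)]

lemma monicOfFn_toFn {p : ℝ[X]} (hp : p.Monic) (hpn : p.natDegree = n) :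
    monicOfFn (toFn n p) = p :=
  eq_of_toFn_eq (monic_monicOfFn _) hp (natDegree_monicOfFn _) hpn (toFn_monicOfFn _)

/-- The `i`-th coefficient of `ofFn n v`, as a continuous linear form in `v`. -/
noncomputable def coeffOfFn (n i : ℕ) : (Fin n → ℝ) →L[ℝ] ℝ :=
  LinearMap.toContinuousLinearMap (lcoeff ℝ i ∘ₗ ofFn n)

lemma hasFDerivAt_coeff_monicOfFn (i : ℕ) (v : Fin n → ℝ) :
    HasFDerivAt (fun v : Fin n → ℝ ↦ (monicOfFn v).coeff i) (coeffOfFn n i) v := by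
  simp only [monicOfFn, coeff_add]
  exact (coeffOfFn n i).hasFDerivAt.const_add _

lemma contDiff_coeff_monicOfFn (i : ℕ) {N : WithTop ℕ∞} :
    ContDiff ℝ N fun v : Fin n → ℝ ↦ (monicOfFn v).coeff i := by
  simp only [monicOfFn, coeff_add]
  exact contDiff_const.add (coeffOfFn n i).contDiff

end MonicOfFn

section Centered

variable {n : ℕ} {p : ℝ[X]}

/-- The arithmetic mean of the roots of a real-rooted monic polynomial of degree `n`. -/
noncomputable def rootMean (n : ℕ) (p : ℝ[X]) : ℝ := -p.coeff (n - 1) / n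

/-- The polynomial `p` translated so that the mean of its roots is `0`. -/
noncomputable def centered (n : ℕ) (p : ℝ[X]) : ℝ[X] := taylor (rootMean n p) p

lemma centered_polyOfRoots (y : Fin n → ℝ) :
    centered n (polyOfRoots y) = polyOfRoots fun i ↦ y i - rootMean n (polyOfRoots y) :=
  taylor_polyOfRoots _ _

lemma IsHyperbolic.centered (h : IsHyperbolic n p) : IsHyperbolic n (centered n p) := by
  obtain ⟨y, rfl⟩ := h
  exact ⟨_, centered_polyOfRoots y⟩

lemma IsHyperbolic.coeff_centered_pred (h : IsHyperbolic n p) (hn : 1 ≤ n) :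
    (_root_.centered n p).coeff (n - 1) = 0 := by
  obtain ⟨y, rfl⟩ := h
  have : (n : ℝ) ≠ 0 := by positivity
  simp only [centered_polyOfRoots, coeff_polyOfRoots_pred _ hn, rootMean, Finset.sum_sub_distrib,
    Finset.sum_const, Finset.card_univ, Fintype.card_fin, nsmul_eq_mul]
  field_simp
  ring

lemma isRoot_centered {x : ℝ} : (centered n p).IsRoot (x - rootMean n p) ↔ p.IsRoot x := by
  rw [centered, IsRoot.def, taylor_eval, sub_add_cancel, IsRoot.def]

lemma coeff_taylor_eq_sum {R : Type*} [Semiring R] {p : R[X]} (hp : p.natDegree ≤ n)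
    (r : R) (j : ℕ) : (taylor r p).coeff j =
      ∑ i ∈ Finset.range (n + 1), ((i + j).choose j : R) * p.coeff (i + j) * r ^ i := by
  rw [taylor_coeff, eval_eq_sum_range' (n := n + 1) (by have := natDegree_hasseDeriv_le p j; lia)]
  simp only [hasseDeriv_coeff]

lemma contDiff_coeff_centered (j : ℕ) {N : WithTop ℕ∞} :
    ContDiff ℝ N fun v : Fin n → ℝ ↦ (centered n (monicOfFn v)).coeff j := by
  simp only [centered, coeff_taylor_eq_sum (natDegree_monicOfFn _).le, rootMean]
  refine ContDiff.sum fun i _ ↦ ?_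
  exact (contDiff_const.mul (contDiff_coeff_monicOfFn _)).mul
    (((contDiff_coeff_monicOfFn _).neg.div_const _).pow _)

end Centered

/-! ### Twice differentiable functions -/

section TwiceDifferentiable

variable {f g : ℝ → ℝ} {t c : ℝ}

/-- `f` is twice differentiable at `t`: it is differentiable near `t`, and its derivative is
differentiable at `t`. -/
def TwiceDifferentiableAt (f : ℝ → ℝ) (t : ℝ) : Prop :=
  (∀ᶠ u in 𝓝 t, DifferentiableAt ℝ f u) ∧ DifferentiableAt ℝ (deriv f) t

lemma TwiceDifferentiableAt.congr (hf : TwiceDifferentiableAt f t) (h : f =ᶠ[𝓝 t] g) :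
    TwiceDifferentiableAt g t := by
  refine ⟨?_, hf.2.congr_of_eventuallyEq h.symm.deriv⟩
  filter_upwards [hf.1, h.eventuallyEq_nhds] with u hu hfg using hu.congr_of_eventuallyEq hfg.symm

lemma TwiceDifferentiableAt.tendsto_taylor (hf : TwiceDifferentiableAt f t) :
    Tendsto (fun u ↦ (f u - f t - deriv f t * (u - t)) / (u - t) ^ 2) (𝓝[≠] t)
      (𝓝 (deriv (deriv f) t / 2)) := by
  have hcont : ContinuousAt f t := hf.1.self_of_nhds.continuousAt
  refine HasDerivAt.lhopital_zero_nhdsNE (f' := fun u ↦ deriv f u - deriv f t)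
    (g' := fun u ↦ 2 * (u - t)) ?_ (.of_forall fun u ↦ ?_) ?_ ?_ ?_ ?_
  · filter_upwards [hf.1.filter_mono nhdsWithin_le_nhds] with u hu
    simpa using (hu.hasDerivAt.sub_const (f t)).fun_sub
      (((hasDerivAt_id u).sub_const t).const_mul (deriv f t))
  · simpa using ((hasDerivAt_id u).sub_const t).fun_pow 2
  · filter_upwards [self_mem_nhdsWithin] with u hu
    exact mul_ne_zero two_ne_zero (sub_ne_zero.2 hu)
  · have : ContinuousAt (fun u ↦ f u - f t - deriv f t * (u - t)) t := by fun_prop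
    simpa [ContinuousAt] using this.tendsto.mono_left nhdsWithin_le_nhds
  · have : ContinuousAt (fun u : ℝ ↦ (u - t) ^ 2) t := by fun_prop
    simpa [ContinuousAt] using this.tendsto.mono_left nhdsWithin_le_nhds
  · refine ((hasDerivAt_iff_tendsto_slope.1 hf.2.hasDerivAt).div_const 2).congr fun u ↦ ?_
    rw [slope_def_field, div_div, mul_comm]

lemma TwiceDifferentiableAt.eq_of_frequently_eq (hf : TwiceDifferentiableAt f t)
    (hg : TwiceDifferentiableAt g t) (hfg : ∃ᶠ u in 𝓝[≠] t, f u = g u) :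
    f t = g t ∧ deriv f t = deriv g t ∧ deriv (deriv f) t = deriv (deriv g) t := by
  have hf₁ := hf.1.self_of_nhds
  have hg₁ := hg.1.self_of_nhds
  have h0 : f t = g t := tendsto_nhds_unique_of_frequently_eq
    (hf₁.continuousAt.tendsto.mono_left nhdsWithin_le_nhds)
    (hg₁.continuousAt.tendsto.mono_left nhdsWithin_le_nhds) hfg
  have h1 : deriv f t = deriv g t := tendsto_nhds_unique_of_frequently_eq
    (hasDerivAt_iff_tendsto_slope.1 hf₁.hasDerivAt)
    (hasDerivAt_iff_tendsto_slope.1 hg₁.hasDerivAt)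
    (hfg.mono fun u hu ↦ by rw [slope_def_field, slope_def_field, hu, h0])
  have h2 := tendsto_nhds_unique_of_frequently_eq hf.tendsto_taylor hg.tendsto_taylor
    (hfg.mono fun u hu ↦ by rw [hu, h0, h1])
  exact ⟨h0, h1, by linarith⟩

lemma hasDerivAt_ite_le (hf : HasDerivAt f c t) (hg : HasDerivAt g c t) (h : f t = g t) :
    HasDerivAt (fun u ↦ if u ≤ t then f u else g u) c t := by
  have hleft : HasDerivWithinAt (fun u ↦ if u ≤ t then f u else g u) c (Iic t) t :=
    hf.hasDerivWithinAt.congr (fun u hu ↦ if_pos hu) (if_pos le_rfl)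
  have hright : HasDerivWithinAt (fun u ↦ if u ≤ t then f u else g u) c (Ici t) t := by
    refine hg.hasDerivWithinAt.congr (fun u hu ↦ ?_) (by simp [h])
    rcases (mem_Ici.1 hu).eq_or_lt with rfl | hlt
    · simp [h]
    · exact if_neg hlt.not_ge
  simpa [Iic_union_Ici] using hleft.union hright

lemma TwiceDifferentiableAt.ite_le (hf : TwiceDifferentiableAt f t)
    (hg : TwiceDifferentiableAt g t) (h0 : f t = g t) (h1 : deriv f t = deriv g t)
    (h2 : deriv (deriv f) t = deriv (deriv g) t) :
    TwiceDifferentiableAt (fun u ↦ if u ≤ t then f u else g u) t := by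
  have hderiv : ∀ᶠ u in 𝓝 t, HasDerivAt (fun u ↦ if u ≤ t then f u else g u)
      (if u ≤ t then deriv f u else deriv g u) u := by
    filter_upwards [hf.1, hg.1] with u hfu hgu
    rcases lt_trichotomy u t with hlt | rfl | hgt
    · rw [if_pos hlt.le]
      refine hfu.hasDerivAt.congr_of_eventuallyEq ?_
      filter_upwards [Iio_mem_nhds hlt] with v hv
      exact if_pos (le_of_lt hv)
    · rw [if_pos le_rfl]
      exact hasDerivAt_ite_le hfu.hasDerivAt (h1 ▸ hgu.hasDerivAt) h0
    · rw [if_neg hgt.not_ge]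
      refine hgu.hasDerivAt.congr_of_eventuallyEq ?_
      filter_upwards [Ioi_mem_nhds hgt] with v hv
      exact if_neg (not_le.2 hv)
  refine ⟨hderiv.mono fun u hu ↦ hu.differentiableAt, DifferentiableAt.congr_of_eventuallyEq
    (f := fun u ↦ if u ≤ t then deriv f u else deriv g u) ?_ (hderiv.mono fun u hu ↦ hu.deriv)⟩
  exact (hasDerivAt_ite_le hf.2.hasDerivAt (h2 ▸ hg.2.hasDerivAt) h1).differentiableAt

end TwiceDifferentiable

section TwiceDiffRoots

variable {n : ℕ} {P : ℝ → ℝ[X]} {f : ℝ → Fin n → ℝ} {t : ℝ}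

/-- The tuple `f` parametrizes the roots of the curve of polynomials `P` near `t`, and is twice
differentiable at `t`. -/
structure IsTwiceDiffRootsAt (P : ℝ → ℝ[X]) (f : ℝ → Fin n → ℝ) (t : ℝ) : Prop where
  eventually_eq : ∀ᶠ u in 𝓝 t, P u = polyOfRoots (f u)
  twiceDifferentiableAt : ∀ i, TwiceDifferentiableAt (fun u ↦ f u i) t

lemma IsTwiceDiffRootsAt.congr {g : ℝ → Fin n → ℝ} (hf : IsTwiceDiffRootsAt P f t)
    (hfg : f =ᶠ[𝓝 t] g) : IsTwiceDiffRootsAt P g t where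
  eventually_eq := by
    filter_upwards [hf.eventually_eq, hfg] with u hu hu' using hu' ▸ hu
  twiceDifferentiableAt i := (hf.twiceDifferentiableAt i).congr (hfg.fun_comp fun w ↦ w i)

lemma IsTwiceDiffRootsAt.comp_perm (hf : IsTwiceDiffRootsAt P f t) (σ : Equiv.Perm (Fin n)) :
    IsTwiceDiffRootsAt P (fun u ↦ f u ∘ σ) t where
  eventually_eq := hf.eventually_eq.mono fun u hu ↦ by rw [hu, polyOfRoots_comp_perm]
  twiceDifferentiableAt i := hf.twiceDifferentiableAt (σ i)

/-- Two parametrizations agree up to a permutation at each point; one permutation then occurs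
frequently near `t`, and forces the 2-jets at `t` to agree. -/
lemma isGluable_isTwiceDiffRootsAt (P : ℝ → ℝ[X]) :
    IsGluable (IsTwiceDiffRootsAt (n := n) P) where
  congr hfg hf := hf.congr hfg
  comp_perm σ hf := hf.comp_perm σ
  glue {f g t} hf hg := by
    have hperm : ∀ᶠ u in 𝓝[≠] t, ∃ σ : Equiv.Perm (Fin n), f u = g u ∘ σ := by
      refine Eventually.filter_mono nhdsWithin_le_nhds ?_
      filter_upwards [hf.eventually_eq, hg.eventually_eq] with u hfu hgu
      exact exists_perm_of_polyOfRoots_eq (hfu.symm.trans hgu)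
    obtain ⟨σ, hσ⟩ := frequently_exists.1 hperm.frequently
    have hjet := fun i ↦ (hf.twiceDifferentiableAt i).eq_of_frequently_eq
      (hg.twiceDifferentiableAt (σ i)) (hσ.mono fun u hu ↦ by rw [hu, Function.comp_apply])
    refine ⟨σ, funext fun i ↦ (hjet i).1, ?_, fun i ↦ ?_⟩
    · filter_upwards [hf.eventually_eq, (hg.comp_perm σ).eventually_eq] with u hfu hgu
      split_ifs
      exacts [hfu, hgu]
    · refine ((hf.twiceDifferentiableAt i).ite_le (hg.twiceDifferentiableAt (σ i)) (hjet i).1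
        (hjet i).2.1 (hjet i).2.2).congr (.of_forall fun u ↦ ?_)
      dsimp only
      split_ifs <;> rfl

end TwiceDiffRoots

/-! ### Smooth dependence of coprime factors -/

section CoprimeFactors

variable {k l n : ℕ}

/-- The lower coefficients of a product of two monic polynomials, as a function of the lower
coefficients of the factors. -/
noncomputable def mulCoeffs (x : (Fin k → ℝ) × (Fin l → ℝ)) : Fin (k + l) → ℝ :=
  toFn (k + l) (monicOfFn x.1 * monicOfFn x.2)

/-- The derivative of `mulCoeffs` at `x`, see `hasFDerivAt_mulCoeffs`. -/
noncomputable def mulCoeffsDeriv (x : (Fin k → ℝ) × (Fin l → ℝ)) :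
    (Fin k → ℝ) × (Fin l → ℝ) →ₗ[ℝ] Fin (k + l) → ℝ :=
  toFn (k + l) ∘ₗ (LinearMap.mulRight ℝ (monicOfFn x.2) ∘ₗ ofFn k ∘ₗ LinearMap.fst ℝ _ _ +
    LinearMap.mulLeft ℝ (monicOfFn x.1) ∘ₗ ofFn l ∘ₗ LinearMap.snd ℝ _ _)

lemma mulCoeffsDeriv_apply (x h : (Fin k → ℝ) × (Fin l → ℝ)) :
    mulCoeffsDeriv x h =
      toFn (k + l) (ofFn k h.1 * monicOfFn x.2 + monicOfFn x.1 * ofFn l h.2) := rfl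

lemma contDiff_mulCoeffs {N : WithTop ℕ∞} : ContDiff ℝ N (mulCoeffs (k := k) (l := l)) := by
  refine contDiff_pi.2 fun i ↦ ?_
  simp only [mulCoeffs, toFn_apply, coeff_mul]
  exact ContDiff.sum fun p _ ↦ ((contDiff_coeff_monicOfFn p.1).comp contDiff_fst).mul
    ((contDiff_coeff_monicOfFn p.2).comp contDiff_snd)

lemma hasFDerivAt_mulCoeffs (x : (Fin k → ℝ) × (Fin l → ℝ)) :
    HasFDerivAt mulCoeffs (LinearMap.toContinuousLinearMap (mulCoeffsDeriv x)) x := by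
  refine hasFDerivAt_pi'.2 fun i ↦ ?_
  simp only [mulCoeffs, toFn_apply, coeff_mul]
  have hterm (p : ℕ × ℕ) := HasFDerivAt.mul
    (HasFDerivAt.comp (f := Prod.fst) x (hasFDerivAt_coeff_monicOfFn p.1 x.1) hasFDerivAt_fst)
    (HasFDerivAt.comp (f := Prod.snd) x (hasFDerivAt_coeff_monicOfFn p.2 x.2) hasFDerivAt_snd)
  refine (HasFDerivAt.fun_sum (u := Finset.HasAntidiagonal.antidiagonal (i : ℕ))
    fun p _ ↦ hterm p).congr_fderiv (ContinuousLinearMap.ext fun h ↦ ?_)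
  have happly : ((ContinuousLinearMap.proj i).comp
      (LinearMap.toContinuousLinearMap (mulCoeffsDeriv x))) h = mulCoeffsDeriv x h i := rfl
  rw [happly, mulCoeffsDeriv_apply, toFn_apply, coeff_add, coeff_mul, coeff_mul,
    ← Finset.sum_add_distrib, sum_apply]
  refine Finset.sum_congr rfl fun p _ ↦ ?_
  change (monicOfFn x.1).coeff p.1 * (ofFn l h.2).coeff p.2 +
    (monicOfFn x.2).coeff p.2 * (ofFn k h.1).coeff p.1 = _
  ring

lemma mulCoeffsDeriv_injective {x : (Fin k → ℝ) × (Fin l → ℝ)}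
    (hcop : IsCoprime (monicOfFn x.1) (monicOfFn x.2)) :
    Function.Injective (mulCoeffsDeriv x) := by
  refine (injective_iff_map_eq_zero _).2 fun ⟨u, v⟩ huv ↦ ?_
  have hlt : (ofFn k u * monicOfFn x.2 + monicOfFn x.1 * ofFn l v).degree < (k + l : ℕ) := by
    refine (degree_add_le _ _).trans_lt (max_lt ?_ ?_)
    · rw [degree_mul, degree_monicOfFn, Nat.cast_add]
      exact WithBot.add_lt_add_right (by simp) (ofFn_degree_lt u)
    · rw [degree_mul, degree_monicOfFn, Nat.cast_add]
      exact WithBot.add_lt_add_left (by simp) (ofFn_degree_lt v)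
  have hzero : ofFn k u * monicOfFn x.2 + monicOfFn x.1 * ofFn l v = 0 := by
    ext i
    by_cases hi : i < k + l
    · exact congrFun huv ⟨i, hi⟩
    · rw [coeff_eq_zero_of_degree_lt (hlt.trans_le (by exact_mod_cast not_lt.1 hi)), coeff_zero]
  have hu : ofFn k u = 0 := by
    refine eq_zero_of_dvd_of_degree_lt (hcop.dvd_of_dvd_mul_right ⟨-ofFn l v, ?_⟩) ?_
    · linear_combination hzero
    · rw [degree_monicOfFn]
      exact ofFn_degree_lt u
  have hv : ofFn l v = 0 := by
    rw [hu, zero_mul, zero_add] at hzero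
    exact (mul_eq_zero.1 hzero).resolve_left (monic_monicOfFn _).ne_zero
  exact Prod.ext ((map_eq_zero_iff _ (injective_ofFn k)).1 hu)
    ((map_eq_zero_iff _ (injective_ofFn l)).1 hv)

lemma exists_contDiffOn_factorization (x : (Fin k → ℝ) × (Fin l → ℝ))
    (hcop : IsCoprime (monicOfFn x.1) (monicOfFn x.2)) (N : ℕ) :
    ∃ (φ : (Fin (k + l) → ℝ) → Fin k → ℝ) (ψ : (Fin (k + l) → ℝ) → Fin l → ℝ)
      (W : Set (Fin (k + l) → ℝ)), IsOpen W ∧ mulCoeffs x ∈ W ∧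
      ContDiffOn ℝ N φ W ∧ ContDiffOn ℝ N ψ W ∧
      ∀ v ∈ W, monicOfFn v = monicOfFn (φ v) * monicOfFn (ψ v) := by
  let e := (LinearMap.linearEquivOfInjective _ (mulCoeffsDeriv_injective hcop)
    (by simp)).toContinuousLinearEquiv
  have hderiv : HasFDerivAt mulCoeffs (e : _ →L[ℝ] _) x := hasFDerivAt_mulCoeffs x
  have hsmooth : ContDiffAt ℝ (N + 1 : ℕ) mulCoeffs x := contDiff_mulCoeffs.contDiffAt
  let g := hsmooth.localInverse hderiv (by simp)
  have hg : ContDiffAt ℝ N g (mulCoeffs x) :=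
    (hsmooth.to_localInverse hderiv (by simp)).of_le (by exact_mod_cast Nat.le_succ N)
  have hinv : ∀ᶠ v in 𝓝 (mulCoeffs x), mulCoeffs (g v) = v :=
    (hsmooth.hasStrictFDerivAt' hderiv (by simp)).eventually_right_inverse
  obtain ⟨W, hW, hWo, hxW⟩ := eventually_nhds_iff.1 (hinv.and (hg.eventually (by simp)))
  refine ⟨fun v ↦ (g v).1, fun v ↦ (g v).2, W, hWo, hxW,
    fun v hv ↦ (contDiffAt_fst.comp v (hW v hv).2).contDiffWithinAt,
    fun v hv ↦ (contDiffAt_snd.comp v (hW v hv).2).contDiffWithinAt, fun v hv ↦ ?_⟩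
  refine eq_of_toFn_eq (monic_monicOfFn _) ((monic_monicOfFn _).mul (monic_monicOfFn _))
    (natDegree_monicOfFn v) ?_ ?_
  · rw [(monic_monicOfFn _).natDegree_mul (monic_monicOfFn _), natDegree_monicOfFn,
      natDegree_monicOfFn]
  · rw [toFn_monicOfFn]
    exact (hW v hv).1.symm

lemma exists_coprime_factors {y : Fin n → ℝ} {i j : Fin n} (hij : y i ≠ y j) :
    ∃ A B : ℝ[X], A.Monic ∧ B.Monic ∧ IsCoprime A B ∧ A * B = polyOfRoots y ∧
      A.natDegree < n ∧ B.natDegree < n := by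
  classical
  let S : Finset (Fin n) := {m | y m = y i}
  have hdeg (T : Finset (Fin n)) : (∏ m ∈ T, (X - C (y m))).natDegree = T.card := by
    simp [natDegree_prod_of_monic _ _ fun m _ ↦ monic_X_sub_C (y m)]
  have hlt {T : Finset (Fin n)} {m : Fin n} (hm : m ∉ T) : T.card < n := by
    simpa using Finset.card_lt_univ_of_notMem hm
  refine ⟨∏ m ∈ S, (X - C (y m)), ∏ m ∈ Sᶜ, (X - C (y m)),
    monic_prod_of_monic _ _ fun m _ ↦ monic_X_sub_C _,
    monic_prod_of_monic _ _ fun m _ ↦ monic_X_sub_C _,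
    IsCoprime.prod_left fun a ha ↦ IsCoprime.prod_right fun b hb ↦ ?_,
    Finset.prod_mul_prod_compl S _, ?_, ?_⟩
  · simp only [S, Finset.mem_compl, Finset.mem_filter_univ] at ha hb
    exact isCoprime_X_sub_C_of_isUnit_sub (sub_ne_zero.2 fun h ↦ hb (h.symm.trans ha)).isUnit
  · rw [hdeg]
    exact hlt (m := j) (by simpa [S] using hij.symm)
  · rw [hdeg]
    exact hlt (m := i) (by simp [S])

/-- The factors are obtained from the inverse function theorem, since multiplication of coprime
monic polynomials has invertible derivative. -/
lemma exists_contDiffOn_splitting {y : Fin n → ℝ} {i j : Fin n} (hij : y i ≠ y j) (N : ℕ) :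
    ∃ k l : ℕ, k + l = n ∧ k < n ∧ l < n ∧ ∃ (φ : (Fin n → ℝ) → Fin k → ℝ)
      (ψ : (Fin n → ℝ) → Fin l → ℝ) (W : Set (Fin n → ℝ)), IsOpen W ∧
      toFn n (polyOfRoots y) ∈ W ∧ ContDiffOn ℝ N φ W ∧ ContDiffOn ℝ N ψ W ∧
      ∀ v ∈ W, monicOfFn v = monicOfFn (φ v) * monicOfFn (ψ v) := by
  obtain ⟨A, B, hA, hB, hcop, hAB, hAn, hBn⟩ := exists_coprime_factors hij
  obtain rfl : n = A.natDegree + B.natDegree := by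
    rw [← hA.natDegree_mul hB, hAB, natDegree_polyOfRoots]
  refine ⟨A.natDegree, B.natDegree, rfl, hAn, hBn, ?_⟩
  have hfactor := exists_contDiffOn_factorization (toFn A.natDegree A, toFn B.natDegree B)
    (by rwa [monicOfFn_toFn hA rfl, monicOfFn_toFn hB rfl]) N
  rwa [mulCoeffs, monicOfFn_toFn hA rfl, monicOfFn_toFn hB rfl, hAB] at hfactor

end CoprimeFactors

section HyperbolicCurve

variable {m N : ℕ} {Q : ℝ → ℝ[X]} {t₀ : ℝ}

/-- Near `t₀`, the curve `Q` consists of hyperbolic polynomials of degree `m`, and its coefficients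
are of class `C^N` at `t₀`. -/
structure IsHyperbolicCurveAt (m N : ℕ) (Q : ℝ → ℝ[X]) (t₀ : ℝ) : Prop where
  eventually_isHyperbolic : ∀ᶠ t in 𝓝 t₀, IsHyperbolic m (Q t)
  contDiffAt_coeff : ∀ j : Fin m, ContDiffAt ℝ N (fun t ↦ (Q t).coeff j) t₀

lemma IsHyperbolicCurveAt.eventually (hQ : IsHyperbolicCurveAt m N Q t₀) :
    ∀ᶠ t in 𝓝 t₀, IsHyperbolicCurveAt m N Q t := by
  filter_upwards [hQ.eventually_isHyperbolic.eventually_nhds, eventually_all.2 fun j ↦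
    (hQ.contDiffAt_coeff j).eventually (by simp)] with t ht ht' using ⟨ht, ht'⟩

lemma IsHyperbolicCurveAt.comp {φ : ℝ → ℝ} {t : ℝ}
    (hQ : IsHyperbolicCurveAt m N Q (φ t)) (hφ : ContDiffAt ℝ N φ t) :
    IsHyperbolicCurveAt m N (fun u ↦ Q (φ u)) t :=
  ⟨hφ.continuousAt.eventually hQ.eventually_isHyperbolic,
    fun j ↦ (hQ.contDiffAt_coeff j).comp t hφ⟩

lemma IsHyperbolicCurveAt.of_factor {k : ℕ} {f : ℝ → Fin k → ℝ}
    (hQ : IsHyperbolicCurveAt m N Q t₀) (hf : ContDiffAt ℝ N f t₀)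
    (hdvd : ∀ᶠ t in 𝓝 t₀, monicOfFn (f t) ∣ Q t) :
    IsHyperbolicCurveAt k N (fun t ↦ monicOfFn (f t)) t₀ where
  eventually_isHyperbolic := by
    filter_upwards [hQ.eventually_isHyperbolic, hdvd] with t ht htdvd
    simpa only [natDegree_monicOfFn] using ht.of_dvd (monic_monicOfFn (f t)) htdvd
  contDiffAt_coeff j := (contDiff_coeff_monicOfFn j).contDiffAt.comp t₀ hf

lemma IsHyperbolicCurveAt.exists_splitting (hQ : IsHyperbolicCurveAt m N Q t₀) {y : Fin m → ℝ}
    (hy : Q t₀ = polyOfRoots y) {i j : Fin m} (hij : y i ≠ y j) :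
    ∃ k l, k + l = m ∧ k < m ∧ l < m ∧ ∃ A B : ℝ → ℝ[X], IsHyperbolicCurveAt k N A t₀ ∧
      IsHyperbolicCurveAt l N B t₀ ∧ ∀ᶠ t in 𝓝 t₀, Q t = A t * B t := by
  obtain ⟨k, l, hkl, hk, hl, φ, ψ, W, hW, hyW, hφ, hψ, hfactor⟩ := exists_contDiffOn_splitting hij N
  rw [← hy] at hyW
  have hcoeff : ContDiffAt ℝ N (fun t ↦ toFn m (Q t)) t₀ := contDiffAt_pi.2 hQ.contDiffAt_coeff
  have hprod : ∀ᶠ t in 𝓝 t₀,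
      Q t = monicOfFn (φ (toFn m (Q t))) * monicOfFn (ψ (toFn m (Q t))) := by
    filter_upwards [hQ.eventually_isHyperbolic,
      hcoeff.continuousAt.eventually (hW.mem_nhds hyW)] with t ht htW
    rw [← hfactor _ htW, monicOfFn_toFn ht.monic ht.natDegree_eq]
  exact ⟨k, l, hkl, hk, hl, _, _,
    hQ.of_factor ((hφ.contDiffAt (hW.mem_nhds hyW)).comp t₀ hcoeff)
      (hprod.mono fun t ht ↦ Dvd.intro _ ht.symm),
    hQ.of_factor ((hψ.contDiffAt (hW.mem_nhds hyW)).comp t₀ hcoeff)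
      (hprod.mono fun t ht ↦ Dvd.intro_left _ ht.symm), hprod⟩

end HyperbolicCurve

/-! ### Families bounded in `C ^ N` -/

section IteratedDeriv

lemma contDiffAt_iteratedDeriv {𝕜 F : Type*} [NontriviallyNormedField 𝕜] [NormedAddCommGroup F]
    [NormedSpace 𝕜 F] {N m i : ℕ} {f : 𝕜 → F} {t : 𝕜} (hf : ContDiffAt 𝕜 N f t) (h : m + i ≤ N) :
    ContDiffAt 𝕜 m (iteratedDeriv i f) t := by
  rw [iteratedDeriv_eq_equiv_comp]
  exact (LinearIsometryEquiv.contDiff _).contDiffAt.comp t (hf.iteratedFDeriv_right (mod_cast h))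

lemma hasDerivAt_iteratedDeriv {𝕜 F : Type*} [NontriviallyNormedField 𝕜] [NormedAddCommGroup F]
    [NormedSpace 𝕜 F] {N i : ℕ} {f : 𝕜 → F} {t : 𝕜} (hf : ContDiffAt 𝕜 N f t) (hi : i < N) :
    HasDerivAt (iteratedDeriv i f) (iteratedDeriv (i + 1) f t) t := by
  rw [iteratedDeriv_succ]
  exact ((contDiffAt_iteratedDeriv (m := 1) hf (by lia)).differentiableAt (by simp)).hasDerivAt

lemma iteratedDeriv_comp_const_add_const_mul (f : ℝ → ℝ) (a c : ℝ) (i : ℕ) :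
    iteratedDeriv i (fun t ↦ f (a + c * t)) =
      fun t ↦ c ^ i * iteratedDeriv i f (a + c * t) := by
  induction i with
  | zero => simp only [iteratedDeriv_zero, pow_zero, one_mul]
  | succ i ih =>
    ext t
    rw [iteratedDeriv_succ, ih, deriv_const_mul_field,
      deriv_comp_mul_left c (fun u ↦ iteratedDeriv i f (a + u)) t, deriv_comp_const_add,
      iteratedDeriv_succ, smul_eq_mul]
    ring

lemma norm_iteratedFDerivWithin_pi_le {𝕜 E ι : Type*} {F : ι → Type*}
    [NontriviallyNormedField 𝕜] [NormedAddCommGroup E] [NormedSpace 𝕜 E] [Fintype ι]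
    [∀ j, NormedAddCommGroup (F j)] [∀ j, NormedSpace 𝕜 (F j)] {f : ∀ j, E → F j} {s : Set E}
    {x : E} {i : ℕ} {D : ℝ} (hs : UniqueDiffOn 𝕜 s) (hx : x ∈ s)
    (hf : ∀ j, ContDiffWithinAt 𝕜 i (f j) s x) (hD : 0 ≤ D)
    (h : ∀ j, ‖iteratedFDerivWithin 𝕜 i (f j) s x‖ ≤ D) :
    ‖iteratedFDerivWithin 𝕜 i (fun y j ↦ f j y) s x‖ ≤ D := by
  refine ContinuousMultilinearMap.opNorm_le_bound hD fun m ↦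
    (pi_norm_le_iff_of_nonneg (by positivity)).2 fun j ↦ ?_
  have hproj := (ContinuousLinearMap.proj (R := 𝕜) (φ := F) j).iteratedFDerivWithin_comp_left
    (contDiffWithinAt_pi.2 hf) hs hx le_rfl
  calc ‖iteratedFDerivWithin 𝕜 i (fun y j ↦ f j y) s x m j‖
      = ‖iteratedFDerivWithin 𝕜 i (f j) s x m‖ := congrArg (‖· m‖) hproj.symm
    _ ≤ D * ∏ l, ‖m l‖ := ContinuousMultilinearMap.le_of_opNorm_le (h j) m

end IteratedDeriv

lemma exists_forall_mem_finite_le {ι α : Type*} {s : Set ι} (hs : s.Finite) {f : ι → α → ℝ}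
    {A : Set α} (h : ∀ i ∈ s, ∃ C, ∀ a ∈ A, f i a ≤ C) :
    ∃ C, 0 ≤ C ∧ ∀ i ∈ s, ∀ a ∈ A, f i a ≤ C := by
  refine ((eventually_ge_atTop 0).and ((eventually_all_finite hs).2 fun i hi ↦ ?_)).exists
  obtain ⟨C, hC⟩ := h i hi
  filter_upwards [eventually_ge_atTop C] with D hD a ha using (hC a ha).trans hD

lemma mul_mem_Ioo_neg_one_one {c t : ℝ} (hc : 0 < c) (hc₁ : c ≤ 1) (ht : t ∈ Ioo (-1 : ℝ) 1) :
    c * t ∈ Ioo (-1 : ℝ) 1 := by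
  constructor <;> nlinarith [ht.1, ht.2]

/-- The family of functions `f k` is bounded in `C ^ N` on the interval `(-1, 1)`. -/
structure IsBoundedContDiff {ι : Type*} (N : ℕ) (f : ι → ℝ → ℝ) : Prop where
  contDiffOn (k : ι) : ContDiffOn ℝ N (f k) (Ioo (-1) 1)
  exists_bound (i : ℕ) (hi : i ≤ N) :
    ∃ C, ∀ k, ∀ t ∈ Ioo (-1 : ℝ) 1, |iteratedDeriv i (f k) t| ≤ C

namespace IsBoundedContDiff

variable {ι κ : Type*} {N n : ℕ}

lemma mono {M : ℕ} {f : ι → ℝ → ℝ} (h : IsBoundedContDiff N f) (hM : M ≤ N) :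
    IsBoundedContDiff M f :=
  ⟨fun k ↦ (h.contDiffOn k).of_le (mod_cast hM), fun i hi ↦ h.exists_bound i (hi.trans hM)⟩

lemma reindex {f : ι → ℝ → ℝ} (h : IsBoundedContDiff N f) (e : κ → ι) :
    IsBoundedContDiff N fun k ↦ f (e k) :=
  ⟨fun k ↦ h.contDiffOn (e k), fun i hi ↦ (h.exists_bound i hi).imp fun _ hC k ↦ hC (e k)⟩

lemma congr {f g : ι → ℝ → ℝ} (h : IsBoundedContDiff N f)
    (hfg : ∀ k, EqOn (g k) (f k) (Ioo (-1) 1)) : IsBoundedContDiff N g :=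
  ⟨fun k ↦ (h.contDiffOn k).congr (hfg k), fun i hi ↦ (h.exists_bound i hi).imp fun _ hC k t ht ↦
    (hfg k).iteratedDeriv_of_isOpen isOpen_Ioo i ht ▸ hC k t ht⟩

lemma exists_bound_forall {f : Fin n → ι → ℝ → ℝ} (h : ∀ j, IsBoundedContDiff N (f j)) :
    ∃ C, 0 ≤ C ∧ ∀ j k, ∀ i ≤ N, ∀ t ∈ Ioo (-1 : ℝ) 1, |iteratedDeriv i (f j k) t| ≤ C := by
  obtain ⟨C, hC₀, hC⟩ := exists_forall_mem_finite_le (A := univ ×ˢ Ioo (-1 : ℝ) 1)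
    (f := fun (p : Fin n × ℕ) (q : ι × ℝ) ↦ |iteratedDeriv p.2 (f p.1 q.1) q.2|)
    ((finite_univ (α := Fin n)).prod (finite_Iic N)) fun p hp ↦
      ((h p.1).exists_bound p.2 hp.2).imp fun C hC q hq ↦ hC q.1 q.2 hq.2
  exact ⟨C, hC₀, fun j k i hi t ht ↦ hC (j, i) ⟨mem_univ j, hi⟩ (k, t) ⟨mem_univ k, ht⟩⟩

lemma comp {f : Fin n → ι → ℝ → ℝ} (hf : ∀ j, IsBoundedContDiff N (f j))
    {φ : (Fin n → ℝ) → ℝ} {W K : Set (Fin n → ℝ)} (hW : IsOpen W) (hφ : ContDiffOn ℝ N φ W)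
    (hK : IsCompact K) (hKW : K ⊆ W) (hfK : ∀ k, ∀ t ∈ Ioo (-1 : ℝ) 1, (fun j ↦ f j k t) ∈ K) :
    IsBoundedContDiff N fun k t ↦ φ fun j ↦ f j k t := by
  have hF (k : ι) : ContDiffOn ℝ N (fun t j ↦ f j k t) (Ioo (-1) 1) :=
    contDiffOn_pi.2 fun j ↦ (hf j).contDiffOn k
  obtain ⟨C, -, hC⟩ : ∃ C, 0 ≤ C ∧ ∀ i ∈ Iic N, ∀ v ∈ K, ‖iteratedFDerivWithin ℝ i φ W v‖ ≤ C :=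
    exists_forall_mem_finite_le (finite_Iic N) fun i hi ↦ hK.exists_bound_of_continuousOn <|
      (hφ.continuousOn_iteratedFDerivWithin (mod_cast hi) hW.uniqueDiffOn).mono hKW
  obtain ⟨D, hD₀, hD⟩ := exists_bound_forall hf
  refine ⟨fun k ↦ hφ.comp (hF k) fun t ht ↦ hKW (hfK k t ht),
    fun i hi ↦ ⟨i.factorial * C * (D + 1) ^ i, fun k t ht ↦ ?_⟩⟩
  have hDF (l : ℕ) (hl : l ≤ i) :
      ‖iteratedFDerivWithin ℝ l (fun t j ↦ f j k t) (Ioo (-1) 1) t‖ ≤ D := by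
    refine norm_iteratedFDerivWithin_pi_le isOpen_Ioo.uniqueDiffOn ht
      (fun j ↦ (((hf j).contDiffOn k) t ht).of_le (mod_cast hl.trans hi)) hD₀ fun j ↦ ?_
    rw [norm_iteratedFDerivWithin_eq_norm_iteratedDerivWithin,
      iteratedDerivWithin_of_isOpen isOpen_Ioo ht]
    exact hD j k l (hl.trans hi) t ht
  rw [← iteratedDerivWithin_of_isOpen isOpen_Ioo ht, ← Real.norm_eq_abs,
    ← norm_iteratedFDerivWithin_eq_norm_iteratedDerivWithin]
  exact norm_iteratedFDerivWithin_comp_le (hφ.of_le (mod_cast hi)) ((hF k).of_le (mod_cast hi))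
    le_rfl hW.uniqueDiffOn isOpen_Ioo.uniqueDiffOn (fun t ht ↦ hKW (hfK k t ht)) ht
    (fun l hl ↦ hC l (hl.trans hi) _ (hfK k t ht))
    (fun l hl₁ hl ↦ (hDF l hl).trans <| (lt_add_one D).le.trans <|
      le_self_pow₀ (by linarith) (by lia))

lemma scale {f : ι → ℝ → ℝ} (h : IsBoundedContDiff N f) {c : ℝ} (hc : 0 < c) (hc₁ : c ≤ 1) :
    IsBoundedContDiff N fun k t ↦ f k (c * t) := by
  have hmaps : MapsTo (c * ·) (Ioo (-1 : ℝ) 1) (Ioo (-1) 1) := fun t ht ↦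
    mul_mem_Ioo_neg_one_one hc hc₁ ht
  refine ⟨fun k ↦ (h.contDiffOn k).comp (by fun_prop) hmaps, fun i hi ↦ ?_⟩
  obtain ⟨C, hC⟩ := h.exists_bound i hi
  refine ⟨C, fun k t ht ↦ ?_⟩
  have hderiv := congrFun (iteratedDeriv_comp_const_add_const_mul (f k) 0 c i) t
  simp only [zero_add] at hderiv
  rw [hderiv, abs_mul, abs_of_nonneg (by positivity)]
  exact (mul_le_of_le_one_left (abs_nonneg _) (pow_le_one₀ hc.le hc₁)).trans (hC k _ (hmaps ht))

end IsBoundedContDiff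

/-! ### Landau's inequality for intermediate derivatives -/

section Landau

lemma exists_abs_iterated_deriv_le (m : ℕ) {ℓ : ℝ} (hℓ : 0 < ℓ) :
    ∃ C : ℝ, ∀ (F : ℕ → ℝ → ℝ) (a M : ℝ),
      (∀ i < m, ∀ t ∈ Icc a (a + ℓ), HasDerivAt (F i) (F (i + 1) t) t) →
      (∀ t ∈ Icc a (a + ℓ), |F 0 t| ≤ M) → ∃ ξ ∈ Icc a (a + ℓ), |F m ξ| ≤ C * M := by
  induction m generalizing ℓ with
  | zero =>
    have hmem (a : ℝ) : a ∈ Icc a (a + ℓ) := ⟨le_rfl, by linarith⟩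
    exact ⟨1, fun F a M _ hb ↦ ⟨a, hmem a, (hb a (hmem a)).trans_eq (one_mul M).symm⟩⟩
  | succ m ih =>
    obtain ⟨C, hC⟩ := ih (show 0 < ℓ / 3 by positivity)
    refine ⟨2 * C / (ℓ / 3), fun F a M hd hb ↦ ?_⟩
    have hpoint (b : ℝ) (hb' : Icc b (b + ℓ / 3) ⊆ Icc a (a + ℓ)) :
        ∃ x ∈ Icc b (b + ℓ / 3), |F m x| ≤ C * M :=
      hC F b M (fun i hi t ht ↦ hd i (by lia) t (hb' ht)) fun t ht ↦ hb t (hb' ht)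
    obtain ⟨x, hx, hFx⟩ := hpoint a (Icc_subset_Icc le_rfl (by linarith))
    obtain ⟨y, hy, hFy⟩ := hpoint (a + 2 * ℓ / 3) (Icc_subset_Icc (by linarith) (by linarith))
    have hxy : ℓ / 3 ≤ y - x := by linarith [hx.2, hy.1]
    have hsub : Icc x y ⊆ Icc a (a + ℓ) := Icc_subset_Icc hx.1 (by linarith [hy.2])
    obtain ⟨ξ, hξ, hslope⟩ := exists_hasDerivAt_eq_slope (F m) (F (m + 1)) (by linarith)
      (fun t ht ↦ (hd m (by lia) t (hsub ht)).continuousAt.continuousWithinAt)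
      (fun t ht ↦ hd m (by lia) t (hsub (Ioo_subset_Icc_self ht)))
    refine ⟨ξ, hsub (Ioo_subset_Icc_self hξ), ?_⟩
    calc |F (m + 1) ξ| = |F m y - F m x| / (y - x) := by
          rw [hslope, abs_div, abs_of_pos (show 0 < y - x by linarith)]
      _ ≤ (C * M + C * M) / (ℓ / 3) := by
          gcongr
          · linarith [abs_nonneg (F m x)]
          · exact (abs_sub _ _).trans (add_le_add hFy hFx)
      _ = 2 * C / (ℓ / 3) * M := by ring

lemma exists_bound_of_abs_le_of_abs_iterated_deriv_le {m k : ℕ} (hk : k ≤ m) (A : ℝ) :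
    ∃ C : ℝ, ∀ F : ℕ → ℝ → ℝ,
      (∀ i < m, ∀ t ∈ Ioo (-1 : ℝ) 1, HasDerivAt (F i) (F (i + 1) t) t) →
      (∀ t ∈ Ioo (-1 : ℝ) 1, |F 0 t| ≤ A) → (∀ t ∈ Ioo (-1 : ℝ) 1, |F m t| ≤ A) →
      ∀ t ∈ Ioo (-1 : ℝ) 1, |F k t| ≤ C := by
  induction hk using Nat.decreasingInduction with
  | self => exact ⟨A, fun F _ _ h ↦ h⟩
  | of_succ k hk ih =>
    obtain ⟨C, hC⟩ := ih
    obtain ⟨C', hC'⟩ := exists_abs_iterated_deriv_le k one_pos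
    refine ⟨C' * A + C * 2, fun F hd h₀ hm t ht ↦ ?_⟩
    have hbound := hC F hd h₀ hm
    have hsub : Icc (-1 / 2 : ℝ) (-1 / 2 + 1) ⊆ Ioo (-1) 1 :=
      Icc_subset_Ioo (by norm_num) (by norm_num)
    obtain ⟨ξ, hξ, hFξ⟩ := hC' F (-1 / 2) A (fun i hi t ht ↦ hd i (hi.trans hk) t (hsub ht))
      fun t ht ↦ h₀ t (hsub ht)
    have hlip : |F k t - F k ξ| ≤ C * |t - ξ| :=
      (convex_Ioo (-1 : ℝ) 1).norm_image_sub_le_of_norm_hasDerivWithin_le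
        (fun x hx ↦ (hd k hk x hx).hasDerivWithinAt) hbound (hsub hξ) ht
    have hdist : |t - ξ| ≤ 2 := by
      rw [abs_le]; constructor <;> linarith [ht.1, ht.2, (hsub hξ).1, (hsub hξ).2]
    calc |F k t| ≤ |F k ξ| + |F k t - F k ξ| := by linarith [abs_sub_abs_le_abs_sub (F k t) (F k ξ)]
      _ ≤ C' * A + C * 2 := add_le_add hFξ <|
          hlip.trans (mul_le_mul_of_nonneg_left hdist ((abs_nonneg _).trans (hbound t ht)))

end Landau

namespace IsBoundedContDiff

variable {ι : Type*} {N n : ℕ}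

lemma of_high_order {f : ι → ℝ → ℝ} {d : ℕ} (hd : d ≤ N)
    (hf : ∀ k, ContDiffOn ℝ N (f k) (Ioo (-1) 1))
    (hzero : ∃ C, ∀ k, ∀ t ∈ Ioo (-1 : ℝ) 1, |f k t| ≤ C)
    (hhigh : ∀ i, d ≤ i → i ≤ N → ∃ C, ∀ k, ∀ t ∈ Ioo (-1 : ℝ) 1, |iteratedDeriv i (f k) t| ≤ C) :
    IsBoundedContDiff N f := by
  refine ⟨hf, fun i hi ↦ (le_total d i).elim (fun hdi ↦ hhigh i hdi hi) fun hid ↦ ?_⟩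
  obtain ⟨C₀, hC₀⟩ := hzero
  obtain ⟨C₁, hC₁⟩ := hhigh d le_rfl hd
  obtain ⟨C, hC⟩ := exists_bound_of_abs_le_of_abs_iterated_deriv_le hid (max C₀ C₁)
  exact ⟨C, fun k ↦ hC (fun i ↦ iteratedDeriv i (f k))
    (fun i hi t ht ↦ hasDerivAt_iteratedDeriv ((hf k).contDiffAt (isOpen_Ioo.mem_nhds ht))
      (hi.trans_le hd))
    (fun t ht ↦ by simpa only [iteratedDeriv_zero] using (hC₀ k t ht).trans (le_max_left _ _))
    fun t ht ↦ (hC₁ k t ht).trans (le_max_right _ _)⟩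

lemma exists_closedBall {f : Fin n → ι → ℝ → ℝ} (h : ∀ j, IsBoundedContDiff N (f j)) :
    ∃ C, ∀ k, ∀ t ∈ Ioo (-1 : ℝ) 1, (fun j ↦ f j k t) ∈ Metric.closedBall 0 C := by
  obtain ⟨C, hC₀, hC⟩ := exists_bound_forall h
  refine ⟨C, fun k t ht ↦ mem_closedBall_zero_iff.2 <| (pi_norm_le_iff_of_nonneg hC₀).2 fun j ↦ ?_⟩
  simpa only [iteratedDeriv_zero, Real.norm_eq_abs] using hC j k 0 N.zero_le t ht

lemma exists_lipschitz {f : Fin n → ι → ℝ → ℝ} (h : ∀ j, IsBoundedContDiff N (f j)) (hN : 0 < N) :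
    ∃ C, 0 ≤ C ∧ ∀ k, ∀ s ∈ Ioo (-1 : ℝ) 1, ∀ t ∈ Ioo (-1 : ℝ) 1,
      dist (fun j ↦ f j k t) (fun j ↦ f j k s) ≤ C * |t - s| := by
  obtain ⟨C, hC₀, hC⟩ := exists_bound_forall h
  refine ⟨C, hC₀, fun k s hs t ht ↦ (dist_pi_le_iff (by positivity)).2 fun j ↦ ?_⟩
  refine (convex_Ioo (-1 : ℝ) 1).norm_image_sub_le_of_norm_hasDerivWithin_le
    (f' := iteratedDeriv 1 (f j k)) (fun x hx ↦ ?_) (hC j k 1 hN) hs ht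
  simpa only [iteratedDeriv_zero] using
    (hasDerivAt_iteratedDeriv (((h j).contDiffOn k).contDiffAt (isOpen_Ioo.mem_nhds hx))
      hN).hasDerivWithinAt

lemma rescale {f : ι → ℝ → ℝ} (hf : IsBoundedContDiff N f) {d : ℕ} (hd : d ≤ N) {c : ℝ}
    (hc : 0 < c) (hc₁ : c ≤ 1) {ρ : ι → ℝ} (hρ : ∀ k, 0 < ρ k) (hcρ : ∀ k, c * ρ k ≤ 1)
    (hzero : ∃ C, ∀ k, ∀ t ∈ Ioo (-1 : ℝ) 1, |(ρ k)⁻¹ ^ d * f k (c * ρ k * t)| ≤ C) :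
    IsBoundedContDiff N fun k t ↦ (ρ k)⁻¹ ^ d * f k (c * ρ k * t) := by
  have hmaps (k : ι) : MapsTo (c * ρ k * ·) (Ioo (-1 : ℝ) 1) (Ioo (-1) 1) := fun t ht ↦
    mul_mem_Ioo_neg_one_one (mul_pos hc (hρ k)) (hcρ k) ht
  refine of_high_order hd
    (fun k ↦ contDiffOn_const.mul ((hf.contDiffOn k).comp (by fun_prop) (hmaps k))) hzero
    fun i hdi hi ↦ ?_
  obtain ⟨C, hC⟩ := hf.exists_bound i hi
  refine ⟨C, fun k t ht ↦ ?_⟩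
  have hderiv := congrFun (iteratedDeriv_comp_const_add_const_mul (f k) 0 (c * ρ k) i) t
  simp only [zero_add] at hderiv
  have hρk := hρ k
  have hfactor : (ρ k)⁻¹ ^ d * (c * ρ k) ^ i = c ^ d * (c * ρ k) ^ (i - d) := by
    rw [← Nat.add_sub_cancel' hdi, pow_add, mul_pow, inv_pow, Nat.add_sub_cancel_left]
    field_simp
  have hle : c ^ d * (c * ρ k) ^ (i - d) ≤ 1 :=
    mul_le_one₀ (pow_le_one₀ hc.le hc₁) (by positivity) (pow_le_one₀ (by positivity) (hcρ k))
  rw [iteratedDeriv_const_mul_field, hderiv, ← mul_assoc, hfactor, abs_mul,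
    abs_of_nonneg (by positivity)]
  exact (mul_le_of_le_one_left (abs_nonneg _) hle).trans (hC k _ (hmaps k ht))

end IsBoundedContDiff

/-! ### Bronshtein's theorem -/

section RootSlopes

lemma abs_deriv_le_of_frequently {x : ℝ → ℝ} {s x' C : ℝ} (hx : HasDerivAt x x' s)
    (h : ∃ᶠ t in 𝓝[≠] s, |x t| ≤ C * |t - s|) : |x'| ≤ C := by
  have hlim : Tendsto (fun t ↦ |x t| - C * |t - s|) (𝓝[≠] s) (𝓝 (|x s| - C * |s - s|)) :=
    (hx.continuousAt.abs.sub (f := fun t ↦ |x t|) (by fun_prop)).tendsto.mono_left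
      nhdsWithin_le_nhds
  have hzero : x s = 0 := abs_nonpos_iff.1 <| by
    simpa using le_of_tendsto_of_frequently hlim (h.mono fun t ht ↦ sub_nonpos.2 ht)
  refine le_of_tendsto_of_frequently (hasDerivAt_iff_tendsto_slope.1 hx).abs <|
    (h.and_eventually self_mem_nhdsWithin).mono fun t ⟨ht, hne⟩ ↦ ?_
  rwa [slope_def_field, hzero, sub_zero, abs_div, div_le_iff₀ (abs_pos.2 (sub_ne_zero.2 hne))]

/-- `x` is differentiable at `s` with derivative `x'`, and `x t` is a root of `Q t` for `t`
arbitrarily close to `s`. Asking for roots only frequently makes the notion stable under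
factorization of `Q`. -/
structure IsRootSlope (Q : ℝ → ℝ[X]) (s : ℝ) (x : ℝ → ℝ) (x' : ℝ) : Prop where
  frequently_isRoot : ∃ᶠ t in 𝓝[≠] s, (Q t).IsRoot (x t)
  hasDerivAt : HasDerivAt x x' s

namespace IsRootSlope

variable {Q : ℝ → ℝ[X]} {s x' : ℝ} {x : ℝ → ℝ}

lemma or_of_mul {A B : ℝ → ℝ[X]} (h : IsRootSlope Q s x x')
    (hQ : ∀ᶠ t in 𝓝[≠] s, Q t = A t * B t) : IsRootSlope A s x x' ∨ IsRootSlope B s x x' := by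
  have hAB : ∃ᶠ t in 𝓝[≠] s, (A t).IsRoot (x t) ∨ (B t).IsRoot (x t) :=
    (h.frequently_isRoot.and_eventually hQ).mono fun t ⟨hroot, hQt⟩ ↦ root_mul.1 (hQt ▸ hroot)
  exact (frequently_or_distrib.1 hAB).imp (⟨·, h.hasDerivAt⟩) (⟨·, h.hasDerivAt⟩)

lemma comp {φ : ℝ → ℝ} {φ' t : ℝ} (h : IsRootSlope Q (φ t) x x') (hφ : HasDerivAt φ φ' t)
    (hopen : IsOpenEmbedding φ) :
    IsRootSlope (fun u ↦ Q (φ u)) t (fun u ↦ x (φ u)) (x' * φ') := by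
  have hmap : map φ (𝓝[≠] t) = 𝓝[≠] φ t := by
    rw [← hopen.map_nhdsWithin_preimage_eq, ← image_singleton, preimage_compl,
      hopen.injective.preimage_image]
  exact ⟨frequently_map.1 (hmap ▸ h.frequently_isRoot), h.hasDerivAt.comp t hφ⟩

lemma scaleRoots {c : ℝ → ℝ} {c' : ℝ} (h : IsRootSlope Q s x x') (hc : HasDerivAt c c' s) :
    IsRootSlope (fun t ↦ (Q t).scaleRoots (c t)) s (fun t ↦ c t * x t) (c' * x s + c s * x') :=
  ⟨h.frequently_isRoot.mono fun t ht ↦ by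
    rw [IsRoot.def, scaleRoots_eval_mul, ht.eq_zero, mul_zero], hc.mul h.hasDerivAt⟩

lemma sub_rootMean {n : ℕ} {μ : ℝ} (h : IsRootSlope Q s x x')
    (hμ : HasDerivAt (fun t ↦ rootMean n (Q t)) μ s) :
    IsRootSlope (fun t ↦ centered n (Q t)) s (fun t ↦ x t - rootMean n (Q t)) (x' - μ) :=
  ⟨h.frequently_isRoot.mono fun _ ht ↦ isRoot_centered.2 ht, h.hasDerivAt.sub hμ⟩

end IsRootSlope

/-- `L` bounds the slopes of the roots of `Q` at `s`. -/
def RootSlopesLE (Q : ℝ → ℝ[X]) (s L : ℝ) : Prop :=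
  ∀ (x : ℝ → ℝ) (x' : ℝ), IsRootSlope Q s x x' → |x'| ≤ L

namespace RootSlopesLE

variable {Q : ℝ → ℝ[X]} {s L : ℝ}

lemma mono {L' : ℝ} (h : RootSlopesLE Q s L) (hL : L ≤ L') : RootSlopesLE Q s L' :=
  fun x x' hx ↦ (h x x' hx).trans hL

lemma of_root_le (h : ∀ᶠ t in 𝓝[≠] s, ∀ x, (Q t).IsRoot x → |x| ≤ L * |t - s|) :
    RootSlopesLE Q s L := fun x _ hx ↦ abs_deriv_le_of_frequently hx.hasDerivAt <|
  (hx.frequently_isRoot.and_eventually h).mono fun t ht ↦ ht.2 (x t) ht.1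

lemma of_mul {A B : ℝ → ℝ[X]} (hA : RootSlopesLE A s L) (hB : RootSlopesLE B s L)
    (h : ∀ᶠ t in 𝓝[≠] s, Q t = A t * B t) : RootSlopesLE Q s L :=
  fun x x' hx ↦ (hx.or_of_mul h).elim (hA x x') (hB x x')

lemma of_comp_const_add_const_mul {c : ℝ} (hc : 0 < c)
    (h : RootSlopesLE (fun t ↦ Q (s + c * t)) 0 L) : RootSlopesLE Q s (L / c) := by
  intro x x' hx
  have hopen : IsOpenEmbedding fun t ↦ s + c * t :=
    ((Homeomorph.mulLeft₀ c hc.ne').trans (Homeomorph.addLeft s)).isOpenEmbedding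
  have hbound := h _ _ (IsRootSlope.comp (Q := Q) (x := x) (by rwa [mul_zero, add_zero])
    ((hasDerivAt_const_mul c).const_add s) hopen)
  rwa [abs_mul, abs_of_pos hc, ← le_div_iff₀ hc] at hbound

lemma of_scaleRoots {ρ : ℝ} (hρ : 0 < ρ) (h : RootSlopesLE (fun t ↦ (Q t).scaleRoots ρ) s L) :
    RootSlopesLE Q s (L / ρ) := by
  intro x x' hx
  have hbound := h _ _ (hx.scaleRoots (hasDerivAt_const s ρ))
  rwa [zero_mul, zero_add, abs_mul, abs_of_pos hρ, mul_comm, ← le_div_iff₀ hρ] at hbound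

lemma of_centered {n : ℕ} {μ : ℝ} (hμ : HasDerivAt (fun t ↦ rootMean n (Q t)) μ s)
    (h : RootSlopesLE (fun t ↦ centered n (Q t)) s L) : RootSlopesLE Q s (L + |μ|) := by
  intro x x' hx
  linarith [h _ _ (hx.sub_rootMean hμ), abs_sub_abs_le_abs_sub x' μ]

end RootSlopesLE

end RootSlopes

section BoundedFamilies

variable {ι κ : Type*} {n : ℕ} {P : ι → ℝ → ℝ[X]}

/-- A family of curves of hyperbolic polynomials of degree `n`, parametrized by `(-1, 1)`, whose
coefficients are bounded in `C ^ n`. -/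
structure IsBoundedHyperbolicFamily (n : ℕ) (P : ι → ℝ → ℝ[X]) : Prop where
  isHyperbolic (k : ι) (t : ℝ) (ht : t ∈ Ioo (-1 : ℝ) 1) : IsHyperbolic n (P k t)
  isBoundedContDiff_coeff (j : Fin n) : IsBoundedContDiff n fun k t ↦ (P k t).coeff j

lemma eventually_mem_Ioo_neg_one_one : ∀ᶠ t in 𝓝[≠] (0 : ℝ), t ∈ Ioo (-1 : ℝ) 1 :=
  nhdsWithin_le_nhds (Ioo_mem_nhds (by norm_num) (by norm_num))

namespace IsBoundedHyperbolicFamily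

lemma reindex (hP : IsBoundedHyperbolicFamily n P) (e : κ → ι) :
    IsBoundedHyperbolicFamily n fun k ↦ P (e k) :=
  ⟨fun k ↦ hP.isHyperbolic (e k), fun j ↦ (hP.isBoundedContDiff_coeff j).reindex e⟩

lemma scale (hP : IsBoundedHyperbolicFamily n P) {c : ℝ} (hc : 0 < c) (hc₁ : c ≤ 1) :
    IsBoundedHyperbolicFamily n fun k t ↦ P k (c * t) :=
  ⟨fun k _ ht ↦ hP.isHyperbolic k _ (mul_mem_Ioo_neg_one_one hc hc₁ ht),
    fun j ↦ (hP.isBoundedContDiff_coeff j).scale hc hc₁⟩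

lemma factor (hP : IsBoundedHyperbolicFamily n P) {m : ℕ} (hm : m ≤ n)
    {φ : (Fin n → ℝ) → Fin m → ℝ} {W K : Set (Fin n → ℝ)} (hW : IsOpen W)
    (hφ : ContDiffOn ℝ n φ W) (hK : IsCompact K) (hKW : K ⊆ W)
    (hPK : ∀ k, ∀ t ∈ Ioo (-1 : ℝ) 1, toFn n (P k t) ∈ K)
    (hdvd : ∀ v ∈ W, monicOfFn (φ v) ∣ monicOfFn v) :
    IsBoundedHyperbolicFamily m fun k t ↦ monicOfFn (φ (toFn n (P k t))) where
  isHyperbolic k t ht := by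
    have hPt := hP.isHyperbolic k t ht
    have hdvd' := hdvd _ (hKW (hPK k t ht))
    rw [monicOfFn_toFn hPt.monic hPt.natDegree_eq] at hdvd'
    simpa only [natDegree_monicOfFn] using hPt.of_dvd (monic_monicOfFn _) hdvd'
  isBoundedContDiff_coeff j := by
    simp only [← toFn_apply, toFn_monicOfFn]
    exact (IsBoundedContDiff.comp hP.isBoundedContDiff_coeff hW (contDiffOn_pi.1 hφ j) hK hKW
      hPK).mono hm

lemma centered (hP : IsBoundedHyperbolicFamily n P) :
    IsBoundedHyperbolicFamily n fun k t ↦ centered n (P k t) where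
  isHyperbolic k t ht := (hP.isHyperbolic k t ht).centered
  isBoundedContDiff_coeff j := by
    obtain ⟨C, hC⟩ := IsBoundedContDiff.exists_closedBall hP.isBoundedContDiff_coeff
    exact (IsBoundedContDiff.comp hP.isBoundedContDiff_coeff isOpen_univ
      (contDiff_coeff_centered (n := n) j).contDiffOn (isCompact_closedBall 0 C) (subset_univ _)
      hC).congr fun k t ht ↦ by
        have hPt := hP.isHyperbolic k t ht
        exact congrArg (fun p ↦ (_root_.centered n p).coeff j)
          (monicOfFn_toFn hPt.monic hPt.natDegree_eq).symm

lemma rescale (hP : IsBoundedHyperbolicFamily n P) {c B : ℝ} (hc : 0 < c) (hc₁ : c ≤ 1)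
    {ρ : ι → ℝ} (hρ : ∀ k, 0 < ρ k) (hcρ : ∀ k, c * ρ k ≤ 1)
    (hroot : ∀ k, ∀ t ∈ Ioo (-1 : ℝ) 1, ∀ x, (P k (c * ρ k * t)).IsRoot x → |x| ≤ B * ρ k) :
    IsBoundedHyperbolicFamily n fun k t ↦ (P k (c * ρ k * t)).scaleRoots (ρ k)⁻¹ := by
  have hmem (k : ι) {t : ℝ} (ht : t ∈ Ioo (-1 : ℝ) 1) : c * ρ k * t ∈ Ioo (-1 : ℝ) 1 :=
    mul_mem_Ioo_neg_one_one (mul_pos hc (hρ k)) (hcρ k) ht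
  have hcoeff (j : Fin n) (k : ι) : EqOn (fun t ↦ ((P k (c * ρ k * t)).scaleRoots (ρ k)⁻¹).coeff j)
      (fun t ↦ (ρ k)⁻¹ ^ (n - j : ℕ) * (P k (c * ρ k * t)).coeff j) (Ioo (-1) 1) := fun t ht ↦ by
    simp only [coeff_scaleRoots, (hP.isHyperbolic k _ (hmem k ht)).natDegree_eq]
    exact mul_comm _ _
  refine ⟨fun k t ht ↦ ?_, fun j ↦ ((hP.isBoundedContDiff_coeff j).rescale (Nat.sub_le n j) hc hc₁
    hρ hcρ ?_).congr (hcoeff j)⟩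
  · obtain ⟨y, hy⟩ := hP.isHyperbolic k _ (hmem k ht)
    exact ⟨_, by rw [hy, scaleRoots_polyOfRoots]⟩
  · obtain ⟨C, hC⟩ := exists_bound_coeff_polyOfRoots n B
    refine ⟨C, fun k t ht ↦ ?_⟩
    obtain ⟨y, hy⟩ := hP.isHyperbolic k _ (hmem k ht)
    have hroots (i : Fin n) : |(ρ k)⁻¹ * y i| ≤ B := by
      rw [abs_mul, abs_of_pos (inv_pos.2 (hρ k)), inv_mul_le_iff₀ (hρ k), mul_comm]
      exact hroot k t ht (y i) (hy ▸ isRoot_polyOfRoots.2 ⟨i, rfl⟩)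
    have hbound := hC _ hroots j
    rw [← scaleRoots_polyOfRoots, ← hy] at hbound
    exact (congrArg abs (hcoeff j k ht)).ge.trans hbound

end IsBoundedHyperbolicFamily

end BoundedFamilies

section CenteredRoots

lemma le_of_nonneg_of_abs_deriv_deriv_le {F F' F'' : ℝ → ℝ} {A : ℝ}
    (hF : ∀ t ∈ Ioo (-1 : ℝ) 1, HasDerivAt F (F' t) t)
    (hF' : ∀ t ∈ Ioo (-1 : ℝ) 1, HasDerivAt F' (F'' t) t)
    (hF'' : ∀ t ∈ Ioo (-1 : ℝ) 1, |F'' t| ≤ A) (hnonneg : ∀ t ∈ Ioo (-1 : ℝ) 1, 0 ≤ F t)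
    {t : ℝ} (ht : t ∈ Ioo (-1 : ℝ) 1) : F t ≤ 2 * F 0 + 2 * A * t ^ 2 := by
  have htaylor {u : ℝ} (hu : u ∈ Ioo (-1 : ℝ) 1) : |F u - F 0 - F' 0 * u| ≤ A * u ^ 2 := by
    have hmem {v : ℝ} (hv : v ∈ Icc (-|u|) |u|) : v ∈ Ioo (-1 : ℝ) 1 :=
      abs_lt.1 ((abs_le.2 hv).trans_lt (abs_lt.2 hu))
    have hderiv (v : ℝ) (hv : v ∈ Icc (-|u|) |u|) : ‖F' v - F' 0‖ ≤ A * |u| :=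
      ((convex_Ioo (-1 : ℝ) 1).norm_image_sub_le_of_norm_hasDerivWithin_le
        (fun w hw ↦ (hF' w hw).hasDerivWithinAt) hF'' (by norm_num) (hmem hv)).trans <|
        mul_le_mul_of_nonneg_left (by simpa using abs_le.2 hv) ((abs_nonneg _).trans (hF'' u hu))
    have hmvt := (convex_Icc (-|u|) |u|).norm_image_sub_le_of_norm_hasDerivWithin_le
      (f := fun v ↦ F v - F' 0 * v) (x := 0) (y := u)
      (fun v hv ↦ ((hF v (hmem hv)).sub (hasDerivAt_const_mul (F' 0))).hasDerivWithinAt) hderiv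
      (by simp) ⟨neg_abs_le u, le_abs_self u⟩
    calc |F u - F 0 - F' 0 * u| = ‖F u - F' 0 * u - (F 0 - F' 0 * 0)‖ := by
          rw [Real.norm_eq_abs]; ring_nf
      _ ≤ A * |u| * |u - 0| := hmvt
      _ = A * u ^ 2 := by rw [sub_zero, mul_assoc, abs_mul_abs_self, sq]
  have hneg : -t ∈ Ioo (-1 : ℝ) 1 := ⟨by linarith [ht.2], by linarith [ht.1]⟩
  linarith [(abs_le.1 (htaylor ht)).2, (abs_le.1 (htaylor hneg)).2, hnonneg _ hneg, neg_sq t]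

lemma sum_sq_eq_of_coeff_eq_zero {m : ℕ} {p : ℝ[X]} {y : Fin (m + 2) → ℝ} (hy : p = polyOfRoots y)
    (hp : p.coeff (m + 1) = 0) : ∑ i, y i ^ 2 = -2 * p.coeff m := by
  have h := sum_sq_roots_eq y le_add_self
  rw [← hy, show m + 2 - 1 = m + 1 from rfl, hp, Nat.add_sub_cancel] at h
  rw [h]
  ring

lemma IsHyperbolic.sq_root_le {m : ℕ} {p : ℝ[X]} (h : IsHyperbolic (m + 2) p)
    (hp : p.coeff (m + 1) = 0) {x : ℝ} (hx : p.IsRoot x) : x ^ 2 ≤ -2 * p.coeff m := by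
  obtain ⟨y, hy⟩ := h
  obtain ⟨i, rfl⟩ := isRoot_polyOfRoots.1 (hy ▸ hx)
  rw [← sum_sq_eq_of_coeff_eq_zero hy hp]
  exact Finset.single_le_sum (f := fun i ↦ y i ^ 2) (fun j _ ↦ sq_nonneg _) (Finset.mem_univ i)

lemma exists_ne_of_sum_eq_zero {n : ℕ} {y : Fin n → ℝ} (hsum : ∑ i, y i = 0)
    (hsq : ∑ i, y i ^ 2 ≠ 0) : ∃ i j, y i ≠ y j := by
  contrapose! hsq
  refine Finset.sum_eq_zero fun i _ ↦ ?_
  have hmul : n * y i = 0 := by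
    rw [← hsum, Finset.sum_congr rfl fun j _ ↦ hsq j i, Finset.sum_const, Finset.card_univ,
      Fintype.card_fin, nsmul_eq_mul]
  rw [(mul_eq_zero.1 hmul).resolve_left (mod_cast i.pos.ne'), zero_pow two_ne_zero]

lemma isCompact_sum_eq_zero_sum_sq_eq_one (n : ℕ) :
    IsCompact {y : Fin n → ℝ | ∑ i, y i = 0 ∧ ∑ i, y i ^ 2 = 1} := by
  have hcube : IsCompact (univ.pi fun _ : Fin n ↦ Icc (-1 : ℝ) 1) :=
    isCompact_univ_pi fun _ ↦ isCompact_Icc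
  refine hcube.of_isClosed_subset
    ((isClosed_eq (by fun_prop) continuous_const).inter
      (isClosed_eq (by fun_prop) continuous_const)) fun y hy i _ ↦ ?_
  have hle : y i ^ 2 ≤ 1 := hy.2 ▸
    Finset.single_le_sum (f := fun i ↦ y i ^ 2) (fun j _ ↦ sq_nonneg _) (Finset.mem_univ i)
  exact abs_le.1 ((sq_le_one_iff_abs_le_one _).1 hle)

end CenteredRoots

section Bronshtein

universe u

/-- Bronshtein's theorem in degree `n`, the statement of the induction. -/
def HasBoundedRootSlopes (n : ℕ) : Prop :=
  ∀ (ι : Type u) (P : ι → ℝ → ℝ[X]), IsBoundedHyperbolicFamily n P →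
    ∃ L, ∀ k, RootSlopesLE (P k) 0 L

variable {ι : Type u} {n m : ℕ} {P : ι → ℝ → ℝ[X]}

lemma exists_rootSlopesLE_of_splitting (IH : ∀ k < n, HasBoundedRootSlopes.{u} k)
    (hP : IsBoundedHyperbolicFamily n P) {k l : ℕ} (hk : k < n) (hl : l < n)
    {φ : (Fin n → ℝ) → Fin k → ℝ} {ψ : (Fin n → ℝ) → Fin l → ℝ} {W K : Set (Fin n → ℝ)}
    (hW : IsOpen W) (hφ : ContDiffOn ℝ n φ W) (hψ : ContDiffOn ℝ n ψ W)
    (hsplit : ∀ v ∈ W, monicOfFn v = monicOfFn (φ v) * monicOfFn (ψ v)) (hK : IsCompact K)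
    (hKW : K ⊆ W) (hPK : ∀ i, ∀ t ∈ Ioo (-1 : ℝ) 1, toFn n (P i t) ∈ K) :
    ∃ L, ∀ i, RootSlopesLE (P i) 0 L := by
  obtain ⟨L₁, hL₁⟩ := IH k hk ι _ <| hP.factor hk.le hW hφ hK hKW hPK fun v hv ↦
    ⟨_, hsplit v hv⟩
  obtain ⟨L₂, hL₂⟩ := IH l hl ι _ <| hP.factor hl.le hW hψ hK hKW hPK fun v hv ↦
    ⟨_, (hsplit v hv).trans (mul_comm _ _)⟩
  refine ⟨max L₁ L₂, fun i ↦ ((hL₁ i).mono (le_max_left _ _)).of_mul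
    ((hL₂ i).mono (le_max_right _ _)) ?_⟩
  filter_upwards [eventually_mem_Ioo_neg_one_one] with t ht
  have hPt := hP.isHyperbolic i t ht
  rw [← hsplit _ (hKW (hPK i t ht)), monicOfFn_toFn hPt.monic hPt.natDegree_eq]

lemma exists_nhds_rootSlopesLE (IH : ∀ k < n, HasBoundedRootSlopes.{u} k)
    (hP : IsBoundedHyperbolicFamily n P) {y : Fin n → ℝ} {i j : Fin n} (hij : y i ≠ y j) :
    ∃ U ∈ 𝓝 y, ∃ L, ∀ k, (∃ v ∈ U, P k 0 = polyOfRoots v) → RootSlopesLE (P k) 0 L := by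
  obtain ⟨k, l, -, hk, hl, φ, ψ, W, hW, hyW, hφ, hψ, hsplit⟩ := exists_contDiffOn_splitting hij n
  obtain ⟨δ, hδ, hδW⟩ := Metric.nhds_basis_closedBall.mem_iff.1 (hW.mem_nhds hyW)
  obtain ⟨C, hC₀, hC⟩ := IsBoundedContDiff.exists_lipschitz hP.isBoundedContDiff_coeff i.pos
  obtain ⟨c, hc, hc₁, hcC⟩ : ∃ c : ℝ, 0 < c ∧ c ≤ 1 ∧ C * c ≤ δ / 2 := by
    refine ⟨min 1 (δ / 2 / (C + 1)), by positivity, min_le_left _ _, ?_⟩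
    calc C * min 1 (δ / 2 / (C + 1)) ≤ (C + 1) * (δ / 2 / (C + 1)) := by
          gcongr
          · linarith
          · exact min_le_right _ _
      _ = δ / 2 := by field_simp
  set U := (fun v ↦ toFn n (polyOfRoots v)) ⁻¹' Metric.ball (toFn n (polyOfRoots y)) (δ / 2)
  have hU : U ∈ 𝓝 y := (continuous_coeff_polyOfRoots n).continuousAt.preimage_mem_nhds
    (Metric.ball_mem_nhds _ (half_pos hδ))
  let κ := {k : ι // ∃ v ∈ U, P k 0 = polyOfRoots v}
  have hball (k : κ) (t : ℝ) (ht : t ∈ Ioo (-1 : ℝ) 1) :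
      toFn n (P k (c * t)) ∈ Metric.closedBall (toFn n (polyOfRoots y)) δ := by
    obtain ⟨k, v, hv, hkv⟩ := k
    have hct : |c * t - 0| ≤ c := by
      rw [sub_zero, abs_mul, abs_of_pos hc]
      exact mul_le_of_le_one_right hc.le (abs_le.2 ⟨ht.1.le, ht.2.le⟩)
    calc dist (toFn n (P k (c * t))) (toFn n (polyOfRoots y))
        ≤ dist (toFn n (P k (c * t))) (toFn n (P k 0)) +
          dist (toFn n (polyOfRoots v)) (toFn n (polyOfRoots y)) := hkv ▸ dist_triangle _ _ _
      _ ≤ C * c + δ / 2 := add_le_add ((hC k 0 (by norm_num) (c * t)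
          (mul_mem_Ioo_neg_one_one hc hc₁ ht)).trans (by gcongr)) hv.le
      _ ≤ δ := by linarith
  obtain ⟨L, hL⟩ := exists_rootSlopesLE_of_splitting IH
    ((hP.scale hc hc₁).reindex (Subtype.val : κ → ι)) hk hl hW hφ hψ hsplit
    (isCompact_closedBall _ _) hδW hball
  exact ⟨U, hU, L / c, fun k hk ↦ RootSlopesLE.of_comp_const_add_const_mul hc (by
    simpa only [zero_add] using hL ⟨k, hk⟩)⟩

lemma exists_rootSlopesLE_of_isCompact (IH : ∀ k < n, HasBoundedRootSlopes.{u} k)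
    (hP : IsBoundedHyperbolicFamily n P) {K : Set (Fin n → ℝ)} (hK : IsCompact K)
    (hne : ∀ y ∈ K, ∃ i j, y i ≠ y j) (hPK : ∀ k, ∃ y ∈ K, P k 0 = polyOfRoots y) :
    ∃ L, ∀ k, RootSlopesLE (P k) 0 L := by
  suffices h : ∃ L, ∀ k, (∃ y ∈ K, P k 0 = polyOfRoots y) → RootSlopesLE (P k) 0 L from
    h.imp fun L hL k ↦ hL k (hPK k)
  refine hK.induction_on
    (p := fun S ↦ ∃ L, ∀ k, (∃ y ∈ S, P k 0 = polyOfRoots y) → RootSlopesLE (P k) 0 L) ?_ ?_ ?_ ?_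
  · exact ⟨0, fun k ⟨_, hy, _⟩ ↦ hy.elim⟩
  · exact fun S T hST ⟨L, hL⟩ ↦ ⟨L, fun k ⟨y, hy, hyk⟩ ↦ hL k ⟨y, hST hy, hyk⟩⟩
  · rintro S T ⟨L₁, hL₁⟩ ⟨L₂, hL₂⟩
    refine ⟨max L₁ L₂, fun k ⟨y, hy, hyk⟩ ↦ hy.elim (fun hS ↦ ?_) fun hT ↦ ?_⟩
    · exact (hL₁ k ⟨y, hS, hyk⟩).mono (le_max_left _ _)
    · exact (hL₂ k ⟨y, hT, hyk⟩).mono (le_max_right _ _)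
  · intro y hy
    obtain ⟨i, j, hij⟩ := hne y hy
    obtain ⟨U, hU, hL⟩ := exists_nhds_rootSlopesLE IH hP hij
    exact ⟨U, mem_nhdsWithin_of_mem_nhds hU, hL⟩

lemma IsBoundedHyperbolicFamily.exists_root_growth (hP : IsBoundedHyperbolicFamily (m + 2) P)
    (hzero : ∀ k, ∀ t ∈ Ioo (-1 : ℝ) 1, (P k t).coeff (m + 1) = 0) :
    ∃ (A : ℝ) (r : ι → ℝ), 1 ≤ A ∧ ∀ k, 0 ≤ r k ∧ r k ≤ A ∧ -2 * (P k 0).coeff m = r k ^ 2 ∧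
      ∀ t ∈ Ioo (-1 : ℝ) 1, ∀ x, (P k t).IsRoot x → x ^ 2 ≤ 2 * r k ^ 2 + A * t ^ 2 := by
  obtain ⟨C, hC₀, hC⟩ := IsBoundedContDiff.exists_bound_forall hP.isBoundedContDiff_coeff
  have h₀ : (0 : ℝ) ∈ Ioo (-1 : ℝ) 1 := by norm_num
  have hnonneg (k : ι) (t : ℝ) (ht : t ∈ Ioo (-1 : ℝ) 1) : 0 ≤ -2 * (P k t).coeff m := by
    obtain ⟨y, hy⟩ := hP.isHyperbolic k t ht
    exact sum_sq_eq_of_coeff_eq_zero hy (hzero k t ht) ▸ Finset.sum_nonneg fun i _ ↦ sq_nonneg _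
  have hgrowth (k : ι) (t : ℝ) (ht : t ∈ Ioo (-1 : ℝ) 1) :
      -2 * (P k t).coeff m ≤ 2 * (-2 * (P k 0).coeff m) + 2 * (2 * C) * t ^ 2 := by
    have hderiv (i : ℕ) (hi : i < m + 2) {u : ℝ} (hu : u ∈ Ioo (-1 : ℝ) 1) :=
      (hasDerivAt_iteratedDeriv (((hP.isBoundedContDiff_coeff ⟨m, by lia⟩).contDiffOn k).contDiffAt
        (isOpen_Ioo.mem_nhds hu)) hi).const_mul (-2)
    refine le_of_nonneg_of_abs_deriv_deriv_le
      (fun u hu ↦ by simpa only [iteratedDeriv_zero] using hderiv 0 (by lia) hu)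
      (fun u hu ↦ hderiv 1 (by lia) hu) (fun u hu ↦ ?_) (hnonneg k) ht
    rw [abs_mul, abs_neg, abs_two]
    exact mul_le_mul_of_nonneg_left (hC ⟨m, by lia⟩ k 2 (by lia) u hu) zero_le_two
  have hr (k : ι) : √(-2 * (P k 0).coeff m) ^ 2 = -2 * (P k 0).coeff m :=
    Real.sq_sqrt (hnonneg k 0 h₀)
  refine ⟨4 * C + 1, fun k ↦ √(-2 * (P k 0).coeff m), by linarith,
    fun k ↦ ⟨Real.sqrt_nonneg _, ?_, (hr k).symm, fun t ht x hx ↦ ?_⟩⟩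
  · have hcoeff := hC ⟨m, by lia⟩ k 0 (by lia) 0 h₀
    rw [iteratedDeriv_zero] at hcoeff
    exact Real.sqrt_le_iff.2 ⟨by linarith, by nlinarith [(abs_le.1 hcoeff).1]⟩
  · rw [hr]
    have hroot := (hP.isHyperbolic k t ht).sq_root_le (hzero k t ht) hx
    linarith [hgrowth k t ht, sq_nonneg t]

/-- The family is rescaled by the size `ρ k` of its roots at `0`, so that these lie on a sphere. -/
lemma exists_rootSlopesLE_of_coeff_zero_pos (IH : ∀ k < m + 2, HasBoundedRootSlopes.{u} k)
    (hP : IsBoundedHyperbolicFamily (m + 2) P) (hzero : ∀ k, (P k 0).coeff (m + 1) = 0) {A : ℝ}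
    {ρ : ι → ℝ} (hA : 1 ≤ A) (hρ : ∀ k, 0 < ρ k) (hρA : ∀ k, ρ k ≤ A)
    (hcoeff : ∀ k, -2 * (P k 0).coeff m = ρ k ^ 2)
    (hroot : ∀ k, ∀ t ∈ Ioo (-1 : ℝ) 1, ∀ x, (P k t).IsRoot x → x ^ 2 ≤ 2 * ρ k ^ 2 + A * t ^ 2) :
    ∃ L, ∀ k, RootSlopesLE (P k) 0 L := by
  have hA₀ : 0 < A := one_pos.trans_le hA
  have hcρ (k : ι) : A⁻¹ * ρ k ≤ 1 := (inv_mul_le_one₀ hA₀).2 (hρA k)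
  have hQ := hP.rescale (B := 2) (inv_pos.2 hA₀) (inv_le_one_of_one_le₀ hA) hρ hcρ
    fun k t ht x hx ↦ by
      have ht₁ : t ^ 2 ≤ 1 := (sq_le_one_iff_abs_le_one t).2 (abs_le.2 ⟨ht.1.le, ht.2.le⟩)
      have hρk := hρ k
      refine abs_le_of_sq_le_sq ?_ (by positivity)
      calc x ^ 2 ≤ 2 * ρ k ^ 2 + A * (A⁻¹ * ρ k * t) ^ 2 := hroot k _
            (mul_mem_Ioo_neg_one_one (by positivity) (hcρ k) ht) x hx
        _ = 2 * ρ k ^ 2 + A⁻¹ * ρ k ^ 2 * t ^ 2 := by field_simp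
        _ ≤ 2 * ρ k ^ 2 + 1 * ρ k ^ 2 * 1 := by gcongr; exact inv_le_one_of_one_le₀ hA
        _ ≤ (2 * ρ k) ^ 2 := by nlinarith [sq_nonneg (ρ k)]
  obtain ⟨L, hL⟩ := exists_rootSlopesLE_of_isCompact IH hQ
    (isCompact_sum_eq_zero_sum_sq_eq_one (m + 2))
    (fun y hy ↦ exists_ne_of_sum_eq_zero hy.1 (hy.2 ▸ one_ne_zero)) fun k ↦ by
      obtain ⟨y, hy⟩ := hP.isHyperbolic k 0 (by norm_num)
      refine ⟨fun i ↦ (ρ k)⁻¹ * y i, ⟨?_, ?_⟩, by rw [mul_zero, hy, scaleRoots_polyOfRoots]⟩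
      · have hsum := coeff_polyOfRoots_pred y (Nat.le_add_left 1 (m + 1))
        rw [← hy, show m + 2 - 1 = m + 1 from rfl, hzero, eq_comm, neg_eq_zero] at hsum
        rw [← Finset.mul_sum, hsum, mul_zero]
      · simp only [mul_pow]
        rw [← Finset.mul_sum, sum_sq_eq_of_coeff_eq_zero hy (hzero k), hcoeff, inv_pow,
          inv_mul_cancel₀ (pow_pos (hρ k) 2).ne']
  refine ⟨L / A⁻¹, fun k ↦ ?_⟩
  have hslope := RootSlopesLE.of_comp_const_add_const_mul (Q := P k) (s := 0)
    (L := L / (ρ k)⁻¹) (mul_pos (inv_pos.2 hA₀) (hρ k)) (by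
    simpa only [zero_add] using (hL k).of_scaleRoots (inv_pos.2 (hρ k)))
  refine hslope.mono (le_of_eq ?_)
  have hρk := hρ k
  field_simp

lemma exists_rootSlopesLE_of_coeff_zero (IH : ∀ k < m + 2, HasBoundedRootSlopes.{u} k)
    (hP : IsBoundedHyperbolicFamily (m + 2) P)
    (hzero : ∀ k, ∀ t ∈ Ioo (-1 : ℝ) 1, (P k t).coeff (m + 1) = 0) :
    ∃ L, ∀ k, RootSlopesLE (P k) 0 L := by
  obtain ⟨A, r, hA, h⟩ := hP.exists_root_growth hzero
  choose hr hrA hcoeff hroot using h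
  obtain ⟨L, hL⟩ := exists_rootSlopesLE_of_coeff_zero_pos IH
    (hP.reindex (Subtype.val : {k // 0 < r k} → ι)) (fun k ↦ hzero k 0 (by norm_num)) hA
    (fun k ↦ k.2) (fun k ↦ hrA k) (fun k ↦ hcoeff k) (fun k ↦ hroot k)
  refine ⟨max L A, fun k ↦ (hr k).lt_or_eq.elim
    (fun hk ↦ (hL ⟨k, hk⟩).mono (le_max_left _ _)) fun hk ↦ ?_⟩
  refine RootSlopesLE.mono (RootSlopesLE.of_root_le ?_) (le_max_right L A)
  filter_upwards [eventually_mem_Ioo_neg_one_one] with t ht x hx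
  have hroot' := hroot k t ht x hx
  rw [← hk] at hroot'
  rw [sub_zero]
  refine abs_le_of_sq_le_sq ?_ (by positivity)
  rw [mul_pow, sq_abs]
  nlinarith [sq_nonneg t, mul_nonneg (sub_nonneg.2 hA) (sq_nonneg t)]

lemma IsBoundedHyperbolicFamily.exists_rootSlopesLE_of_centered
    (hP : IsBoundedHyperbolicFamily n P)
    (h : ∃ L, ∀ k, RootSlopesLE (fun t ↦ _root_.centered n (P k t)) 0 L) (hn : 1 ≤ n) :
    ∃ L, ∀ k, RootSlopesLE (P k) 0 L := by
  obtain ⟨L, hL⟩ := h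
  have hcoeff := hP.isBoundedContDiff_coeff ⟨n - 1, by lia⟩
  obtain ⟨C, hC⟩ := hcoeff.exists_bound 1 hn
  refine ⟨L + C, fun k ↦ ?_⟩
  have h₀ : (0 : ℝ) ∈ Ioo (-1 : ℝ) 1 := by norm_num
  have hderiv := hasDerivAt_iteratedDeriv
    ((hcoeff.contDiffOn k).contDiffAt (isOpen_Ioo.mem_nhds h₀)) hn
  rw [iteratedDeriv_zero] at hderiv
  refine ((hL k).of_centered (hderiv.neg.div_const n)).mono (add_le_add_right ?_ L)
  rw [abs_div, abs_neg, Nat.abs_cast]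
  exact (div_le_self (abs_nonneg _) (mod_cast hn)).trans (hC k 0 h₀)

theorem hasBoundedRootSlopes (n : ℕ) : HasBoundedRootSlopes.{u} n := by
  induction n using Nat.strong_induction_on with
  | _ n IH =>
  intro ι P hP
  match n with
  | 0 =>
    refine ⟨0, fun k ↦ RootSlopesLE.of_root_le ?_⟩
    filter_upwards [eventually_mem_Ioo_neg_one_one] with t ht x hx
    obtain ⟨y, hy⟩ := hP.isHyperbolic k t ht
    exact (isRoot_polyOfRoots.1 (hy ▸ hx)).elim fun i _ ↦ i.elim0
  | 1 =>
    refine hP.exists_rootSlopesLE_of_centered ⟨0, fun k ↦ RootSlopesLE.of_root_le ?_⟩ le_rfl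
    filter_upwards [eventually_mem_Ioo_neg_one_one] with t ht x hx
    have hsum := (hP.isHyperbolic k t ht).coeff_centered_pred le_rfl
    obtain ⟨y, hy⟩ := (hP.isHyperbolic k t ht).centered
    obtain ⟨i, rfl⟩ := isRoot_polyOfRoots.1 (hy ▸ hx)
    rw [hy, coeff_polyOfRoots_pred y le_rfl, Fin.sum_univ_one, neg_eq_zero] at hsum
    rw [Subsingleton.elim i 0, hsum, abs_zero, zero_mul]
  | m + 2 =>
    exact hP.exists_rootSlopesLE_of_centered (exists_rootSlopesLE_of_coeff_zero IH hP.centered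
      fun k t ht ↦ (hP.isHyperbolic k t ht).coeff_centered_pred (by lia)) (by lia)

end Bronshtein

/-! ### Coefficients in the logarithmic variable -/

section LogarithmicVariable

variable {f : ℝ → ℝ}

lemma tendsto_div_pow_of_iteratedDeriv_eq_zero {k : ℕ} (hf : ContDiffAt ℝ k f 0)
    (h : ∀ i < k, iteratedDeriv i f 0 = 0) :
    Tendsto (fun s ↦ f s / s ^ k) (𝓝[≠] 0) (𝓝 (iteratedDeriv k f 0 / k.factorial)) := by
  induction k generalizing f with
  | zero => simpa using hf.continuousAt.tendsto.mono_left nhdsWithin_le_nhds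
  | succ k ih =>
    have hf' : ContDiffAt ℝ k (deriv f) 0 := by
      simpa only [iteratedDeriv_one] using contDiffAt_iteratedDeriv hf le_rfl
    have hlim := (ih hf' fun i hi ↦ by
      simpa only [iteratedDeriv_succ'] using h (i + 1) (by lia)).div_const (k + 1 : ℝ)
    have hdiff : ∀ᶠ s in 𝓝[≠] 0, DifferentiableAt ℝ f s :=
      ((hf.eventually (by simp)).mono fun s hs ↦ hs.differentiableAt (by simp)).filter_mono
        nhdsWithin_le_nhds
    have hzero : f 0 = 0 := by simpa only [iteratedDeriv_zero] using h 0 k.succ_pos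
    refine HasDerivAt.lhopital_zero_nhdsNE (f' := deriv f) (g' := fun s ↦ (k + 1 : ℝ) * s ^ k)
      (hdiff.mono fun s hs ↦ hs.hasDerivAt)
      (.of_forall fun s ↦ by simpa using hasDerivAt_pow (k + 1) s) ?_ ?_ ?_ ?_
    · filter_upwards [self_mem_nhdsWithin] with s (hs : s ≠ 0)
      positivity
    · exact (hzero ▸ hf.continuousAt.tendsto).mono_left nhdsWithin_le_nhds
    · exact (continuous_pow (k + 1)).continuousWithinAt.tendsto.trans_eq (by simp)
    · rw [iteratedDeriv_succ', Nat.factorial_succ, mul_comm (k + 1), Nat.cast_mul, Nat.cast_succ,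
        ← div_div]
      simpa only [div_div, mul_comm] using hlim

lemma iteratedDeriv_eq_zero_of_isBigO_pow {p : ℕ} (hf : ContDiffAt ℝ p f 0)
    (hO : f =O[𝓝 0] fun s ↦ s ^ p) : ∀ i < p, iteratedDeriv i f 0 = 0 := by
  intro i
  induction i using Nat.strong_induction_on with
  | _ i ih =>
  intro hi
  have hlim := tendsto_div_pow_of_iteratedDeriv_eq_zero (hf.of_le (mod_cast hi.le))
    fun l hl ↦ ih l hl (hl.trans hi)
  have hO' : (fun s ↦ f s / s ^ i) =O[𝓝[≠] 0] fun s ↦ s ^ (p - i) := by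
    refine ((hO.mono nhdsWithin_le_nhds).mul
      (Asymptotics.isBigO_refl (fun s : ℝ ↦ (s ^ i)⁻¹) (𝓝[≠] 0))).congr'
      (.of_forall fun s ↦ (div_eq_mul_inv _ _).symm) ?_
    filter_upwards [self_mem_nhdsWithin] with s hs
    exact (pow_sub₀ s hs hi.le).symm
  have hpow : Tendsto (fun s : ℝ ↦ s ^ (p - i)) (𝓝[≠] 0) (𝓝 0) :=
    (continuous_pow (p - i)).continuousWithinAt.tendsto.trans_eq (by
      rw [zero_pow (Nat.sub_pos_of_lt hi).ne'])
  exact (div_eq_zero_iff.1 (tendsto_nhds_unique hlim (hO'.trans_tendsto hpow))).resolve_right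
    (mod_cast i.factorial_ne_zero)

variable {N j : ℕ}

lemma exists_tendsto_exp_mul_iteratedDeriv (hj : j ≤ N) (hf : ContDiffAt ℝ N f 0)
    (hO : f =O[𝓝 0] fun s ↦ s ^ j) {l : ℕ} (hl : l ≤ N) :
    ∃ c, Tendsto (fun u ↦ Real.exp ((l - j) * u) * iteratedDeriv l f (Real.exp u)) atBot
      (𝓝 c) := by
  obtain hjl | hlj := le_or_gt j l
  · have hcont := (contDiffAt_iteratedDeriv (m := 0) (i := l) hf (by lia)).continuousAt
    refine ⟨_, (((continuous_pow (l - j)).tendsto 0).mul hcont.tendsto).comp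
      Real.tendsto_exp_atBot |>.congr fun u ↦ ?_⟩
    rw [Function.comp_apply, ← Real.exp_nat_mul, Nat.cast_sub hjl]
  · have hlim := tendsto_div_pow_of_iteratedDeriv_eq_zero (f := iteratedDeriv l f) (k := j - l)
      (contDiffAt_iteratedDeriv hf (by lia)) fun i hi ↦ by
        have hzero := iteratedDeriv_eq_zero_of_isBigO_pow (hf.of_le (mod_cast hj)) hO (i + l)
          (by lia)
        rwa [iteratedDeriv_eq_iterate, Function.iterate_add_apply, ← iteratedDeriv_eq_iterate,
          ← iteratedDeriv_eq_iterate] at hzero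
    have hexp : Tendsto Real.exp atBot (𝓝[≠] 0) := tendsto_nhdsWithin_iff.2
      ⟨Real.tendsto_exp_atBot, .of_forall fun u ↦ (Real.exp_pos u).ne'⟩
    refine ⟨_, (hlim.comp hexp).congr fun u ↦ ?_⟩
    rw [Function.comp_apply, ← Real.exp_nat_mul, Nat.cast_sub hlj.le, div_eq_inv_mul,
      ← Real.exp_neg]
    ring_nf

lemma eventually_eventually_nhds_atBot {p : ℝ → Prop} (h : ∀ᶠ u in atBot, p u) :
    ∀ᶠ u in atBot, ∀ᶠ v in 𝓝 u, p v := by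
  obtain ⟨a, ha⟩ := eventually_atBot.1 h
  filter_upwards [eventually_lt_atBot a] with u hu
  filter_upwards [Iio_mem_nhds hu] with v hv using ha v hv.le

lemma eventually_contDiffAt_exp (hf : ContDiffAt ℝ N f 0) :
    ∀ᶠ u in atBot, ContDiffAt ℝ N f (Real.exp u) :=
  Real.tendsto_exp_atBot.eventually (hf.eventually (by simp))

lemma contDiffAt_exp_mul_iteratedDeriv {i l : ℕ} {u : ℝ} (hf : ContDiffAt ℝ N f (Real.exp u))
    (hil : i + l ≤ N) (c : ℝ) :
    ContDiffAt ℝ i (fun u ↦ Real.exp (c * u) * iteratedDeriv l f (Real.exp u)) u :=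
  (contDiffAt_const.mul contDiffAt_id).exp.mul
    ((contDiffAt_iteratedDeriv hf hil).comp u Real.contDiff_exp.contDiffAt)

lemma exists_tendsto_iteratedDeriv_exp_mul (hj : j ≤ N) (hf : ContDiffAt ℝ N f 0)
    (hO : f =O[𝓝 0] fun s ↦ s ^ j) (i l : ℕ) (hil : i + l ≤ N) :
    ∃ c, Tendsto (iteratedDeriv i fun u ↦
      Real.exp ((l - j) * u) * iteratedDeriv l f (Real.exp u)) atBot (𝓝 c) := by
  induction i generalizing l with
  | zero =>
    simpa only [iteratedDeriv_zero] using exists_tendsto_exp_mul_iteratedDeriv hj hf hO (by lia)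
  | succ i ih =>
    obtain ⟨c, hc⟩ := ih l (by lia)
    obtain ⟨d, hd⟩ := ih (l + 1) (by lia)
    refine ⟨_, ((hc.const_mul (l - j : ℝ)).add hd).congr' ?_⟩
    have hfexp := eventually_contDiffAt_exp hf
    filter_upwards [hfexp, eventually_eventually_nhds_atBot hfexp] with u hu hu'
    have hsmooth (k : ℕ) (hk : i + k ≤ N) := contDiffAt_exp_mul_iteratedDeriv hu hk (k - j)
    rw [← iteratedDeriv_const_mul_field, ← iteratedDeriv_fun_add
      (contDiffAt_const.mul (hsmooth l (by lia))) (hsmooth (l + 1) (by lia)),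
      iteratedDeriv_succ' (n := i)]
    refine Eq.symm <| EventuallyEq.iteratedDeriv_eq i ?_
    filter_upwards [hu'] with v hv
    have hderiv := ((hasDerivAt_const_mul (l - j : ℝ)).exp).mul
      ((hasDerivAt_iteratedDeriv (i := l) hv (by lia)).comp v (Real.hasDerivAt_exp v))
    refine (hderiv.congr_deriv ?_).deriv
    rw [Nat.cast_succ, show (l + 1 - j : ℝ) * v = (l - j) * v + v by ring, Real.exp_add]
    simp only [Function.comp_apply]
    ring

/-- L'Hôpital's rule for `exp u * g u / exp u`. -/
lemma eq_zero_of_tendsto_of_tendsto_deriv {g g' : ℝ → ℝ} {c c' : ℝ}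
    (hderiv : ∀ᶠ u in atBot, HasDerivAt g (g' u) u) (hg : Tendsto g atBot (𝓝 c))
    (hg' : Tendsto g' atBot (𝓝 c')) : c' = 0 := by
  have hlim : Tendsto (fun u ↦ Real.exp u * g u / Real.exp u) atBot (𝓝 (c + c')) := by
    refine HasDerivAt.lhopital_zero_atBot
      (hderiv.mono fun u hu ↦ (Real.hasDerivAt_exp u).mul hu)
      (.of_forall Real.hasDerivAt_exp) (.of_forall fun u ↦ (Real.exp_pos u).ne')
      (by simpa only [zero_mul] using Real.tendsto_exp_atBot.mul hg) Real.tendsto_exp_atBot ?_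
    refine (hg.add hg').congr fun u ↦ ?_
    rw [← mul_add, mul_div_cancel_left₀ _ (Real.exp_pos u).ne']
  simp only [mul_div_cancel_left₀ _ (Real.exp_pos _).ne'] at hlim
  linarith [tendsto_nhds_unique hg hlim]

lemma tendsto_iteratedDeriv_exp_mul (hj : j ≤ N) (hf : ContDiffAt ℝ N f 0)
    (hO : f =O[𝓝 0] fun s ↦ s ^ j) {i : ℕ} (hi : i < N) :
    Tendsto (iteratedDeriv (i + 1) fun u ↦ Real.exp (-j * u) * f (Real.exp u)) atBot (𝓝 0) := by
  have hlim (i : ℕ) (hi : i ≤ N) := exists_tendsto_iteratedDeriv_exp_mul hj hf hO i 0 hi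
  simp only [Nat.cast_zero, zero_sub, iteratedDeriv_zero] at hlim
  obtain ⟨c, hc⟩ := hlim i hi.le
  obtain ⟨c', hc'⟩ := hlim (i + 1) hi
  rwa [← eq_zero_of_tendsto_of_tendsto_deriv ?_ hc hc']
  filter_upwards [eventually_contDiffAt_exp hf] with u hu
  have hsmooth := contDiffAt_exp_mul_iteratedDeriv (i := N) (l := 0) hu le_rfl (-j)
  simp only [iteratedDeriv_zero] at hsmooth
  exact hasDerivAt_iteratedDeriv hsmooth hi

end LogarithmicVariable

/-! ### Slopes of roots of size `O(s)` -/

section SlopesNearZero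

variable {m : ℕ} {Q : ℝ → ℝ[X]}

/-- The scale-invariant form of Bronshtein's theorem. -/
lemma exists_rootSlopesLE_div (C : Fin m → ℝ) : ∃ L, ∀ (R : ℝ → ℝ[X]) (K v : ℝ), 0 < K →
    (∀ u ∈ Ioo (v - K) (v + K), IsHyperbolicCurveAt m m R u ∧
      ∀ j : Fin m, ∀ i ≤ m, |K ^ i * iteratedDeriv i (fun w ↦ (R w).coeff j) u| ≤ C j) →
    RootSlopesLE R v (L / K) := by
  let κ := {k : (ℝ → ℝ[X]) × ℝ × ℝ // 0 < k.2.1 ∧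
    ∀ u ∈ Ioo (k.2.2 - k.2.1) (k.2.2 + k.2.1), IsHyperbolicCurveAt m m k.1 u ∧
      ∀ j : Fin m, ∀ i ≤ m, |k.2.1 ^ i * iteratedDeriv i (fun w ↦ (k.1 w).coeff j) u| ≤ C j}
  have hmem (k : κ) {τ : ℝ} (hτ : τ ∈ Ioo (-1 : ℝ) 1) :
      k.1.2.2 + k.1.2.1 * τ ∈ Ioo (k.1.2.2 - k.1.2.1) (k.1.2.2 + k.1.2.1) := by
    constructor <;> nlinarith [hτ.1, hτ.2, k.2.1]
  have hfamily : IsBoundedHyperbolicFamily m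
      fun (k : κ) τ ↦ k.1.1 (k.1.2.2 + k.1.2.1 * τ) := by
    refine ⟨fun k τ hτ ↦ (k.2.2 _ (hmem k hτ)).1.eventually_isHyperbolic.self_of_nhds,
      fun j ↦ ⟨fun k τ hτ ↦ ContDiffAt.contDiffWithinAt ?_,
        fun i hi ↦ ⟨C j, fun k τ hτ ↦ ?_⟩⟩⟩
    · exact ((k.2.2 _ (hmem k hτ)).1.contDiffAt_coeff j).comp τ
        (f := fun τ ↦ k.1.2.2 + k.1.2.1 * τ) (by fun_prop)
    · rw [iteratedDeriv_comp_const_add_const_mul (fun w ↦ (k.1.1 w).coeff j)]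
      exact (k.2.2 _ (hmem k hτ)).2 j i hi
  obtain ⟨L, hL⟩ := hasBoundedRootSlopes m κ _ hfamily
  exact ⟨L, fun R K v hK h ↦ (hL ⟨(R, K, v), hK, h⟩).of_comp_const_add_const_mul hK⟩

lemma eventually_rootSlopesLE_atBot {R : ℝ → ℝ[X]}
    (hR : ∀ᶠ u in atBot, IsHyperbolicCurveAt m m R u)
    (hlim : ∀ j : Fin m, ∃ c, Tendsto (fun u ↦ (R u).coeff j) atBot (𝓝 c))
    (hflat : ∀ j : Fin m, ∀ i < m,
      Tendsto (iteratedDeriv (i + 1) fun u ↦ (R u).coeff j) atBot (𝓝 0))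
    {ε : ℝ} (hε : 0 < ε) : ∀ᶠ u in atBot, RootSlopesLE R u ε := by
  choose c hc using hlim
  obtain ⟨L, hL⟩ := exists_rootSlopesLE_div fun j ↦ |c j| + 1
  set K := |L| / ε + 1
  have hK : 0 < K := by positivity
  have hbound (j : Fin m) (i : ℕ) (hi : i ≤ m) : ∀ᶠ u in atBot,
      |K ^ i * iteratedDeriv i (fun w ↦ (R w).coeff j) u| ≤ |c j| + 1 := by
    cases i with
    | zero =>
      simp only [iteratedDeriv_zero, pow_zero, one_mul]
      exact (hc j).abs.eventually_le_const (lt_add_one _)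
    | succ i =>
      have hzero := ((hflat j i hi).const_mul (K ^ (i + 1))).abs
      rw [mul_zero, abs_zero] at hzero
      exact hzero.eventually_le_const (by positivity)
  have hgood : ∀ᶠ u in atBot, IsHyperbolicCurveAt m m R u ∧ ∀ j : Fin m, ∀ i ≤ m,
      |K ^ i * iteratedDeriv i (fun w ↦ (R w).coeff j) u| ≤ |c j| + 1 :=
    hR.and <| eventually_all.2 fun j ↦ (eventually_all_finite (finite_Iic m)).2 (hbound j)
  obtain ⟨a, ha⟩ := eventually_atBot.1 hgood
  filter_upwards [eventually_le_atBot (a - K)] with v hv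
  refine (hL R K v hK fun u hu ↦ ha u (by linarith [hu.2])).mono ((div_le_iff₀ hK).2 ?_)
  calc L ≤ |L| := le_abs_self L
    _ ≤ ε * K := by rw [mul_add, mul_div_cancel₀ _ hε.ne']; linarith

/-- The curve of polynomials whose roots are `x / s` for `x` a root of `Q s`, in the variable
`u = log s`. -/
noncomputable def logCurve (Q : ℝ → ℝ[X]) (u : ℝ) : ℝ[X] :=
  (Q (Real.exp u)).scaleRoots (Real.exp (-u))

lemma coeff_logCurve {u : ℝ} (hQ : IsHyperbolic m (Q (Real.exp u))) (j : ℕ) :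
    (logCurve Q u).coeff j =
      Real.exp (-(m - j : ℕ) * u) * (Q (Real.exp u)).coeff j := by
  rw [logCurve, coeff_scaleRoots, hQ.natDegree_eq, ← Real.exp_nat_mul, mul_comm, neg_mul,
    mul_neg]

lemma IsRootSlope.logCurve {u x' : ℝ} {x : ℝ → ℝ} (h : IsRootSlope Q (Real.exp u) x x') :
    IsRootSlope (logCurve Q) u (fun v ↦ Real.exp (-v) * x (Real.exp v))
      (x' - x (Real.exp u) / Real.exp u) := by
  have hslope :=
    (h.comp (Real.hasDerivAt_exp u) Real.isOpenEmbedding_exp).scaleRoots (hasDerivAt_neg u).exp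
  refine ⟨hslope.frequently_isRoot, hslope.hasDerivAt.congr_deriv ?_⟩
  rw [Real.exp_neg]
  field_simp
  ring

lemma IsHyperbolicCurveAt.logCurve {u : ℝ} (hQ : IsHyperbolicCurveAt m m Q (Real.exp u)) :
    IsHyperbolicCurveAt m m (logCurve Q) u := by
  have hexp := hQ.comp Real.contDiff_exp.contDiffAt
  refine ⟨hexp.eventually_isHyperbolic.mono fun v ⟨y, hy⟩ ↦ ⟨_, by
    rw [_root_.logCurve, hy, scaleRoots_polyOfRoots]⟩, fun j ↦ ?_⟩
  refine ContDiffAt.congr_of_eventuallyEq ?_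
    (hexp.eventually_isHyperbolic.mono fun v hv ↦ coeff_logCurve hv j)
  exact (contDiffAt_const.mul contDiffAt_id).exp.mul (hexp.contDiffAt_coeff j)

lemma eventually_rootSlopesLE_logCurve (hQ : IsHyperbolicCurveAt m m Q 0)
    (hO : ∀ j : Fin m, (fun s ↦ (Q s).coeff j) =O[𝓝 0] fun s ↦ s ^ (m - j : ℕ))
    {ε : ℝ} (hε : 0 < ε) : ∀ᶠ u in atBot, RootSlopesLE (logCurve Q) u ε := by
  have hcoeff (j : Fin m) : (fun u ↦ (logCurve Q u).coeff j) =ᶠ[atBot]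
      fun u ↦ Real.exp (-(m - j : ℕ) * u) * (Q (Real.exp u)).coeff j :=
    Real.tendsto_exp_atBot.eventually hQ.eventually_isHyperbolic |>.mono
      fun u hu ↦ coeff_logCurve hu j
  refine eventually_rootSlopesLE_atBot ((Real.tendsto_exp_atBot.eventually
    hQ.eventually).mono fun u hu ↦ hu.logCurve) (fun j ↦ ?_) (fun j i hi ↦ ?_) hε
  · obtain ⟨c, hc⟩ := exists_tendsto_exp_mul_iteratedDeriv (l := 0) (Nat.sub_le m j)
      (hQ.contDiffAt_coeff j) (hO j) m.zero_le
    simp only [Nat.cast_zero, zero_sub, iteratedDeriv_zero] at hc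
    exact ⟨c, hc.congr' (hcoeff j).symm⟩
  · refine (tendsto_iteratedDeriv_exp_mul (Nat.sub_le m j) (hQ.contDiffAt_coeff j) (hO j)
      hi).congr' ?_
    filter_upwards [eventually_eventually_nhds_atBot (hcoeff j)] with u hu
    exact (EventuallyEq.iteratedDeriv_eq (i + 1) hu).symm

lemma eventually_nhdsGT_abs_slope_sub_le (hQ : IsHyperbolicCurveAt m m Q 0)
    (hO : ∀ j : Fin m, (fun s ↦ (Q s).coeff j) =O[𝓝 0] fun s ↦ s ^ (m - j : ℕ))
    {ε : ℝ} (hε : 0 < ε) :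
    ∀ᶠ s in 𝓝[>] 0, ∀ x x', IsRootSlope Q s x x' → |x' - x s / s| ≤ ε := by
  have hlog := Real.tendsto_log_nhdsGT_zero.eventually (eventually_rootSlopesLE_logCurve hQ hO hε)
  filter_upwards [hlog, self_mem_nhdsWithin] with s hs hpos x x' hx
  rw [← Real.exp_log hpos] at hx
  simpa only [Real.exp_log hpos] using hs _ _ hx.logCurve

lemma eventually_abs_slope_sub_le (hQ : IsHyperbolicCurveAt m m Q 0)
    (hO : ∀ j : Fin m, (fun s ↦ (Q s).coeff j) =O[𝓝 0] fun s ↦ s ^ (m - j : ℕ))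
    {ε : ℝ} (hε : 0 < ε) :
    ∀ᶠ s in 𝓝[≠] 0, ∀ x x', IsRootSlope Q s x x' → |x' - x s / s| ≤ ε := by
  rw [← nhdsLT_sup_nhdsGT, eventually_sup]
  refine ⟨?_, eventually_nhdsGT_abs_slope_sub_le hQ hO hε⟩
  have hneg : Tendsto (fun s : ℝ ↦ -s) (𝓝 0) (𝓝 0) := by
    simpa only [neg_zero] using continuous_neg.tendsto (0 : ℝ)
  have hreflect : IsHyperbolicCurveAt m m (fun s ↦ Q (-s)) 0 :=
    IsHyperbolicCurveAt.comp (by rwa [neg_zero]) contDiff_neg.contDiffAt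
  have hright := eventually_nhdsGT_abs_slope_sub_le hreflect (fun j ↦ ((hO j).comp_tendsto
    hneg).trans <| .of_bound 1 <| .of_forall fun s ↦ by simp) hε
  filter_upwards [tendsto_neg_nhdsLT.eventually (by rwa [neg_zero])] with s hs x x' hx
  have hslope := hs _ _ (IsRootSlope.comp (Q := Q) (x := x) (by rwa [neg_neg])
    (hasDerivAt_neg (-s)) (Homeomorph.neg ℝ).isOpenEmbedding)
  rwa [neg_neg, mul_neg_one, div_neg, sub_neg_eq_add, ← abs_neg, neg_add, neg_neg,
    ← sub_eq_add_neg] at hslope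

end SlopesNearZero

/-! ### Continuity of the roots -/

section RootContinuity

variable {m n N : ℕ} {Q : ℝ → ℝ[X]} {s x' : ℝ} {x : ℝ → ℝ}

lemma isProperMap_coeff_polyOfRoots (n : ℕ) :
    IsProperMap fun y : Fin n → ℝ ↦ toFn n (polyOfRoots y) := by
  refine isProperMap_iff_tendsto_cocompact.2 ⟨continuous_coeff_polyOfRoots n, ?_⟩
  rw [← Metric.cobounded_eq_cocompact, ← tendsto_norm_atTop_iff_cobounded]
  have hle (y : Fin n → ℝ) : ‖y‖ ≤ ‖toFn n (polyOfRoots y)‖ + 1 :=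
    (pi_norm_le_iff_of_nonneg (by positivity)).2
      (abs_root_le_of_abs_coeff_le y fun j ↦ norm_le_pi_norm (toFn n (polyOfRoots y)) j)
  refine tendsto_atTop_mono (fun y ↦ sub_le_iff_le_add.2 (hle y)) ?_
  exact tendsto_atTop_add_const_right _ _ tendsto_norm_cobounded_atTop

lemma exists_limit_roots {α : Type*} {l : Filter α} [l.NeBot] {R : α → ℝ[X]}
    (hR : ∀ᶠ s in l, IsHyperbolic m (R s)) {v : Fin m → ℝ}
    (hv : ∀ j : Fin m, Tendsto (fun s ↦ (R s).coeff j) l (𝓝 (v j))) :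
    ∃ ρ : Fin m → ℝ, toFn m (polyOfRoots ρ) = v ∧
      ∀ ε > 0, ∀ᶠ s in l, ∃ y, R s = polyOfRoots y ∧ ∀ i, |y i - ρ i| ≤ ε := by
  have hproper := isProperMap_coeff_polyOfRoots m
  have hlim : Tendsto (fun s ↦ toFn m (R s)) l (𝓝 v) := tendsto_pi_nhds.2 hv
  obtain ⟨ρ, hρ⟩ : v ∈ range fun y : Fin m → ℝ ↦ toFn m (polyOfRoots y) := by
    refine hproper.isClosed_range.mem_of_tendsto hlim (hR.mono ?_)
    rintro s ⟨y, hy⟩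
    exact ⟨y, by rw [hy]⟩
  refine ⟨ρ, hρ, fun ε hε ↦ ?_⟩
  have hnear : ∀ᶠ w in 𝓝 v, ∀ y, toFn m (polyOfRoots y) = w →
      ∃ σ : Equiv.Perm (Fin m), ∀ i, |y (σ i) - ρ i| ≤ ε := by
    refine hproper.isClosedMap.eventually_nhds_fiber v fun y₀ hy₀ ↦ ?_
    obtain ⟨σ, hσ⟩ := exists_perm_of_polyOfRoots_eq <| eq_of_toFn_eq (monic_polyOfRoots ρ)
      (monic_polyOfRoots y₀) (natDegree_polyOfRoots _) (natDegree_polyOfRoots _)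
      (hρ.trans hy₀.symm)
    have hdist : ∀ᶠ y in 𝓝 y₀, ∀ i, |y (σ i) - ρ i| < ε := by
      refine eventually_all.2 fun i ↦ ?_
      have hcont : Continuous fun y : Fin m → ℝ ↦ |y (σ i) - ρ i| := by fun_prop
      exact hcont.continuousAt.eventually_lt_const (by simpa [hσ] using hε)
    exact hdist.mono fun y hy ↦ ⟨σ, fun i ↦ (hy i).le⟩
  filter_upwards [hR, hlim.eventually hnear] with s ⟨y, hy⟩ hs
  obtain ⟨σ, hσ⟩ := hs y (by rw [hy])
  exact ⟨y ∘ σ, by rw [hy, polyOfRoots_comp_perm], hσ⟩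

lemma IsHyperbolic.eval_eq {p : ℝ[X]} (h : IsHyperbolic m p) (x : ℝ) :
    p.eval x = x ^ m + ∑ j : Fin m, p.coeff j * x ^ (j : ℕ) := by
  conv_lhs => rw [h.monic.as_sum, h.natDegree_eq]
  simp only [eval_add, eval_pow, eval_X, eval_finsetSum, eval_mul, eval_C, Finset.sum_range]

lemma IsRootSlope.isRoot (h : IsRootSlope Q s x x') (hQ : IsHyperbolicCurveAt m N Q s) :
    (Q s).IsRoot (x s) := by
  have hx : ContinuousAt x s := h.hasDerivAt.continuousAt
  have hcont : ContinuousAt (fun t ↦ x t ^ m + ∑ j : Fin m, (Q t).coeff j * x t ^ (j : ℕ)) s :=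
    (hx.pow m).add (tendsto_finsetSum _ fun j _ ↦
      (hQ.contDiffAt_coeff j).continuousAt.mul (hx.pow _))
  have hzero : ∃ᶠ t in 𝓝[≠] s,
      x t ^ m + ∑ j : Fin m, (Q t).coeff j * x t ^ (j : ℕ) ∈ ({0} : Set ℝ) :=
    (h.frequently_isRoot.and_eventually
      (hQ.eventually_isHyperbolic.filter_mono nhdsWithin_le_nhds)).mono fun t ⟨hroot, ht⟩ ↦
      (ht.eval_eq _).symm.trans hroot
  rw [IsRoot.def, hQ.eventually_isHyperbolic.self_of_nhds.eval_eq]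
  exact isClosed_singleton.mem_of_frequently_of_tendsto hzero
    (hcont.tendsto.mono_left nhdsWithin_le_nhds)

end RootContinuity

/-! ### Centered curves through a root of full multiplicity -/

section CenteredCurve

variable {m N : ℕ} {Q : ℝ → ℝ[X]} {t₀ : ℝ}

namespace IsHyperbolicCurveAt

lemma of_le {M : ℕ} (hQ : IsHyperbolicCurveAt m N Q t₀) (hM : M ≤ N) :
    IsHyperbolicCurveAt m M Q t₀ :=
  ⟨hQ.eventually_isHyperbolic, fun j ↦ (hQ.contDiffAt_coeff j).of_le (mod_cast hM)⟩

lemma contDiffAt_rootMean (hQ : IsHyperbolicCurveAt m N Q t₀) (hm : 1 ≤ m) :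
    ContDiffAt ℝ N (fun t ↦ rootMean m (Q t)) t₀ :=
  ((hQ.contDiffAt_coeff ⟨m - 1, by lia⟩).neg).div_const _

lemma centered (hQ : IsHyperbolicCurveAt m N Q t₀) :
    IsHyperbolicCurveAt m N (fun t ↦ centered m (Q t)) t₀ where
  eventually_isHyperbolic := hQ.eventually_isHyperbolic.mono fun _ ht ↦ ht.centered
  contDiffAt_coeff j := by
    refine ((contDiff_coeff_centered j).contDiffAt.comp t₀
      (contDiffAt_pi.2 hQ.contDiffAt_coeff)).congr_of_eventuallyEq ?_
    filter_upwards [hQ.eventually_isHyperbolic] with t ht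
    change _ = (_root_.centered m (monicOfFn (toFn m (Q t)))).coeff j
    rw [monicOfFn_toFn ht.monic ht.natDegree_eq]

end IsHyperbolicCurveAt

lemma isBigO_pow_of_iteratedDeriv_eq_zero {f : ℝ → ℝ} {k : ℕ} (hk : 0 < k)
    (hf : ContDiffAt ℝ k f 0) (h : ∀ i < k, iteratedDeriv i f 0 = 0) :
    f =O[𝓝 0] fun s ↦ s ^ k := by
  rw [← nhdsNE_sup_pure]
  refine Asymptotics.IsBigO.sup (Asymptotics.isBigO_of_div_tendsto_nhds ?_ _
    (tendsto_div_pow_of_iteratedDeriv_eq_zero hf h)) ?_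
  · filter_upwards [self_mem_nhdsWithin] with s hs hzero
    exact absurd (eq_zero_of_pow_eq_zero hzero) hs
  · exact Asymptotics.isBigO_pure.2 fun _ ↦ by simpa only [iteratedDeriv_zero] using h 0 hk

lemma isBigO_sq_of_isLocalMin {f : ℝ → ℝ} (hf : ContDiffAt ℝ 2 f 0) (hzero : f 0 = 0)
    (hmin : IsLocalMin f 0) : f =O[𝓝 0] fun s ↦ s ^ 2 := by
  refine isBigO_pow_of_iteratedDeriv_eq_zero two_pos hf fun i hi ↦ ?_
  interval_cases i
  · rwa [iteratedDeriv_zero]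
  · rw [iteratedDeriv_one]
    exact hmin.deriv_eq_zero

/-- In a centered polynomial the sum of the squares of the roots is a multiple of the third leading
coefficient; it has a minimum at `0`, so it is `O(s ^ 2)`. -/
lemma IsHyperbolicCurveAt.exists_abs_root_le (hQ : IsHyperbolicCurveAt (m + 2) 2 Q 0)
    (hcenter : ∀ᶠ s in 𝓝 0, (Q s).coeff (m + 1) = 0) (hzero : (Q 0).coeff m = 0) :
    ∃ C, ∀ᶠ s in 𝓝 0, ∀ x, (Q s).IsRoot x → |x| ≤ C * |s| := by
  have hsq : ∀ᶠ s in 𝓝 0, ∀ x, (Q s).IsRoot x → x ^ 2 ≤ -2 * (Q s).coeff m := by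
    filter_upwards [hQ.eventually_isHyperbolic, hcenter] with s hs hs' x hx
    exact hs.sq_root_le hs' hx
  have hmin : IsLocalMin (fun s ↦ -2 * (Q s).coeff m) 0 := by
    filter_upwards [hsq, hQ.eventually_isHyperbolic] with s hs ⟨y, hy⟩
    rw [hzero, mul_zero]
    exact (sq_nonneg (y 0)).trans (hs _ (hy ▸ isRoot_polyOfRoots.2 ⟨0, rfl⟩))
  have hC2 : ContDiffAt ℝ 2 (fun s ↦ -2 * (Q s).coeff m) 0 :=
    contDiffAt_const.mul (hQ.contDiffAt_coeff ⟨m, by lia⟩)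
  obtain ⟨C, hC, hbound⟩ :=
    (isBigO_sq_of_isLocalMin hC2 (by rw [hzero, mul_zero]) hmin).exists_nonneg
  refine ⟨√C, ?_⟩
  filter_upwards [hsq, hbound.bound] with s hs hs' x hx
  refine abs_le_of_sq_le_sq ?_ (by positivity)
  calc x ^ 2 ≤ ‖-2 * (Q s).coeff m‖ := (hs x hx).trans (le_abs_self _)
    _ ≤ C * ‖s ^ 2‖ := hs'
    _ = (√C * |s|) ^ 2 := by
      rw [mul_pow, Real.sq_sqrt hC, sq_abs, norm_pow, Real.norm_eq_abs, sq_abs]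

lemma isBigO_coeff_of_abs_root_le (hQ : ∀ᶠ s in 𝓝 0, IsHyperbolic m (Q s)) {C : ℝ}
    (hroot : ∀ᶠ s in 𝓝 0, ∀ x, (Q s).IsRoot x → |x| ≤ C * |s|) (j : Fin m) :
    (fun s ↦ (Q s).coeff j) =O[𝓝 0] fun s ↦ s ^ (m - j : ℕ) := by
  obtain ⟨K, hK⟩ := exists_bound_coeff_polyOfRoots m |C|
  refine .of_bound K ?_
  filter_upwards [hQ, hroot] with s ⟨y, hy⟩ hs
  have hyC (i : Fin m) : |y i| ≤ |C| * |s| :=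
    (hs _ (hy ▸ isRoot_polyOfRoots.2 ⟨i, rfl⟩)).trans (by gcongr; exact le_abs_self C)
  have hscale : polyOfRoots y = (polyOfRoots fun i ↦ y i / s).scaleRoots s := by
    rw [scaleRoots_polyOfRoots]
    congr with i
    refine (mul_div_cancel_of_imp' fun hs₀ ↦ ?_).symm
    simpa [hs₀] using hyC i
  rw [hy, hscale, coeff_scaleRoots, natDegree_polyOfRoots, norm_mul]
  gcongr
  refine hK _ (fun i ↦ ?_) j
  rw [abs_div]
  exact div_le_of_le_mul₀ (abs_nonneg s) (abs_nonneg C) (hyC i)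

lemma rootMean_polyOfRoots_const {n : ℕ} (hn : 1 ≤ n) (a : ℝ) :
    rootMean n (polyOfRoots fun _ : Fin n ↦ a) = a := by
  rw [rootMean, coeff_polyOfRoots_pred _ hn, neg_neg, Finset.sum_const, Finset.card_univ,
    Fintype.card_fin, nsmul_eq_mul, mul_div_cancel_left₀ _ (mod_cast (by lia))]

lemma centered_polyOfRoots_const (n : ℕ) (a : ℝ) :
    centered n (polyOfRoots fun _ : Fin n ↦ a) = X ^ n := by
  rcases n.eq_zero_or_pos with rfl | hn
  · simp [centered, polyOfRoots]
  rw [centered_polyOfRoots, rootMean_polyOfRoots_const hn, polyOfRoots]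
  simp

lemma IsHyperbolicCurveAt.isBigO_coeff_centered (hQ : IsHyperbolicCurveAt m m Q 0) {a : ℝ}
    (hQ₀ : Q 0 = polyOfRoots fun _ : Fin m ↦ a) (j : Fin m) :
    (fun s ↦ (_root_.centered m (Q s)).coeff j) =O[𝓝 0] fun s ↦ s ^ (m - j : ℕ) := by
  have hcenter : 1 ≤ m → ∀ᶠ s in 𝓝 0, (_root_.centered m (Q s)).coeff (m - 1) = 0 := fun hm ↦
    hQ.eventually_isHyperbolic.mono fun s hs ↦ hs.coeff_centered_pred hm
  match m, j with
  | 1, j =>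
    rw [Subsingleton.elim j 0]
    exact (Asymptotics.isBigO_zero _ _).congr'
      ((hcenter le_rfl).mono fun s hs ↦ hs.symm) EventuallyEq.rfl
  | m + 2, j =>
    obtain ⟨C, hC⟩ := (hQ.centered.of_le le_add_self).exists_abs_root_le (hcenter (by lia))
      (by rw [hQ₀, centered_polyOfRoots_const, coeff_X_pow, if_neg (by lia)])
    exact isBigO_coeff_of_abs_root_le hQ.centered.eventually_isHyperbolic hC j

end CenteredCurve

/-! ### Jets of the roots -/

section TaylorPolynomial

variable {f : ℝ → ℝ} {k : ℕ}

lemma iteratedDeriv_eval (p : ℝ[X]) (i : ℕ) :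
    iteratedDeriv i (fun s ↦ p.eval s) = fun s ↦ (derivative^[i] p).eval s := by
  induction i generalizing p with
  | zero => rfl
  | succ i ih => 
    rw [iteratedDeriv_succ', show deriv (fun s ↦ p.eval s) = _ from funext fun s ↦ p.deriv, ih,
      Function.iterate_succ_apply]

lemma contDiff_eval (p : ℝ[X]) {N : WithTop ℕ∞} : ContDiff ℝ N fun s ↦ p.eval s := by
  exact p.contDiff_aeval N

lemma exists_polynomial_iteratedDeriv_sub_eq_zero (hf : ContDiffAt ℝ k f 0) :
    ∃ p : ℝ[X], p.natDegree ≤ k ∧ ∀ i ≤ k, iteratedDeriv i (fun s ↦ f s - p.eval s) 0 = 0 := by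
  let p : ℝ[X] := ∑ i ∈ Finset.range (k + 1), C (iteratedDeriv i f 0 / i.factorial) * X ^ i
  have hcoeff : ∀ i ≤ k, p.coeff i = iteratedDeriv i f 0 / i.factorial := fun i hi ↦ by
    simp [p, coeff_X_pow, Nat.lt_succ_iff.2 hi]
  refine ⟨p, natDegree_sum_le_of_forall_le _ _ fun i hi ↦
    (natDegree_C_mul_X_pow_le _ i).trans (Finset.mem_range_succ_iff.1 hi), fun i hi ↦ ?_⟩
  rw [iteratedDeriv_fun_sub (hf.of_le (mod_cast hi)) (contDiff_eval p).contDiffAt,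
    iteratedDeriv_eval]
  beta_reduce
  rw [← coeff_zero_eq_eval_zero, coeff_iterate_derivative, zero_add, hcoeff i hi,
    Nat.descFactorial_self, nsmul_eq_mul, mul_div_cancel₀ _ (mod_cast i.factorial_ne_zero),
    sub_self]

lemma exists_taylor_polynomial (hf : ContDiffAt ℝ (k + 1 : ℕ) f 0) :
    ∃ p : ℝ[X], p.natDegree ≤ k + 1 ∧ p.eval 0 = f 0 ∧ ∀ ε > 0, ∀ᶠ s in 𝓝[≠] 0,
      |f s - p.eval s| ≤ ε * |s| ^ (k + 1) ∧
      |deriv f s - p.derivative.eval s| ≤ ε * |s| ^ k := by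
  obtain ⟨p, hp, hzero⟩ := exists_polynomial_iteratedDeriv_sub_eq_zero hf
  let g : ℝ → ℝ := fun s ↦ f s - p.eval s
  have hg : ContDiffAt ℝ (k + 1 : ℕ) g 0 := hf.sub (contDiff_eval p).contDiffAt
  have hg' : ContDiffAt ℝ k (deriv g) 0 := by
    simpa only [iteratedDeriv_one] using contDiffAt_iteratedDeriv hg le_rfl
  have hbound {h : ℝ → ℝ} {l : ℕ} (hh : ContDiffAt ℝ l h 0)
      (hh₀ : ∀ i ≤ l, iteratedDeriv i h 0 = 0) {ε : ℝ} (hε : 0 < ε) :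
      ∀ᶠ s in 𝓝[≠] 0, |h s| ≤ ε * |s| ^ l := by
    have hlim := tendsto_div_pow_of_iteratedDeriv_eq_zero hh fun i hi ↦ hh₀ i hi.le
    rw [hh₀ l le_rfl, zero_div] at hlim
    filter_upwards [hlim.abs.eventually_le_const (by rwa [abs_zero]), self_mem_nhdsWithin]
      with s hs (hs₀ : s ≠ 0)
    rwa [abs_div, abs_pow, div_le_iff₀ (by positivity)] at hs
  refine ⟨p, hp, ?_, fun ε hε ↦ ?_⟩
  · exact (sub_eq_zero.1 (by simpa using hzero 0 (Nat.zero_le _))).symm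
  · have hdiff : ∀ᶠ s in 𝓝[≠] 0, DifferentiableAt ℝ f s :=
      ((hf.eventually (by simp)).mono fun s hs ↦ hs.differentiableAt (by simp)).filter_mono
        nhdsWithin_le_nhds
    filter_upwards [hbound hg hzero hε, hbound hg' (fun i hi ↦ by
      simpa only [iteratedDeriv_succ'] using hzero (i + 1) (by lia)) hε, hdiff] with s hs hs' hds
    refine ⟨hs, ?_⟩
    rwa [← p.deriv, ← deriv_fun_sub hds p.differentiableAt]

end TaylorPolynomial

section RootJets

variable {k l m : ℕ} {Q R : ℝ → ℝ[X]} {t : ℝ} {J : Fin m → ℝ[X]}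

/-- Near `t`, the roots of the curve `Q`, and the slopes of the roots, are given by the `k`-jets
`J i`, up to errors `o((s - t) ^ k)` and `o((s - t) ^ (k - 1))`. -/
structure HasRootJets (k : ℕ) (Q : ℝ → ℝ[X]) (t : ℝ) (J : Fin m → ℝ[X]) : Prop where
  natDegree_le : ∀ i, (J i).natDegree ≤ k
  eventually_roots : ∀ ε > 0, ∀ᶠ s in 𝓝[≠] t,
    ∃ y, Q s = polyOfRoots y ∧ ∀ i, |y i - (J i).eval (s - t)| ≤ ε * |s - t| ^ k
  eventually_slope : ∀ ε > 0, ∀ᶠ s in 𝓝[≠] t, ∀ x x', IsRootSlope Q s x x' →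
    ∃ i, |x s - (J i).eval (s - t)| ≤ ε * |s - t| ^ k ∧
      |s - t| * |x' - (J i).derivative.eval (s - t)| ≤ ε * |s - t| ^ k

lemma eventually_nhdsNE_eventually_nhds {X : Type*} [TopologicalSpace X] [T1Space X] {a : X}
    {p : X → Prop} (h : ∀ᶠ s in 𝓝[≠] a, p s) : ∀ᶠ s in 𝓝[≠] a, ∀ᶠ u in 𝓝 s, p u := by
  filter_upwards [eventually_eventually_nhdsWithin.2 h, self_mem_nhdsWithin] with s hs hne
  rwa [isOpen_compl_singleton.nhdsWithin_eq hne] at hs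

lemma IsRootSlope.congr {s x' : ℝ} {x : ℝ → ℝ} (h : IsRootSlope Q s x x')
    (hQ : ∀ᶠ u in 𝓝[≠] s, Q u = R u) : IsRootSlope R s x x' :=
  ⟨(h.frequently_isRoot.and_eventually hQ).mono fun _ ⟨hroot, hu⟩ ↦ hu ▸ hroot, h.hasDerivAt⟩

lemma polyOfRoots_append (y : Fin k → ℝ) (z : Fin l → ℝ) :
    polyOfRoots (Fin.append y z) = polyOfRoots y * polyOfRoots z := by
  simp only [polyOfRoots, Fin.prod_univ_add, Fin.append_left, Fin.append_right]

namespace HasRootJets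

lemma congr (h : HasRootJets k Q t J) (hQ : ∀ᶠ s in 𝓝[≠] t, Q s = R s) :
    HasRootJets k R t J where
  natDegree_le := h.natDegree_le
  eventually_roots ε hε := by
    filter_upwards [h.eventually_roots ε hε, hQ] with s hs hQs
    rwa [← hQs]
  eventually_slope ε hε := by
    filter_upwards [h.eventually_slope ε hε, eventually_nhdsNE_eventually_nhds hQ]
      with s hs hQs x x' hx
    exact hs x x' (hx.congr ((hQs.filter_mono nhdsWithin_le_nhds).mono fun u hu ↦ hu.symm))

lemma mul {A B : ℝ → ℝ[X]} {I : Fin k → ℝ[X]} {J : Fin l → ℝ[X]} (hA : HasRootJets m A t I)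
    (hB : HasRootJets m B t J) : HasRootJets m (fun s ↦ A s * B s) t (Fin.append I J) where
  natDegree_le i := by
    induction i using Fin.addCases <;> simp [hA.natDegree_le, hB.natDegree_le]
  eventually_roots ε hε := by
    filter_upwards [hA.eventually_roots ε hε, hB.eventually_roots ε hε]
      with s ⟨y, hy, hyI⟩ ⟨z, hz, hzJ⟩
    refine ⟨Fin.append y z, by rw [polyOfRoots_append, hy, hz], fun i ↦ ?_⟩
    induction i using Fin.addCases <;> simp only [Fin.append_left, Fin.append_right, hyI, hzJ]
  eventually_slope ε hε := by
    filter_upwards [hA.eventually_slope ε hε, hB.eventually_slope ε hε] with s hsA hsB x x' hx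
    rcases hx.or_of_mul (.of_forall fun _ ↦ rfl) with hx | hx
    · obtain ⟨i, hi⟩ := hsA x x' hx
      exact ⟨Fin.castAdd l i, by rwa [Fin.append_left]⟩
    · obtain ⟨i, hi⟩ := hsB x x' hx
      exact ⟨Fin.natAdd k i, by rwa [Fin.append_right]⟩

end HasRootJets

lemma eq_polyOfRoots_of_scaleRoots_centered {p : ℝ[X]} {s : ℝ} (hs : s ≠ 0) {z : Fin m → ℝ}
    (h : (centered m p).scaleRoots s⁻¹ = polyOfRoots z) :
    p = polyOfRoots fun i ↦ s * z i + rootMean m p := by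
  have hcentered : centered m p = polyOfRoots fun i ↦ s * z i := by
    rw [← scaleRoots_polyOfRoots, ← h, ← scaleRoots_mul, inv_mul_cancel₀ hs, scaleRoots_one]
  calc p = taylor (-rootMean m p) (centered m p) := by simp [centered, taylor_taylor]
    _ = _ := by simp only [hcentered, taylor_polyOfRoots, sub_neg_eq_add]

lemma abs_add_mul_sub_eval_le {p q : ℝ[X]} {s a z ε : ℝ} (ha : |a - p.eval s| ≤ ε * |s| ^ (k + 1))
    (hz : |z - q.eval s| ≤ ε * |s| ^ k) :
    |a + s * z - (p + X * q).eval s| ≤ 2 * ε * |s| ^ (k + 1) := by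
  calc _ = |(a - p.eval s) + s * (z - q.eval s)| := by
        rw [eval_add, eval_mul, eval_X]
        ring_nf
    _ ≤ ε * |s| ^ (k + 1) + |s| * (ε * |s| ^ k) := by
        refine (abs_add_le _ _).trans ?_
        rw [abs_mul]
        gcongr
    _ = 2 * ε * |s| ^ (k + 1) := by ring

lemma abs_mul_abs_add_mul_sub_eval_derivative_le {p q : ℝ[X]} {s a z z' ε : ℝ}
    (ha : |a - p.derivative.eval s| ≤ ε * |s| ^ k) (hz : |z - q.eval s| ≤ ε * |s| ^ k)
    (hz' : |s| * |z' - q.derivative.eval s| ≤ ε * |s| ^ k) :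
    |s| * |a + z + s * z' - (p + X * q).derivative.eval s| ≤ 3 * ε * |s| ^ (k + 1) := by
  calc _ = |s| * |(a - p.derivative.eval s) + (z - q.eval s) +
          s * (z' - q.derivative.eval s)| := by
        rw [derivative_add, derivative_mul, derivative_X, eval_add, eval_add, eval_mul, eval_mul,
          eval_X, eval_one]
        ring_nf
    _ ≤ |s| * (ε * |s| ^ k + ε * |s| ^ k + ε * |s| ^ k) := by
        refine mul_le_mul_of_nonneg_left ((abs_add_three _ _ _).trans ?_) (abs_nonneg s)
        rw [abs_mul]
        gcongr
    _ = 3 * ε * |s| ^ (k + 1) := by ring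

lemma IsRootSlope.exists_scaleRoots_centered {s x' μ : ℝ} {x : ℝ → ℝ} (h : IsRootSlope Q s x x')
    (hs : s ≠ 0) (hμ : HasDerivAt (fun t ↦ rootMean m (Q t)) μ s) :
    ∃ z z', IsRootSlope (fun t ↦ (centered m (Q t)).scaleRoots t⁻¹) s z z' ∧
      x s = rootMean m (Q s) + s * z s ∧ x' = μ + z s + s * z' := by
  refine ⟨_, _, (h.sub_rootMean hμ).scaleRoots (hasDerivAt_inv hs), ?_, ?_⟩ <;> field_simp <;> ring

lemma HasRootJets.of_scaleRoots_centered
    (hmean : ContDiffAt ℝ (k + 1 : ℕ) (fun s ↦ rootMean m (Q s)) 0)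
    (h : HasRootJets k (fun s ↦ (centered m (Q s)).scaleRoots s⁻¹) 0 J) :
    ∃ p : ℝ[X], p.eval 0 = rootMean m (Q 0) ∧ HasRootJets (k + 1) Q 0 fun i ↦ p + X * J i := by
  obtain ⟨p, hp, hp₀, hpjet⟩ := exists_taylor_polynomial hmean
  refine ⟨p, hp₀, fun i ↦ ?_, fun ε hε ↦ ?_, fun ε hε ↦ ?_⟩
  · refine natDegree_add_le_of_degree_le hp ?_
    rw [add_comm k]
    exact natDegree_mul_le_of_le natDegree_X_le (h.natDegree_le i)
  · filter_upwards [hpjet (ε / 3) (by positivity), h.eventually_roots (ε / 3) (by positivity),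
      self_mem_nhdsWithin] with s ⟨hs, _⟩ ⟨z, hz, hzJ⟩ hs₀
    rw [sub_zero] at hzJ ⊢
    refine ⟨_, eq_polyOfRoots_of_scaleRoots_centered hs₀ hz, fun i ↦ ?_⟩
    rw [add_comm]
    refine (abs_add_mul_sub_eval_le hs (hzJ i)).trans ?_
    gcongr
    linarith
  · have hdiff : ∀ᶠ s in 𝓝[≠] 0, DifferentiableAt ℝ (fun s ↦ rootMean m (Q s)) s :=
      ((hmean.eventually (by simp)).mono fun s hs ↦ hs.differentiableAt (by simp)).filter_mono
        nhdsWithin_le_nhds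
    filter_upwards [hpjet (ε / 3) (by positivity), h.eventually_slope (ε / 3) (by positivity),
      hdiff, self_mem_nhdsWithin] with s ⟨hs, hs'⟩ hslope hds hs₀ x x' hx
    rw [sub_zero] at hslope ⊢
    obtain ⟨z, z', hz, hxz, rfl⟩ := hx.exists_scaleRoots_centered hs₀ hds.hasDerivAt
    obtain ⟨i, hi, hi'⟩ := hslope z z' hz
    refine ⟨i, ?_, (abs_mul_abs_add_mul_sub_eval_derivative_le hs' hi hi').trans_eq (by ring)⟩
    rw [hxz]
    refine (abs_add_mul_sub_eval_le hs hi).trans ?_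
    gcongr
    linarith

lemma IsHyperbolicCurveAt.exists_hasRootJets_zero (hQ : IsHyperbolicCurveAt m m Q 0)
    (hO : ∀ j : Fin m, (fun s ↦ (Q s).coeff j) =O[𝓝 0] fun s ↦ s ^ (m - j : ℕ)) :
    ∃ J : Fin m → ℝ[X], HasRootJets 0 (fun s ↦ (Q s).scaleRoots s⁻¹) 0 J := by
  have hlim (j : Fin m) : ∃ c, Tendsto (fun s ↦ ((Q s).scaleRoots s⁻¹).coeff j) (𝓝[≠] 0) (𝓝 c) := by
    have hf : ContDiffAt ℝ (m - j : ℕ) (fun s ↦ (Q s).coeff j) 0 :=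
      (hQ.contDiffAt_coeff j).of_le (mod_cast Nat.sub_le _ _)
    refine ⟨_, (tendsto_div_pow_of_iteratedDeriv_eq_zero hf
      (iteratedDeriv_eq_zero_of_isBigO_pow hf (hO j))).congr' ?_⟩
    filter_upwards [hQ.eventually_isHyperbolic.filter_mono nhdsWithin_le_nhds] with s hs
    rw [coeff_scaleRoots, hs.natDegree_eq, inv_pow, div_eq_mul_inv]
  choose v hv using hlim
  have hhyp : ∀ᶠ s in 𝓝[≠] 0, IsHyperbolic m ((Q s).scaleRoots s⁻¹) := by
    filter_upwards [hQ.eventually_isHyperbolic.filter_mono nhdsWithin_le_nhds] with s ⟨y, hy⟩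
    exact ⟨_, by rw [hy, scaleRoots_polyOfRoots]⟩
  obtain ⟨ρ, -, hρ⟩ := exists_limit_roots hhyp hv
  refine ⟨fun i ↦ C (ρ i), fun i ↦ (natDegree_C _).le, fun ε hε ↦ ?_, fun ε hε ↦ ?_⟩
  · simpa only [eval_C, pow_zero, mul_one] using hρ ε hε
  · filter_upwards [hρ ε hε, eventually_abs_slope_sub_le hQ hO hε,
      hQ.eventually.filter_mono nhdsWithin_le_nhds, self_mem_nhdsWithin]
      with s ⟨y, hy, hyρ⟩ hslope hQs (hs₀ : s ≠ 0) z z' hz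
    have hx : IsRootSlope Q s (fun t ↦ t * z t) (1 * z s + s * z') := by
      refine (hz.scaleRoots (hasDerivAt_id s)).congr ?_
      filter_upwards [nhdsWithin_le_nhds (isOpen_ne.mem_nhds hs₀)] with t ht
      rw [← scaleRoots_mul, id, inv_mul_cancel₀ ht, scaleRoots_one]
    obtain ⟨i, hi⟩ : ∃ i, z s = y i := by
      rw [← isRoot_polyOfRoots, ← hy, ← inv_mul_cancel_left₀ hs₀ (z s), IsRoot.def,
        scaleRoots_eval_mul, (hx.isRoot hQs).eq_zero, mul_zero]
    refine ⟨i, ?_, ?_⟩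
    · simpa only [eval_C, pow_zero, mul_one, hi] using hyρ i
    · have hle := hslope _ _ hx
      rw [mul_div_cancel_left₀ _ hs₀, one_mul, add_sub_cancel_left, abs_mul] at hle
      simpa using hle

lemma IsHyperbolicCurveAt.exists_hasRootJets_one_of_eq {a : ℝ} (hQ : IsHyperbolicCurveAt m m Q 0)
    (hm : 1 ≤ m) (hQ₀ : Q 0 = polyOfRoots fun _ : Fin m ↦ a) :
    ∃ J : Fin m → ℝ[X], HasRootJets 1 Q 0 J := by
  obtain ⟨J, hJ⟩ := hQ.centered.exists_hasRootJets_zero (hQ.isBigO_coeff_centered hQ₀)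
  obtain ⟨p, -, hp⟩ := HasRootJets.of_scaleRoots_centered
    ((hQ.contDiffAt_rootMean hm).of_le (mod_cast hm)) hJ
  exact ⟨_, hp⟩

lemma IsHyperbolicCurveAt.exists_hasRootJets_one (hQ : IsHyperbolicCurveAt m m Q 0) :
    ∃ J : Fin m → ℝ[X], HasRootJets 1 Q 0 J := by
  induction m using Nat.strong_induction_on generalizing Q with
  | _ m ih =>
  obtain ⟨y, hy⟩ := hQ.eventually_isHyperbolic.self_of_nhds
  by_cases hne : ∃ i j, y i ≠ y j
  · obtain ⟨i, j, hij⟩ := hne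
    obtain ⟨k, l, rfl, hk, hl, A, B, hA, hB, hAB⟩ := hQ.exists_splitting hy hij
    obtain ⟨I, hI⟩ := ih k hk (hA.of_le hk.le)
    obtain ⟨J, hJ⟩ := ih l hl (hB.of_le hl.le)
    exact ⟨_, (hI.mul hJ).congr
      ((hAB.filter_mono nhdsWithin_le_nhds).mono fun s hs ↦ hs.symm)⟩
  · push Not at hne
    rcases m with _ | m
    · refine ⟨Fin.elim0, fun i ↦ i.elim0, fun ε _ ↦ ?_, fun ε _ ↦ ?_⟩
      · filter_upwards [hQ.eventually_isHyperbolic.filter_mono nhdsWithin_le_nhds] with s ⟨z, hz⟩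
        exact ⟨z, hz, fun i ↦ i.elim0⟩
      · filter_upwards [hQ.eventually.filter_mono nhdsWithin_le_nhds] with s hs x x' hx
        obtain ⟨z, hz⟩ := hs.eventually_isHyperbolic.self_of_nhds
        exact (isRoot_polyOfRoots.1 (hz ▸ hx.isRoot hs)).elim fun i _ ↦ i.elim0
    · exact hQ.exists_hasRootJets_one_of_eq le_add_self
        (hy.trans (congrArg _ (funext fun i ↦ hne i 0)))

end RootJets

/-! ### Hadamard division -/

section Hadamard

variable {N : ℕ} {f : ℝ → ℝ}

lemma exists_contDiff_eventuallyEq (hf : ContDiffAt ℝ N f 0) :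
    ∃ g : ℝ → ℝ, ContDiff ℝ N g ∧ g =ᶠ[𝓝 0] f := by
  obtain ⟨δ, hδ, hball⟩ := Metric.nhds_basis_closedBall.eventually_iff.1
    (hf.eventually (by simp))
  let χ : ContDiffBump (0 : ℝ) := ⟨δ / 2, δ, half_pos hδ, half_lt_self hδ⟩
  refine ⟨fun s ↦ χ s * f s, contDiff_iff_contDiffAt.2 fun s ↦ ?_, ?_⟩
  · by_cases hs : s ∈ tsupport χ
    · exact χ.contDiffAt.mul (hball (χ.tsupport_eq ▸ hs))
    · refine (contDiffAt_const (c := (0 : ℝ))).congr_of_eventuallyEq ?_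
      filter_upwards [notMem_tsupport_iff_eventuallyEq.1 hs] with t ht
      simp [ht]
  · filter_upwards [χ.eventuallyEq_one] with s hs
    simp [hs]

/-- The weighted average `s ↦ ∫ θ in 0..1, θ ^ k * f (s * θ)`. For `k = 0` it turns `f'` into the
quotient `(f s - f 0) / s`, and differentiating it raises `k` by one. -/
noncomputable def radialAverage (k : ℕ) (f : ℝ → ℝ) (s : ℝ) : ℝ :=
  ∫ θ in (0 : ℝ)..1, θ ^ k * f (s * θ)

lemma continuous_radialAverage (k : ℕ) (hf : Continuous f) : Continuous (radialAverage k f) :=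
  intervalIntegral.continuous_parametric_intervalIntegral_of_continuous'
    (f := fun s θ ↦ θ ^ k * f (s * θ)) (by fun_prop) 0 1

lemma hasDerivAt_radialAverage (k : ℕ) (hf : ContDiff ℝ 1 f) (s : ℝ) :
    HasDerivAt (radialAverage k f) (radialAverage (k + 1) (deriv f) s) s := by
  have hfc := hf.continuous
  have hf'c : Continuous (deriv f) := hf.continuous_deriv_one
  obtain ⟨C, hC⟩ := (isCompact_Icc (a := -(|s| + 1)) (b := |s| + 1)).exists_bound_of_continuousOn
    hf'c.continuousOn
  refine (intervalIntegral.hasDerivAt_integral_of_dominated_loc_of_deriv_le (bound := fun _ ↦ C)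
    (F := fun u θ ↦ θ ^ k * f (u * θ)) (F' := fun u θ ↦ θ ^ (k + 1) * deriv f (u * θ))
    (Metric.ball_mem_nhds s one_pos)
    (.of_forall fun u ↦ Continuous.aestronglyMeasurable (by fun_prop))
    (Continuous.intervalIntegrable (by fun_prop) _ _)
    (Continuous.aestronglyMeasurable (by fun_prop))
    (.of_forall fun θ hθ u hu ↦ ?_) (by simp) (.of_forall fun θ _ u _ ↦ ?_)).2
  · rw [uIoc_of_le zero_le_one] at hθ
    have hu' : |u| ≤ |s| + 1 := by
      have hus : |u - s| < 1 := by simpa [Real.dist_eq] using hu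
      linarith [abs_sub_abs_le_abs_sub u s]
    have huθ : |u * θ| ≤ |s| + 1 := by
      rw [abs_mul, abs_of_pos hθ.1]
      exact (mul_le_of_le_one_right (abs_nonneg u) hθ.2).trans hu'
    rw [norm_mul, norm_pow, Real.norm_eq_abs, abs_of_pos hθ.1]
    exact (mul_le_of_le_one_left (norm_nonneg _) (pow_le_one₀ hθ.1.le hθ.2)).trans
      (hC _ (abs_le.1 huθ))
  · have hd : HasDerivAt f (deriv f (u * θ)) (u * θ) :=
      (hf.differentiable one_ne_zero).differentiableAt.hasDerivAt
    exact ((hd.comp u (hasDerivAt_mul_const θ)).const_mul (θ ^ k)).congr_deriv (by ring)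

lemma contDiff_radialAverage (k : ℕ) (hf : ContDiff ℝ N f) : ContDiff ℝ N (radialAverage k f) := by
  induction N generalizing k f with
  | zero =>
    rw [Nat.cast_zero, contDiff_zero] at hf ⊢
    exact continuous_radialAverage k hf
  | succ N ih =>
    have hderiv := hasDerivAt_radialAverage k (hf.of_le (mod_cast le_add_self))
    rw [Nat.cast_succ, contDiff_succ_iff_deriv] at hf ⊢
    refine ⟨fun s ↦ (hderiv s).differentiableAt, by simp, ?_⟩
    rw [funext fun s ↦ (hderiv s).deriv]
    exact ih (k + 1) hf.2.2

lemma eq_mul_radialAverage_deriv (hf : ContDiff ℝ 1 f) (h₀ : f 0 = 0) (s : ℝ) :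
    f s = s * radialAverage 0 (deriv f) s := by
  have := hf.continuous_deriv_one
  have hderiv (θ : ℝ) : HasDerivAt (fun θ ↦ f (s * θ)) (s * deriv f (s * θ)) θ :=
    ((hf.differentiable one_ne_zero).differentiableAt.hasDerivAt.comp θ
      (hasDerivAt_const_mul s)).congr_deriv (mul_comm _ _)
  simp only [radialAverage, pow_zero, one_mul]
  rw [← intervalIntegral.integral_const_mul, intervalIntegral.integral_eq_sub_of_hasDerivAt
    (fun θ _ ↦ hderiv θ) (Continuous.intervalIntegrable (by fun_prop) _ _)]
  simp [h₀]

lemma exists_eq_mul_of_apply_zero_eq_zero (hf : ContDiffAt ℝ (N + 1 : ℕ) f 0) (h₀ : f 0 = 0) :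
    ∃ g : ℝ → ℝ, ContDiffAt ℝ N g 0 ∧ ∀ᶠ s in 𝓝 (0 : ℝ), f s = s * g s := by
  obtain ⟨F, hF, hFf⟩ := exists_contDiff_eventuallyEq hf
  have hF' : ContDiff ℝ N (deriv F) := by
    rw [Nat.cast_succ, contDiff_succ_iff_deriv] at hF
    exact hF.2.2
  refine ⟨radialAverage 0 (deriv F), (contDiff_radialAverage 0 hF').contDiffAt,
    hFf.mono fun s hs ↦ hs ▸ ?_⟩
  exact eq_mul_radialAverage_deriv (hF.of_le (mod_cast le_add_self)) (hFf.self_of_nhds.trans h₀) s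

lemma exists_eq_pow_mul_of_isBigO {j : ℕ} (hf : ContDiffAt ℝ (N + j : ℕ) f 0)
    (hO : f =O[𝓝[≠] 0] fun s ↦ s ^ j) :
    ∃ g : ℝ → ℝ, ContDiffAt ℝ N g 0 ∧ ∀ᶠ s in 𝓝 (0 : ℝ), f s = s ^ j * g s := by
  induction j generalizing f with
  | zero => exact ⟨f, hf, by simp⟩
  | succ j ih =>
    have h₀ : f 0 = 0 := by
      have hpow : Tendsto (fun s : ℝ ↦ s ^ (j + 1)) (𝓝[≠] 0) (𝓝 0) :=
        ((continuous_pow (j + 1)).tendsto' 0 0 (zero_pow j.succ_ne_zero)).mono_left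
          nhdsWithin_le_nhds
      exact tendsto_nhds_unique (hf.continuousAt.tendsto.mono_left nhdsWithin_le_nhds)
        (hO.trans_tendsto hpow)
    obtain ⟨g, hg, hfg⟩ := exists_eq_mul_of_apply_zero_eq_zero (N := N + j) hf h₀
    have hgO : g =O[𝓝[≠] 0] fun s ↦ s ^ j := by
      refine ((Asymptotics.isBigO_refl (fun s : ℝ ↦ s⁻¹) (𝓝[≠] 0)).mul hO).congr' ?_ ?_
      · filter_upwards [self_mem_nhdsWithin, hfg.filter_mono nhdsWithin_le_nhds] with s hs hfs
        rw [hfs, inv_mul_cancel_left₀ hs]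
      · filter_upwards [self_mem_nhdsWithin] with s hs
        rw [pow_succ', inv_mul_cancel_left₀ hs]
    obtain ⟨q, hq, hgq⟩ := ih hg hgO
    refine ⟨q, hq, ?_⟩
    filter_upwards [hfg, hgq] with s hfs hgs
    rw [hfs, hgs, pow_succ', mul_assoc]

end Hadamard

/-! ### Second-order root jets -/

section SecondOrderJets

variable {m k N : ℕ} {P Q : ℝ → ℝ[X]} {t a : ℝ} {J : Fin m → ℝ[X]}

lemma isHyperbolicCurveAt_monicOfFn {v : ℝ → Fin m → ℝ} (hv : ContDiffAt ℝ N v t)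
    (h : ∀ᶠ s in 𝓝[≠] t, IsHyperbolic m (monicOfFn (v s))) :
    IsHyperbolicCurveAt m N (fun s ↦ monicOfFn (v s)) t where
  eventually_isHyperbolic := by
    obtain ⟨ρ, hρ, -⟩ := exists_limit_roots (v := v t) h fun j ↦ by
      have htoFn (s : ℝ) : (monicOfFn (v s)).coeff j = v s j := congrFun (toFn_monicOfFn (v s)) j
      simp only [htoFn]
      exact ((contDiffAt_pi.1 hv j).continuousAt.tendsto).mono_left nhdsWithin_le_nhds
    have ht : IsHyperbolic m (monicOfFn (v t)) :=
      ⟨ρ, by rw [← hρ, monicOfFn_toFn (monic_polyOfRoots ρ) (natDegree_polyOfRoots ρ)]⟩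
    rw [← nhdsNE_sup_pure]
    exact eventually_sup.2 ⟨h, ht⟩
  contDiffAt_coeff j := (contDiff_coeff_monicOfFn j).contDiffAt.comp t hv

/-- Each coefficient of the centered curve is divisible by the power of `s` by which the rescaling
divides it, at the cost of at most `m` derivatives. -/
lemma IsHyperbolicCurveAt.exists_eventuallyEq_scaleRoots_centered
    (hQ : IsHyperbolicCurveAt m (2 * m) Q 0) (hQ₀ : Q 0 = polyOfRoots fun _ : Fin m ↦ a) :
    ∃ R : ℝ → ℝ[X], IsHyperbolicCurveAt m m R 0 ∧
      ∀ᶠ s in 𝓝[≠] 0, R s = (_root_.centered m (Q s)).scaleRoots s⁻¹ := by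
  have hO := (hQ.of_le (Nat.le_mul_of_pos_left m two_pos)).isBigO_coeff_centered hQ₀
  choose g hg hgeq using fun j : Fin m ↦ exists_eq_pow_mul_of_isBigO (N := m)
    ((hQ.centered.contDiffAt_coeff j).of_le (mod_cast (by lia : m + (m - j) ≤ 2 * m)))
    ((hO j).mono nhdsWithin_le_nhds)
  have hscale : ∀ᶠ s in 𝓝[≠] 0, IsHyperbolic m ((_root_.centered m (Q s)).scaleRoots s⁻¹) ∧
      monicOfFn (fun j ↦ g j s) = (_root_.centered m (Q s)).scaleRoots s⁻¹ := by
    filter_upwards [hQ.centered.eventually_isHyperbolic.filter_mono nhdsWithin_le_nhds,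
      (eventually_all.2 hgeq).filter_mono nhdsWithin_le_nhds, self_mem_nhdsWithin]
      with s ⟨y, hy⟩ hs hs₀
    have hhyp : IsHyperbolic m ((_root_.centered m (Q s)).scaleRoots s⁻¹) :=
      ⟨_, by rw [hy, scaleRoots_polyOfRoots]⟩
    refine ⟨hhyp, ?_⟩
    rw [← monicOfFn_toFn hhyp.monic hhyp.natDegree_eq]
    congr with j
    rw [toFn_apply, coeff_scaleRoots, hs j, hy, natDegree_polyOfRoots, inv_pow, mul_right_comm,
      mul_inv_cancel₀ (pow_ne_zero _ hs₀), one_mul]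
  exact ⟨_, isHyperbolicCurveAt_monicOfFn (contDiffAt_pi.2 hg)
    (hscale.mono fun s hs ↦ hs.2 ▸ hs.1), hscale.mono fun s hs ↦ hs.2⟩

lemma IsHyperbolicCurveAt.exists_hasRootJets_two_zero (hm : 1 ≤ m)
    (hQ : IsHyperbolicCurveAt m (2 * m) Q 0) (hQ₀ : Q 0 = polyOfRoots fun _ : Fin m ↦ a) :
    ∃ J : Fin m → ℝ[X], (∀ i, (J i).eval 0 = a) ∧ HasRootJets 2 Q 0 J := by
  obtain ⟨R, hR, hRQ⟩ := hQ.exists_eventuallyEq_scaleRoots_centered hQ₀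
  obtain ⟨J, hJ⟩ := hR.exists_hasRootJets_one
  obtain ⟨p, hp₀, hp⟩ := HasRootJets.of_scaleRoots_centered
    ((hQ.contDiffAt_rootMean hm).of_le (mod_cast (by lia : 1 + 1 ≤ 2 * m))) (hJ.congr hRQ)
  refine ⟨_, fun i ↦ ?_, hp⟩
  rw [eval_add, eval_mul, eval_X, zero_mul, add_zero, hp₀, hQ₀, rootMean_polyOfRoots_const hm]

lemma tendsto_sub_const_nhdsNE (t : ℝ) : Tendsto (fun s ↦ s - t) (𝓝[≠] t) (𝓝[≠] 0) :=
  tendsto_nhdsWithin_of_tendsto_nhds_of_eventually_within _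
    (((continuous_sub_right t).tendsto' t 0 (sub_self t)).mono_left nhdsWithin_le_nhds)
    (eventually_mem_nhdsWithin.mono fun _ hs ↦ sub_ne_zero.2 hs)

lemma HasRootJets.of_const_add (h : HasRootJets k (fun s ↦ P (t + s)) 0 J) :
    HasRootJets k P t J where
  natDegree_le := h.natDegree_le
  eventually_roots ε hε := by
    simpa using (tendsto_sub_const_nhdsNE t).eventually (h.eventually_roots ε hε)
  eventually_slope ε hε := by
    filter_upwards [(tendsto_sub_const_nhdsNE t).eventually (h.eventually_slope ε hε)]
      with s hs x x' hx
    have hslope : IsRootSlope (fun u ↦ P (t + u)) (s - t) (fun u ↦ x (t + u)) (x' * 1) :=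
      IsRootSlope.comp (by rwa [add_sub_cancel]) ((hasDerivAt_id _).const_add t)
        (Homeomorph.addLeft t).isOpenEmbedding
    simpa using hs _ _ hslope

lemma IsHyperbolicCurveAt.exists_hasRootJets_two (hm : 1 ≤ m)
    (hP : IsHyperbolicCurveAt m (2 * m) P t) (hPt : P t = polyOfRoots fun _ : Fin m ↦ a) :
    ∃ J : Fin m → ℝ[X], P t = polyOfRoots (fun i ↦ (J i).eval 0) ∧ HasRootJets 2 P t J := by
  have hφ : ContDiffAt ℝ (2 * m : ℕ) (fun s : ℝ ↦ t + s) 0 := by fun_prop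
  obtain ⟨J, hJ₀, hJ⟩ := IsHyperbolicCurveAt.exists_hasRootJets_two_zero hm
    (IsHyperbolicCurveAt.comp (by rwa [add_zero]) hφ) (by rwa [add_zero])
  exact ⟨J, by simpa only [hJ₀] using hPt, hJ.of_const_add⟩

end SecondOrderJets

/-! ### Following the jets along a branch -/

section JetAlong

variable {k : ℕ} {x y : ℝ → ℝ} {p : ℝ[X]} {t : ℝ} {l l' : Filter ℝ}

/-- Along `l`, the function `x` and its derivative are given by the `k`-jet `p` at `t`, up to errors
`o((s - t) ^ k)` and `o((s - t) ^ (k - 1))`; the second estimate is multiplied by `s - t`, to make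
sense for `k = 0`. -/
structure HasJetAlong (l : Filter ℝ) (k : ℕ) (x : ℝ → ℝ) (t : ℝ) (p : ℝ[X]) : Prop where
  isLittleO : (fun s ↦ x s - p.eval (s - t)) =o[l] fun s ↦ (s - t) ^ k
  isLittleO_deriv : (fun s ↦ (s - t) * (deriv x s - p.derivative.eval (s - t))) =o[l]
    fun s ↦ (s - t) ^ k

lemma HasJetAlong.congr (h : HasJetAlong l k x t p) (hxy : ∀ᶠ s in l, x =ᶠ[𝓝 s] y) :
    HasJetAlong l k y t p where
  isLittleO := by
    refine h.isLittleO.congr' (hxy.mono fun s hs ↦ ?_) EventuallyEq.rfl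
    simp only [hs.self_of_nhds]
  isLittleO_deriv := by
    refine h.isLittleO_deriv.congr' (hxy.mono fun s hs ↦ ?_) EventuallyEq.rfl
    simp only [hs.deriv_eq]

lemma HasJetAlong.sup (h : HasJetAlong l k x t p) (h' : HasJetAlong l' k x t p) :
    HasJetAlong (l ⊔ l') k x t p :=
  ⟨h.isLittleO.sup h'.isLittleO, h.isLittleO_deriv.sup h'.isLittleO_deriv⟩

lemma isBigO_sub_pow_sub (hk : 1 ≤ k) : (fun s ↦ (s - t) ^ k) =O[𝓝[≠] t] fun s ↦ s - t := by
  have hzero : Tendsto (fun s ↦ s - t) (𝓝[≠] t) (𝓝 0) :=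
    (tendsto_sub_const_nhdsNE t).mono_right nhdsWithin_le_nhds
  simpa using (hzero.isBigO_one ℝ).pow (k - 1) |>.mul (Asymptotics.isBigO_refl (fun s ↦ s - t) _)
    |>.congr_left fun s ↦ pow_sub_one_mul (by lia) (s - t)

lemma hasDerivAt_of_isLittleO_sub_eval (hx : x t = p.eval 0)
    (h : (fun s ↦ x s - p.eval (s - t)) =o[𝓝[≠] t] fun s ↦ s - t) :
    HasDerivAt x (p.derivative.eval 0) t := by
  have herror : HasDerivAt (fun s ↦ x s - p.eval (s - t)) 0 t := by
    rw [hasDerivAt_iff_isLittleO, ← nhdsNE_sup_pure]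
    refine .sup ?_ (by simp [hx])
    simpa [hx] using h
  have hp : HasDerivAt (fun s ↦ p.eval (s - t)) (p.derivative.eval (t - t)) t :=
    (p.hasDerivAt _).comp_sub_const t t
  simpa using herror.fun_add hp

lemma HasJetAlong.twiceDifferentiableAt (h : HasJetAlong (𝓝[≠] t) 2 x t p) (hx : x t = p.eval 0)
    (hdiff : ∀ᶠ s in 𝓝[≠] t, DifferentiableAt ℝ x s) : TwiceDifferentiableAt x t := by
  have hderiv : HasDerivAt x (p.derivative.eval 0) t :=
    hasDerivAt_of_isLittleO_sub_eval hx (h.isLittleO.trans_isBigO (isBigO_sub_pow_sub one_le_two))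
  refine ⟨?_, (hasDerivAt_of_isLittleO_sub_eval hderiv.deriv ?_).differentiableAt⟩
  · rw [← nhdsNE_sup_pure]
    exact eventually_sup.2 ⟨hdiff, hderiv.differentiableAt⟩
  · have hinv := (Asymptotics.isBigO_refl (fun s ↦ (s - t)⁻¹) (𝓝[≠] t)).mul_isLittleO
      h.isLittleO_deriv
    refine hinv.congr' ?_ ?_ <;> filter_upwards [self_mem_nhdsWithin] with s hs <;>
      have := sub_ne_zero.2 hs <;> field_simp

end JetAlong

section Separation

variable {k : ℕ} {p : ℝ[X]} {J : Fin m → ℝ[X]}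

lemma eventually_mul_abs_pow_le_abs_eval (hp : p ≠ 0) (hk : p.natDegree ≤ k) :
    ∀ᶠ κ in 𝓝[>] (0 : ℝ), ∀ᶠ s in 𝓝[≠] (0 : ℝ), κ * |s| ^ k ≤ |p.eval s| := by
  obtain ⟨r, hr, hdvd⟩ := exists_eq_pow_rootMultiplicity_mul_and_not_dvd p hp 0
  have hr0 : 0 < |r.eval 0| := abs_pos.2 fun h ↦ hdvd (dvd_iff_isRoot.2 h)
  have hj : p.rootMultiplicity 0 ≤ k := by
    rw [← count_roots]
    exact ((Multiset.count_le_card 0 _).trans (card_roots' p)).trans hk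
  filter_upwards [Ioo_mem_nhdsGT hr0] with κ hκ
  have hlt : ∀ᶠ s in 𝓝 (0 : ℝ), κ < |r.eval s| :=
    r.continuous.abs.continuousAt.eventually_const_lt hκ.2
  refine Eventually.filter_mono nhdsWithin_le_nhds ?_
  filter_upwards [hlt, Icc_mem_nhds (neg_one_lt_zero (R := ℝ)) one_pos] with s hs hs1
  have heval : |p.eval s| = |s| ^ p.rootMultiplicity 0 * |r.eval s| := by
    conv_lhs => rw [hr]
    simp [abs_mul]
  rw [heval, mul_comm κ]
  exact mul_le_mul (pow_le_pow_of_le_one (abs_nonneg s) (abs_le.2 hs1) hj) hs.le hκ.1.le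
    (by positivity)

lemma exists_forall_eq_of_abs_eval_sub_lt (hJ : ∀ i, (J i).natDegree ≤ k) (t : ℝ) :
    ∃ κ > 0, ∀ᶠ s in 𝓝[≠] t, ∀ i j,
      |(J i).eval (s - t) - (J j).eval (s - t)| < κ * |s - t| ^ k → J i = J j := by
  have hsep : ∀ᶠ κ in 𝓝[>] (0 : ℝ), ∀ i j, ∀ᶠ s in 𝓝[≠] t,
      |(J i).eval (s - t) - (J j).eval (s - t)| < κ * |s - t| ^ k → J i = J j := by
    refine eventually_all.2 fun i ↦ eventually_all.2 fun j ↦ ?_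
    by_cases hij : J i = J j
    · exact .of_forall fun κ ↦ .of_forall fun s _ ↦ hij
    filter_upwards [eventually_mul_abs_pow_le_abs_eval (sub_ne_zero.2 hij)
      ((natDegree_sub_le _ _).trans (max_le (hJ i) (hJ j)))] with κ hκ
    filter_upwards [(tendsto_sub_const_nhdsNE t).eventually hκ] with s hs hlt
    rw [eval_sub] at hs
    exact absurd hlt hs.not_gt
  obtain ⟨κ, hκ, hκ0⟩ := (hsep.and self_mem_nhdsWithin).exists
  exact ⟨κ, hκ0, eventually_all.2 fun i ↦ eventually_all.2 (hκ i)⟩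

end Separation

section Branches

variable {k m : ℕ} {t κ δ : ℝ} {p : ℝ[X]} {P : ℝ → ℝ[X]} {J : Fin m → ℝ[X]} {f : ℝ → Fin m → ℝ}
  {l : Filter ℝ}

lemma HasRootJets.eventually_exists_perm (hJ : HasRootJets k P t J)
    (hf : ∀ᶠ s in 𝓝[≠] t, P s = polyOfRoots (f s)) {ε : ℝ} (hε : 0 < ε) :
    ∀ᶠ s in 𝓝[≠] t, ∃ σ : Equiv.Perm (Fin m), ∀ i,
      |f s (σ i) - (J i).eval (s - t)| ≤ ε * |s - t| ^ k := by
  filter_upwards [hf, hJ.eventually_roots ε hε] with s hs ⟨y, hy, hyJ⟩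
  obtain ⟨σ, rfl⟩ := exists_perm_of_polyOfRoots_eq (hy.symm.trans hs)
  exact ⟨σ, hyJ⟩

/-- On a preconnected set a continuous root cannot leave its jet, as it would cross the gap between
`κ / 4 * |s - t| ^ k` and `3 * κ / 4 * |s - t| ^ k`, where there are no roots. -/
lemma HasRootJets.exists_perm_forall_abs_sub_lt (hJ : HasRootJets k P t J) (hκ : 0 < κ)
    (hsep : ∀ᶠ s in 𝓝[≠] t, ∀ i j,
      |(J i).eval (s - t) - (J j).eval (s - t)| < κ * |s - t| ^ k → J i = J j)
    (hf : ∀ᶠ s in 𝓝[≠] t, P s = polyOfRoots (f s))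
    (hcont : ∀ᶠ s in 𝓝[≠] t, ∀ i, ContinuousAt (fun u ↦ f u i) s) [l.NeBot]
    (hl : l ≤ 𝓝[≠] t) (hpre : ∀ u ∈ l, ∃ v ∈ l, v ⊆ u ∧ IsPreconnected v) :
    ∃ σ : Equiv.Perm (Fin m), ∀ᶠ s in l, ∀ i,
      |f s (σ i) - (J i).eval (s - t)| < κ / 2 * |s - t| ^ k := by
  have hgood := hl <| hsep.and <| (hJ.eventually_exists_perm hf (ε := κ / 4) (by positivity)).and <|
    hcont.and self_mem_nhdsWithin
  obtain ⟨v, hv, hvgood, hvpre⟩ := hpre _ hgood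
  obtain ⟨s₀, hs₀⟩ := Filter.nonempty_of_mem hv
  have hpos {s : ℝ} (hs : s ∈ v) : 0 < κ * |s - t| ^ k :=
    mul_pos hκ (pow_pos (abs_pos.2 (sub_ne_zero.2 (hvgood hs).2.2.2)) k)
  obtain ⟨σ, hσ⟩ := (hvgood hs₀).2.1
  refine ⟨σ, mem_of_superset hv fun s hs i ↦ ?_⟩
  by_contra! hfar
  obtain ⟨u, hu, heq⟩ := hvpre.intermediate_value₂ (f := fun s ↦ |f s (σ i) - (J i).eval (s - t)|)
    (g := fun s ↦ κ / 2 * |s - t| ^ k) hs₀ hs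
    (fun u hu ↦ by
      have := (hvgood hu).2.2.1 (σ i)
      exact ContinuousAt.continuousWithinAt (by fun_prop))
    (by fun_prop) ((hσ i).trans (by linarith [hpos hs₀])) hfar
  obtain ⟨τ, hτ⟩ := (hvgood hu).2.1
  obtain ⟨j, hj⟩ := τ.surjective (σ i)
  have hnear : |f u (σ i) - (J j).eval (u - t)| ≤ κ / 4 * |u - t| ^ k := hj ▸ hτ j
  have hji : J j = J i := by
    refine (hvgood hu).1 _ _ ((abs_sub_le _ (f u (σ i)) _).trans_lt ?_)
    rw [abs_sub_comm _ (f u (σ i))]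
    linarith [hpos hu]
  rw [hji] at hnear
  linarith [hpos hu]

lemma HasRootJets.hasJetAlong (hJ : HasRootJets k P t J) (hl : l ≤ 𝓝[≠] t) {x : ℝ → ℝ}
    (hx : ∀ᶠ s in l, IsRootSlope P s x (deriv x s)) (hδ : 0 < δ)
    (hnear : ∀ᶠ s in l, ∀ j, |x s - (J j).eval (s - t)| ≤ δ * |s - t| ^ k → J j = p) :
    HasJetAlong l k x t p := by
  have hjet {ε : ℝ} (hε : 0 < ε) : ∀ᶠ s in l, |x s - p.eval (s - t)| ≤ ε * |s - t| ^ k ∧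
      |s - t| * |deriv x s - p.derivative.eval (s - t)| ≤ ε * |s - t| ^ k := by
    filter_upwards [hx, hnear, hl (hJ.eventually_slope (min ε δ) (lt_min hε hδ))]
      with s hxs hnears hs
    obtain ⟨j, hj, hj'⟩ := hs x _ hxs
    obtain rfl := hnears j (hj.trans (by gcongr; exact min_le_right ε δ))
    exact ⟨hj.trans (by gcongr; exact min_le_left ε δ),
      hj'.trans (by gcongr; exact min_le_left ε δ)⟩
  constructor <;> refine Asymptotics.isLittleO_iff.2 fun ε hε ↦ (hjet hε).mono fun s hs ↦ ?_
  · simpa using hs.1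
  · simpa using hs.2

lemma isRootSlope_of_eventually_eq_polyOfRoots {s : ℝ}
    (hf : ∀ᶠ u in 𝓝 s, P u = polyOfRoots (f u)) {i : Fin m}
    (hdiff : DifferentiableAt ℝ (fun u ↦ f u i) s) :
    IsRootSlope P s (fun u ↦ f u i) (deriv (fun u ↦ f u i) s) where
  frequently_isRoot := by
    refine Eventually.frequently (Eventually.filter_mono nhdsWithin_le_nhds ?_)
    filter_upwards [hf] with u hu
    exact hu ▸ isRoot_polyOfRoots.2 ⟨i, rfl⟩
  hasDerivAt := hdiff.hasDerivAt

lemma HasRootJets.exists_perm_hasJetAlong (hJ : HasRootJets k P t J)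
    (hf : ∀ᶠ s in 𝓝[≠] t, P s = polyOfRoots (f s))
    (hdiff : ∀ᶠ s in 𝓝[≠] t, ∀ i, DifferentiableAt ℝ (fun u ↦ f u i) s) [l.NeBot]
    (hl : l ≤ 𝓝[≠] t) (hpre : ∀ u ∈ l, ∃ v ∈ l, v ⊆ u ∧ IsPreconnected v) :
    ∃ σ : Equiv.Perm (Fin m), ∀ i, HasJetAlong l k (fun u ↦ f u (σ i)) t (J i) := by
  obtain ⟨κ, hκ, hsep⟩ := exists_forall_eq_of_abs_eval_sub_lt hJ.natDegree_le t
  obtain ⟨σ, hσ⟩ := hJ.exists_perm_forall_abs_sub_lt hκ hsep hf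
    (hdiff.mono fun s hs i ↦ (hs i).continuousAt) hl hpre
  refine ⟨σ, fun i ↦ hJ.hasJetAlong hl (δ := κ / 2) ?_ (by positivity) ?_⟩
  · filter_upwards [hl (eventually_nhdsNE_eventually_nhds hf), hl hdiff] with s hs hds
    exact isRootSlope_of_eventually_eq_polyOfRoots hs (hds (σ i))
  · filter_upwards [hσ, hl hsep] with s hs hseps j hj
    refine hseps j i ((abs_sub_le _ (f s (σ i)) _).trans_lt ?_)
    rw [abs_sub_comm _ (f s (σ i))]
    linarith [hs i]

end Branches

/-! ### Twice differentiable roots near a point -/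

section LocalRoots

variable {k l m : ℕ} {t : ℝ} {p : ℝ[X]} {P A B : ℝ → ℝ[X]} {J : Fin m → ℝ[X]}

/-- Near `t`, the roots of the curve `P` can be chosen twice differentiable. -/
def HasTwiceDiffRootsNear (m : ℕ) (P : ℝ → ℝ[X]) (t : ℝ) : Prop :=
  ∃ f : ℝ → Fin m → ℝ, ∀ᶠ s in 𝓝 t, IsTwiceDiffRootsAt P f s

/-- `p` is the `m`-th power of a monic linear polynomial. -/
def HasSingleRoot (m : ℕ) (p : ℝ[X]) : Prop := ∃ a, p = polyOfRoots fun _ : Fin m ↦ a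

lemma hasSingleRoot_polyOfRoots {y : Fin m → ℝ} (hy : ∀ i j, y i = y j) :
    HasSingleRoot m (polyOfRoots y) := by
  rcases isEmpty_or_nonempty (Fin m) with hm | ⟨⟨i⟩⟩
  · exact ⟨0, congrArg _ (Subsingleton.elim _ _)⟩
  · exact ⟨y i, congrArg _ (funext fun j ↦ hy j i)⟩

lemma eq_const_of_polyOfRoots_eq {y : Fin m → ℝ} {a : ℝ}
    (h : polyOfRoots y = polyOfRoots fun _ : Fin m ↦ a) : y = fun _ ↦ a := by
  obtain ⟨σ, rfl⟩ := exists_perm_of_polyOfRoots_eq h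
  rfl

lemma isTwiceDiffRootsAt_of_hasJetAlong {g : ℝ → Fin m → ℝ}
    (hPt : P t = polyOfRoots fun i ↦ (J i).eval 0) (hgt : g t = fun i ↦ (J i).eval 0)
    (hg : ∀ᶠ s in 𝓝[≠] t, IsTwiceDiffRootsAt P g s)
    (hjet : ∀ i, HasJetAlong (𝓝[≠] t) 2 (fun u ↦ g u i) t (J i)) : IsTwiceDiffRootsAt P g t where
  eventually_eq := by
    rw [← nhdsNE_sup_pure]
    exact eventually_sup.2 ⟨hg.mono fun s hs ↦ hs.eventually_eq.self_of_nhds,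
      show P t = polyOfRoots (g t) from hgt ▸ hPt⟩
  twiceDifferentiableAt i := (hjet i).twiceDifferentiableAt (congrFun hgt i) <|
    hg.mono fun s hs ↦ (hs.twiceDifferentiableAt i).1.self_of_nhds

lemma exists_eventuallyEq_of_lt_of_gt {α : Type*} (f₁ f₂ : ℝ → α) (t : ℝ) (v : α) :
    ∃ g, g t = v ∧ (∀ s < t, f₁ =ᶠ[𝓝 s] g) ∧ ∀ s > t, f₂ =ᶠ[𝓝 s] g := by
  refine ⟨fun s ↦ if s < t then f₁ s else if t < s then f₂ s else v, by simp, fun s hs ↦ ?_,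
    fun s hs ↦ ?_⟩
  · filter_upwards [Iio_mem_nhds hs] with u hu using (if_pos hu).symm
  · filter_upwards [Ioi_mem_nhds hs] with u hu
    have hu : t < u := hu
    simp [hu, hu.not_gt]

/-- Twice differentiable roots on both sides of `t` follow the jets at `t`, so that after a
permutation on each side they fit together at `t`. -/
lemma HasRootJets.hasTwiceDiffRootsNear (hJ : HasRootJets 2 P t J)
    (hPt : P t = polyOfRoots fun i ↦ (J i).eval 0) {f : ℝ → Fin m → ℝ}
    (hf : ∀ᶠ s in 𝓝[≠] t, IsTwiceDiffRootsAt P f s) : HasTwiceDiffRootsNear m P t := by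
  have hroots : ∀ᶠ s in 𝓝[≠] t, P s = polyOfRoots (f s) :=
    hf.mono fun s hs ↦ hs.eventually_eq.self_of_nhds
  have hdiff : ∀ᶠ s in 𝓝[≠] t, ∀ i, DifferentiableAt ℝ (fun u ↦ f u i) s :=
    hf.mono fun s hs i ↦ (hs.twiceDifferentiableAt i).1.self_of_nhds
  obtain ⟨σ, hσ⟩ := hJ.exists_perm_hasJetAlong hroots hdiff (nhdsLT_le_nhdsNE t) fun u hu ↦
    have ⟨d, hd, hdu⟩ := mem_nhdsLT_iff_exists_Ioo_subset.1 hu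
    ⟨Ioo d t, Ioo_mem_nhdsLT hd, hdu, isPreconnected_Ioo⟩
  obtain ⟨τ, hτ⟩ := hJ.exists_perm_hasJetAlong hroots hdiff (nhdsGT_le_nhdsNE t) fun u hu ↦
    have ⟨d, hd, hdu⟩ := mem_nhdsGT_iff_exists_Ioo_subset.1 hu
    ⟨Ioo t d, Ioo_mem_nhdsGT hd, hdu, isPreconnected_Ioo⟩
  obtain ⟨g, hgt, hleft, hright⟩ := exists_eventuallyEq_of_lt_of_gt (fun s ↦ f s ∘ σ)
    (fun s ↦ f s ∘ τ) t fun i ↦ (J i).eval 0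
  have hg : ∀ᶠ s in 𝓝[≠] t, IsTwiceDiffRootsAt P g s := by
    filter_upwards [hf, self_mem_nhdsWithin] with s hs hst
    rcases lt_or_gt_of_ne hst with hst | hst
    · exact (hs.comp_perm σ).congr (hleft s hst)
    · exact (hs.comp_perm τ).congr (hright s hst)
  have hgt' : IsTwiceDiffRootsAt P g t := by
    refine isTwiceDiffRootsAt_of_hasJetAlong hPt hgt hg fun i ↦ ?_
    rw [← nhdsLT_sup_nhdsGT]
    refine ((hσ i).congr ?_).sup ((hτ i).congr ?_) <;> filter_upwards [self_mem_nhdsWithin]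
      with s hst
    · exact (hleft s hst).fun_comp fun w ↦ w i
    · exact (hright s hst).fun_comp fun w ↦ w i
  refine ⟨g, ?_⟩
  rw [← nhdsNE_sup_pure]
  exact eventually_sup.2 ⟨hg, hgt'⟩

lemma HasRootJets.eq_of_frequently_hasSingleRoot (hJ : HasRootJets k P t J)
    (hP : ∃ᶠ s in 𝓝[≠] t, HasSingleRoot m (P s)) (i j : Fin m) : J i = J j := by
  obtain ⟨κ, hκ, hsep⟩ := exists_forall_eq_of_abs_eval_sub_lt hJ.natDegree_le t
  obtain ⟨s, ⟨a, ha⟩, hseps, hst, y, hy, hyJ⟩ := (hP.and_eventually (hsep.and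
    (eventually_mem_nhdsWithin.and (hJ.eventually_roots (κ / 4) (by positivity))))).exists
  obtain rfl := eq_const_of_polyOfRoots_eq (hy.symm.trans ha)
  have hpos : 0 < κ * |s - t| ^ k := mul_pos hκ (pow_pos (abs_pos.2 (sub_ne_zero.2 hst)) k)
  refine hseps i j ((abs_sub_le _ a _).trans_lt ?_)
  rw [abs_sub_comm _ a]
  linarith [hyJ i, hyJ j]

lemma HasRootJets.differentiableAt_of_const (hJ : HasRootJets k P t fun _ : Fin m ↦ p)
    (hk : 1 ≤ k) (hPt : P t = polyOfRoots fun _ : Fin m ↦ p.eval 0) {g : ℝ → Fin m → ℝ}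
    (hg : ∀ᶠ s in 𝓝 t, P s = polyOfRoots (g s)) (i : Fin m) :
    DifferentiableAt ℝ (fun u ↦ g u i) t := by
  have hgt := eq_const_of_polyOfRoots_eq (hg.self_of_nhds.symm.trans hPt)
  refine (hasDerivAt_of_isLittleO_sub_eval (congrFun hgt i)
    (Asymptotics.IsLittleO.trans_isBigO ?_ (isBigO_sub_pow_sub hk))).differentiableAt
  refine Asymptotics.isLittleO_iff.2 fun ε hε ↦ ?_
  filter_upwards [hJ.eventually_exists_perm (hg.filter_mono nhdsWithin_le_nhds) hε] with s ⟨σ, hσ⟩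
  obtain ⟨j, rfl⟩ := σ.surjective i
  simpa using hσ j

lemma HasRootJets.isTwiceDiffRootsAt_of_const (hJ : HasRootJets 2 P t fun _ : Fin m ↦ p)
    (hPt : P t = polyOfRoots fun _ : Fin m ↦ p.eval 0) {g : ℝ → Fin m → ℝ}
    (hg : ∀ᶠ s in 𝓝 t, P s = polyOfRoots (g s))
    (hdiff : ∀ᶠ s in 𝓝 t, ∀ i, DifferentiableAt ℝ (fun u ↦ g u i) s) :
    IsTwiceDiffRootsAt P g t where
  eventually_eq := hg
  twiceDifferentiableAt i := by
    have hjet : HasJetAlong (𝓝[≠] t) 2 (fun u ↦ g u i) t p := by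
      refine hJ.hasJetAlong le_rfl ?_ one_pos (.of_forall fun _ _ _ ↦ rfl)
      filter_upwards [nhdsWithin_le_nhds hg.eventually_nhds, nhdsWithin_le_nhds hdiff]
        with s hs hds using isRootSlope_of_eventually_eq_polyOfRoots hs (hds i)
    have hgt := eq_const_of_polyOfRoots_eq (hg.self_of_nhds.symm.trans hPt)
    refine hjet.twiceDifferentiableAt (congrFun hgt i) ?_
    exact (hdiff.filter_mono nhdsWithin_le_nhds).mono fun s hs ↦ hs i

lemma IsTwiceDiffRootsAt.append {f : ℝ → Fin k → ℝ} {g : ℝ → Fin l → ℝ}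
    (hf : IsTwiceDiffRootsAt A f t) (hg : IsTwiceDiffRootsAt B g t)
    (hP : ∀ᶠ s in 𝓝 t, P s = A s * B s) :
    IsTwiceDiffRootsAt P (fun s ↦ Fin.append (f s) (g s)) t where
  eventually_eq := by
    filter_upwards [hP, hf.eventually_eq, hg.eventually_eq] with s hs hfs hgs
    rw [hs, hfs, hgs, polyOfRoots_append]
  twiceDifferentiableAt i := by
    induction i using Fin.addCases with
    | left i => simpa only [Fin.append_left] using hf.twiceDifferentiableAt i
    | right i => simpa only [Fin.append_right] using hg.twiceDifferentiableAt i

end LocalRoots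

section Induction

variable {m : ℕ} {t : ℝ} {P : ℝ → ℝ[X]}

lemma exists_selection_isTwiceDiffRootsAt (m : ℕ) (P : ℝ → ℝ[X]) :
    ∃ g : ℝ → Fin m → ℝ, (∀ s, IsHyperbolic m (P s) → P s = polyOfRoots (g s)) ∧
      ∀ s, HasTwiceDiffRootsNear m P s → IsTwiceDiffRootsAt P g s := by
  classical
  let U : Set ℝ := {s | HasTwiceDiffRootsNear m P s}
  have hU : IsOpen U := isOpen_iff_mem_nhds.2 fun s ⟨f, hf⟩ ↦
    hf.eventually_nhds.mono fun u hu ↦ ⟨f, hu⟩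
  obtain ⟨f, hf⟩ := (isGluable_isTwiceDiffRootsAt (n := m) P).exists_on_isOpen hU fun _ hs ↦ hs
  have hroots (s : ℝ) (hs : IsHyperbolic m (P s)) : ∃ y : Fin m → ℝ, P s = polyOfRoots y := hs
  choose! y hy using hroots
  let g : ℝ → Fin m → ℝ := fun s ↦ if s ∈ U then f s else y s
  have hgU (s : ℝ) (hs : s ∈ U) : IsTwiceDiffRootsAt P g s := by
    refine (hf s hs).congr ?_
    filter_upwards [hU.mem_nhds hs] with u hu using (if_pos hu).symm
  refine ⟨g, fun s hs ↦ ?_, hgU⟩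
  by_cases hsU : s ∈ U
  · exact (hgU s hsU).eventually_eq.self_of_nhds
  · simpa only [g, if_neg hsU] using hy s hs

namespace IsHyperbolicCurveAt

lemma hasTwiceDiffRootsNear_of_not_hasSingleRoot
    (ih : ∀ k < m, ∀ P t, IsHyperbolicCurveAt k (2 * k) P t → HasTwiceDiffRootsNear k P t)
    (hP : IsHyperbolicCurveAt m (2 * m) P t) (hPt : ¬ HasSingleRoot m (P t)) :
    HasTwiceDiffRootsNear m P t := by
  obtain ⟨y, hy⟩ := hP.eventually_isHyperbolic.self_of_nhds
  obtain ⟨i, j, hij⟩ : ∃ i j, y i ≠ y j := by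
    by_contra! hall
    exact hPt (hy ▸ hasSingleRoot_polyOfRoots hall)
  obtain ⟨k, l, rfl, hk, hl, A, B, hA, hB, hAB⟩ := hP.exists_splitting hy hij
  obtain ⟨f, hf⟩ := ih k hk A t (hA.of_le (by lia))
  obtain ⟨g, hg⟩ := ih l hl B t (hB.of_le (by lia))
  refine ⟨fun s ↦ Fin.append (f s) (g s), ?_⟩
  filter_upwards [hf, hg, hAB.eventually_nhds] with s hfs hgs hs using hfs.append hgs hs

lemma hasTwiceDiffRootsNear_of_eventually_nhdsNE (hm : 1 ≤ m)
    (hP : IsHyperbolicCurveAt m (2 * m) P t) (hPt : HasSingleRoot m (P t))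
    (h : ∀ᶠ s in 𝓝[≠] t, HasTwiceDiffRootsNear m P s) : HasTwiceDiffRootsNear m P t := by
  obtain ⟨a, ha⟩ := hPt
  obtain ⟨J, hJt, hJ⟩ := hP.exists_hasRootJets_two hm ha
  obtain ⟨V, hV, hVo, htV⟩ := eventually_nhds_iff.1 (eventually_nhdsWithin_iff.1 h)
  obtain ⟨f, hf⟩ := (isGluable_isTwiceDiffRootsAt (n := m) P).exists_on_isOpen
    (hVo.sdiff isClosed_singleton) fun s hs ↦ hV s hs.1 hs.2
  refine hJ.hasTwiceDiffRootsNear hJt (f := f) ?_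
  filter_upwards [nhdsWithin_le_nhds (hVo.mem_nhds htV), self_mem_nhdsWithin] with s hs hst
    using hf s ⟨hs, hst⟩

/-- All roots are equal at `t` and at points accumulating at `t`, since otherwise `P` splits at `t`
or near `t`. -/
lemma exists_hasRootJets_const (hm : 1 ≤ m) (hP : IsHyperbolicCurveAt m (2 * m) P t)
    (hsplit : ∀ᶠ s in 𝓝 t, ¬ HasSingleRoot m (P s) → HasTwiceDiffRootsNear m P s)
    (hnot : ¬ HasTwiceDiffRootsNear m P t) :
    ∃ p : ℝ[X], P t = polyOfRoots (fun _ : Fin m ↦ p.eval 0) ∧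
      HasRootJets 2 P t fun _ : Fin m ↦ p := by
  have hPt : HasSingleRoot m (P t) := not_imp_comm.1 hsplit.self_of_nhds hnot
  have hfreq : ∃ᶠ s in 𝓝[≠] t, HasSingleRoot m (P s) := by
    refine fun h ↦ hnot (hP.hasTwiceDiffRootsNear_of_eventually_nhdsNE hm hPt ?_)
    filter_upwards [h, nhdsWithin_le_nhds hsplit] with s hs hsplits using hsplits hs
  obtain ⟨a, ha⟩ := hPt
  obtain ⟨J, hJt, hJ⟩ := hP.exists_hasRootJets_two hm ha
  have hconst : J = fun _ ↦ J ⟨0, hm⟩ :=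
    funext fun i ↦ hJ.eq_of_frequently_hasSingleRoot hfreq i _
  rw [hconst] at hJt hJ
  exact ⟨_, hJt, hJ⟩

lemma hasTwiceDiffRootsNear_of_split (hm : 1 ≤ m) (hP : IsHyperbolicCurveAt m (2 * m) P t)
    (hsplit : ∀ᶠ s in 𝓝 t, ¬ HasSingleRoot m (P s) → HasTwiceDiffRootsNear m P s) :
    HasTwiceDiffRootsNear m P t := by
  obtain ⟨g, hgroots, hgU⟩ := exists_selection_isTwiceDiffRootsAt m P
  have hg : ∀ᶠ s in 𝓝 t, P s = polyOfRoots (g s) := hP.eventually_isHyperbolic.mono hgroots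
  have hjets : ∀ᶠ s in 𝓝 t, ¬ HasTwiceDiffRootsNear m P s → ∃ p : ℝ[X],
      P s = polyOfRoots (fun _ : Fin m ↦ p.eval 0) ∧ HasRootJets 2 P s fun _ : Fin m ↦ p := by
    filter_upwards [hP.eventually, hsplit.eventually_nhds] with s hs hsplits hnot
      using hs.exists_hasRootJets_const hm hsplits hnot
  have hdiff : ∀ᶠ s in 𝓝 t, ∀ i, DifferentiableAt ℝ (fun u ↦ g u i) s := by
    filter_upwards [hg.eventually_nhds, hjets] with s hgs hjs i
    by_cases hs : HasTwiceDiffRootsNear m P s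
    · exact ((hgU s hs).twiceDifferentiableAt i).1.self_of_nhds
    · obtain ⟨p, hpt, hp⟩ := hjs hs
      exact hp.differentiableAt_of_const one_le_two hpt hgs i
  refine ⟨g, ?_⟩
  filter_upwards [hg.eventually_nhds, hdiff.eventually_nhds, hjets] with s hgs hds hjs
  by_cases hs : HasTwiceDiffRootsNear m P s
  · exact hgU s hs
  · obtain ⟨p, hpt, hp⟩ := hjs hs
    exact hp.isTwiceDiffRootsAt_of_const hpt hgs hds

theorem hasTwiceDiffRootsNear {m : ℕ} {P : ℝ → ℝ[X]} {t : ℝ}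
    (hP : IsHyperbolicCurveAt m (2 * m) P t) : HasTwiceDiffRootsNear m P t := by
  induction m using Nat.strong_induction_on generalizing P t with
  | _ m ih =>
    rcases m.eq_zero_or_pos with rfl | hm
    · refine ⟨fun _ ↦ Fin.elim0, hP.eventually_isHyperbolic.eventually_nhds.mono fun s hs ↦
        ⟨hs.mono fun u ⟨y, hy⟩ ↦ hy.trans (congrArg _ (Subsingleton.elim _ _)), fun i ↦ i.elim0⟩⟩
    · refine hP.hasTwiceDiffRootsNear_of_split hm (hP.eventually.mono fun s hs ↦ ?_)
      exact hs.hasTwiceDiffRootsNear_of_not_hasSingleRoot fun k hk P t ↦ ih k hk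

end IsHyperbolicCurveAt

end Induction

lemma eval₂_monicOfFn_rev {R : Type*} [CommRing R] {n : ℕ} (φ : ℝ →+* R) (a : Fin n → ℝ) (z : R) :
    (monicOfFn fun i : Fin n ↦ (-1 : ℝ) ^ ((Fin.rev i : ℕ) + 1) * a (Fin.rev i)).eval₂ φ z =
      z ^ n + ∑ j : Fin n, (-1 : R) ^ ((j : ℕ) + 1) * φ (a j) * z ^ (n - ((j : ℕ) + 1)) := by
  rw [monicOfFn, eval₂_add, eval₂_X_pow, ofFn_eq_sum_monomial, eval₂_finsetSum,
    ← Equiv.sum_comp Fin.revPerm]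
  congr! 2 with j
  simp [Fin.val_rev]

lemma isHyperbolic_of_forall_im_eq_zero {p : ℝ[X]} (hp : p.Monic)
    (him : ∀ z : ℂ, p.eval₂ (algebraMap ℝ ℂ) z = 0 → z.im = 0) : IsHyperbolic p.natDegree p := by
  refine .of_splits hp (.of_splits_map (algebraMap ℝ ℂ) (IsAlgClosed.splits _) fun z hz ↦ ?_)
  have hroot := isRoot_of_mem_roots hz
  rw [IsRoot, eval_map] at hroot
  exact ⟨z.re, Complex.ext rfl (him z hroot).symm⟩

/-- (Colombini–Orrú–Pernazza) If the coefficients `a j` of a curve of monic hyperbolic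
polynomials are of class `C^{2n}`, then the roots can be chosen twice differentiable. -/
theorem roots_twice_differentiable (n : ℕ) (hn : 1 ≤ n) (a : Fin n → ℝ → ℝ)
    (ha : ∀ j, ContDiff ℝ (2 * n) (a j))
    (hhyp : ∀ t : ℝ, ∀ z : ℂ,
      z ^ n + ∑ j : Fin n, (-1 : ℂ) ^ ((j : ℕ) + 1) * (a j t : ℂ) * z ^ (n - ((j : ℕ) + 1)) = 0 →
        z.im = 0) :
    ∃ lam : Fin n → ℝ → ℝ,
      (∀ j, Differentiable ℝ (lam j) ∧ Differentiable ℝ (deriv (lam j))) ∧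
      (∀ t x : ℝ,
        x ^ n + ∑ j : Fin n, (-1 : ℝ) ^ ((j : ℕ) + 1) * a j t * x ^ (n - ((j : ℕ) + 1)) =
          ∏ j : Fin n, (x - lam j t)) := by
  let P : ℝ → ℝ[X] := fun t ↦
    monicOfFn fun i : Fin n ↦ (-1 : ℝ) ^ ((Fin.rev i : ℕ) + 1) * a (Fin.rev i) t
  have hP (t : ℝ) : IsHyperbolicCurveAt n (2 * n) P t := by
    refine ⟨.of_forall fun s ↦ ?_, fun j ↦ (contDiff_coeff_monicOfFn j).comp_contDiffAt t ?_⟩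
    · have := isHyperbolic_of_forall_im_eq_zero (monic_monicOfFn _) (p := P s) fun z hz ↦
        hhyp s z (by rwa [eval₂_monicOfFn_rev (algebraMap ℝ ℂ) fun j ↦ a j s] at hz)
      rwa [natDegree_monicOfFn] at this
    · exact contDiffAt_pi.2 fun i ↦
        contDiffAt_const.mul (by exact_mod_cast (ha (Fin.rev i)).contDiffAt)
  obtain ⟨f, hf⟩ := (isGluable_isTwiceDiffRootsAt P).exists_on_isOpen isOpen_univ
    fun t _ ↦ (hP t).hasTwiceDiffRootsNear
  refine ⟨fun j t ↦ f t j, fun j ↦ ?_, fun t x ↦ ?_⟩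
  · have hj (t : ℝ) := (hf t (mem_univ t)).twiceDifferentiableAt j
    exact ⟨fun t ↦ (hj t).1.self_of_nhds, fun t ↦ (hj t).2⟩
  · have heval := congrArg (eval₂ (RingHom.id ℝ) x) (hf t (mem_univ t)).eventually_eq.self_of_nhds
    rw [eval₂_monicOfFn_rev (RingHom.id ℝ) fun j ↦ a j t] at heval
    simpa [polyOfRoots, eval₂_finsetProd] using heval
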